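/- There exist absolute constants c > 0 and c0 > 0 such that the following holds. Let X be sufficiently large and let y satisfy c0 ≤ y ≤ (log X)^{5/9}. Then there exist at least X^{1 − 1/log log X} values x ∈ [X, 2X] such that S(x+y) − S(x) ≥ c · y^{1/10}, i.e. the interval (x, x+y] contains at least c·y^{1/10} integers expressible as a sum of two squares. -/

import Mathlib

/-- `n` is a positive integer expressible as a sum of two squares. -/
def IsSumTwoSquares (n : ℕ) : Prop := 0 < n ∧ ∃ a b : ℕ, n = a ^ 2 + b ^ 2

/-- `Scount x` counts the positive integers `n ≤ x` expressible as a sum of two squares. -/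
noncomputable def Scount (x : ℝ) : ℕ := {n : ℕ | (n : ℝ) ≤ x ∧ IsSumTwoSquares n}.ncard

/-!
Let `K = ⌊√y⌋`, `N = K ^ 2` and `W = (N!) ^ 3`. For `x = W * t` and `0 < j ≤ K` we have
`x + j ^ 2 = j ^ 2 * (1 + V_j * t)` with `V_j = W / j ^ 2`, so it suffices to find many `t` for
which many of the `K` numbers `1 + V_j * t` are sums of two squares, that is, have
`r(n) = ∑_{d ∣ n} χ₄(d) ≠ 0`.

The Brun–Hooley sieve provides `t` for which no `1 + V_j * t` has a prime factor in `(N, z]`, where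
`z` is a power of `x` with exponent of order `1 / K`. By the hyperbola method, the average of
`r(1 + V_j * t)` over these `t` is bounded below. Markov's inequality, applied to the measure with
density `r`, shows that a positive proportion of this mass comes from pairs `(t, j)` for which
`1 + V_j * t` is divisible by no square of a prime in `(z, z ^ (1000 * K)]` and by at most `1.1 R`
such primes, where `R = log K + O(1)` bounds their expected number. For these pairs
`r(1 + V_j * t) ≪ 2 ^ (1.1 R) ≪ K ^ (1.1 log 2)`. Hence, on average over `t`, at least a constant
times `K ^ (1 - 1.1 log 2)` of the numbers `x + j ^ 2` are sums of two squares, and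
`1 - 1.1 log 2 > 1 / 5`.
-/

/-! ### The Brun–Hooley sieve -/

section Bonferroni

open Finset

variable {ι R : Type*}

section CommRing

variable [CommRing R]

/-- The `n`-th elementary symmetric sum of the family `x` over the index set `B`. -/
def elemSymm (x : ι → R) (B : Finset ι) (n : ℕ) : R :=
  ∑ S ∈ B.powersetCard n, ∏ p ∈ S, x p

/-- The expansion of `∏ p ∈ B, (1 - x p)` truncated after the terms of degree `n`. -/
def truncProd (x : ι → R) (B : Finset ι) (n : ℕ) : R :=
  ∑ k ∈ range (n + 1), (-1) ^ k * elemSymm x B k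

@[simp]
lemma elemSymm_zero (x : ι → R) (B : Finset ι) : elemSymm x B 0 = 1 := by
  simp [elemSymm]

@[simp]
lemma elemSymm_empty_succ (x : ι → R) (n : ℕ) : elemSymm x ∅ (n + 1) = 0 := by
  rw [elemSymm, powersetCard_eq_empty.2 (by simp), sum_empty]

@[simp]
lemma truncProd_zero (x : ι → R) (B : Finset ι) : truncProd x B 0 = 1 := by
  simp [truncProd]

@[simp]
lemma truncProd_empty (x : ι → R) (n : ℕ) : truncProd x ∅ n = 1 := by
  simp [truncProd, sum_range_succ']

variable [DecidableEq ι]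

lemma elemSymm_insert (x : ι → R) {B : Finset ι} {p : ι} (hp : p ∉ B) (n : ℕ) :
    elemSymm x (insert p B) (n + 1) = elemSymm x B (n + 1) + x p * elemSymm x B n := by
  have not_mem {S : Finset ι} {k : ℕ} (hS : S ∈ B.powersetCard k) : p ∉ S :=
    fun h ↦ hp ((mem_powersetCard.1 hS).1 h)
  have hdisj : Disjoint (B.powersetCard (n + 1)) ((B.powersetCard n).image (insert p)) := by
    refine disjoint_left.2 fun S hS hS' ↦ ?_
    obtain ⟨T, -, rfl⟩ := mem_image.1 hS'
    exact not_mem hS (mem_insert_self p T)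
  have hinj : Set.InjOn (insert p) (B.powersetCard n : Set (Finset ι)) := fun S hS T hT h ↦ by
    rw [← erase_insert (not_mem hS), h, erase_insert (not_mem hT)]
  unfold elemSymm
  rw [powersetCard_succ_insert hp, sum_union hdisj, sum_image hinj, mul_sum]
  exact congrArg _ (sum_congr rfl fun S hS ↦ prod_insert (not_mem hS))

lemma truncProd_insert (x : ι → R) {B : Finset ι} {p : ι} (hp : p ∉ B) (n : ℕ) :
    truncProd x (insert p B) (n + 1) = truncProd x B (n + 1) - x p * truncProd x B n := by
  unfold truncProd
  rw [sum_range_succ', sum_range_succ' _ (n + 1), mul_sum, add_sub_right_comm, ← sum_sub_distrib]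
  simp only [elemSymm_insert x hp, elemSymm_zero]
  congr 1
  exact sum_congr rfl fun k _ ↦ by ring

end CommRing

variable [CommRing R] [LinearOrder R] [IsStrictOrderedRing R] {x : ι → R} {B : Finset ι}

lemma factorial_mul_elemSymm_le_pow (hx : ∀ p ∈ B, 0 ≤ x p) (n : ℕ) :
    n.factorial * elemSymm x B n ≤ (∑ p ∈ B, x p) ^ n := by
  classical
  induction B using Finset.induction_on generalizing n with
  | empty => cases n <;> simp
  | insert p B hp ih =>
    cases n with
    | zero => simp
    | succ n =>
      have hB : ∀ q ∈ B, 0 ≤ x q := fun q hq ↦ hx q (mem_insert_of_mem hq)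
      have hxp : 0 ≤ x p := hx p (mem_insert_self p B)
      rw [elemSymm_insert x hp, sum_insert hp]
      set s := ∑ q ∈ B, x q
      calc ((n + 1).factorial : R) * (elemSymm x B (n + 1) + x p * elemSymm x B n)
          = (n + 1).factorial * elemSymm x B (n + 1)
              + (n + 1) * x p * (n.factorial * elemSymm x B n) := by
            rw [Nat.factorial_succ]; push_cast; ring
        _ ≤ s ^ (n + 1) + (n + 1) * x p * s ^ n := by
            gcongr
            · exact ih hB (n + 1)
            · exact ih hB n
        _ = s ^ (n + 1) + ((n + 1 : ℕ) : R) * s ^ (n + 1 - 1) * x p := by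
            rw [Nat.add_sub_cancel]; push_cast; ring
        _ ≤ (x p + s) ^ (n + 1) := by
            rw [add_comm (x p)]
            exact pow_add_mul_le_add_pow (sum_nonneg hB)
              (add_nonneg (mul_nonneg zero_le_two (sum_nonneg hB)) hxp) _

theorem bonferroni (hx : ∀ p ∈ B, x p ∈ Set.Icc 0 1) (n : ℕ) :
    (-1) ^ n * (truncProd x B n - ∏ p ∈ B, (1 - x p)) ∈ Set.Icc 0 (elemSymm x B (n + 1)) := by
  classical
  induction B using Finset.induction_on generalizing n with
  | empty => simp
  | insert p B hp ih =>
    have hB : ∀ q ∈ B, x q ∈ Set.Icc 0 1 := fun q hq ↦ hx q (mem_insert_of_mem hq)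
    obtain ⟨hxp, _⟩ := hx p (mem_insert_self p B)
    rw [prod_insert hp, elemSymm_insert x hp]
    cases n with
    | zero =>
      obtain ⟨hlow, hupp⟩ := ih hB 0
      have hprod : 0 ≤ ∏ q ∈ B, (1 - x q) := prod_nonneg fun q hq ↦ sub_nonneg.2 (hB q hq).2
      simp only [pow_zero, truncProd_zero, elemSymm_zero, one_mul, mul_one, sub_nonneg,
        zero_add, Set.mem_Icc] at hlow hupp ⊢
      constructor <;> nlinarith
    | succ n =>
      obtain ⟨hlow, hupp⟩ := ih hB n
      obtain ⟨hlow', hupp'⟩ := ih hB (n + 1)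
      rw [truncProd_insert x hp]
      set V := ∏ q ∈ B, (1 - x q)
      have split : (-1) ^ (n + 1) * (truncProd x B (n + 1) - x p * truncProd x B n - (1 - x p) * V)
          = (-1) ^ (n + 1) * (truncProd x B (n + 1) - V)
            + x p * ((-1) ^ n * (truncProd x B n - V)) := by
        rw [pow_succ]; ring
      rw [split]
      exact ⟨by positivity, by gcongr⟩

lemma prod_one_sub_le_truncProd_even (hx : ∀ p ∈ B, x p ∈ Set.Icc 0 1) (k : ℕ) :
    ∏ p ∈ B, (1 - x p) ≤ truncProd x B (2 * k) := by
  have h := (bonferroni hx (2 * k)).1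
  rwa [pow_mul, neg_one_sq, one_pow, one_mul, sub_nonneg] at h

lemma truncProd_even_le_prod_one_sub_add (hx : ∀ p ∈ B, x p ∈ Set.Icc 0 1) (k : ℕ) :
    truncProd x B (2 * k) ≤ ∏ p ∈ B, (1 - x p) + elemSymm x B (2 * k + 1) := by
  have h := (bonferroni hx (2 * k)).2
  rwa [pow_mul, neg_one_sq, one_pow, one_mul, sub_le_iff_le_add'] at h

end Bonferroni

section BrunHooley

open Finset

variable {ι κ τ : Type*}

lemma prod_le_prod_add_sum_mul_prod_erase {R : Type*} [CommRing R] [LinearOrder R]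
    [IsStrictOrderedRing R] [DecidableEq κ] {s : Finset κ} {x u e : κ → R}
    (hx : ∀ i ∈ s, 0 ≤ x i) (hxu : ∀ i ∈ s, x i ≤ u i) (hux : ∀ i ∈ s, u i ≤ x i + e i) :
    ∏ i ∈ s, u i ≤ ∏ i ∈ s, x i + ∑ i ∈ s, e i * ∏ j ∈ s.erase i, u j := by
  induction s using Finset.induction_on with
  | empty => simp
  | insert a s ha ih =>
    simp only [forall_mem_insert] at hx hxu hux
    have hu : ∀ i ∈ s, 0 ≤ u i := fun i hi ↦ (hx.2 i hi).trans (hxu.2 i hi)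
    have he : ∀ i ∈ s, 0 ≤ e i := fun i hi ↦ by linarith [hxu.2 i hi, hux.2 i hi]
    have herase : ∑ i ∈ s, e i * ∏ j ∈ (insert a s).erase i, u j
        = u a * ∑ i ∈ s, e i * ∏ j ∈ s.erase i, u j := by
      rw [mul_sum]
      refine sum_congr rfl fun i hi ↦ ?_
      rw [erase_insert_of_ne (ne_of_mem_of_not_mem hi ha).symm,
        prod_insert fun h ↦ ha (mem_of_mem_erase h)]
      ring
    have hloss : 0 ≤ ∑ i ∈ s, e i * ∏ j ∈ s.erase i, u j :=
      sum_nonneg fun i hi ↦ mul_nonneg (he i hi) (prod_nonneg fun j hj ↦ hu j (mem_of_mem_erase hj))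
    rw [prod_insert ha, prod_insert ha, sum_insert ha, erase_insert ha, herase]
    calc u a * ∏ i ∈ s, u i ≤ (x a + e a) * ∏ i ∈ s, u i := by
          gcongr; exacts [prod_nonneg hu, hux.1]
      _ = x a * ∏ i ∈ s, u i + e a * ∏ i ∈ s, u i := add_mul ..
      _ ≤ x a * (∏ i ∈ s, x i + ∑ i ∈ s, e i * ∏ j ∈ s.erase i, u j) + e a * ∏ i ∈ s, u i := by
          gcongr
          exacts [hx.1, ih hx.2 hxu.2 hux.2]
      _ ≤ x a * ∏ i ∈ s, x i + (e a * ∏ i ∈ s, u i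
            + u a * ∑ i ∈ s, e i * ∏ j ∈ s.erase i, u j) := by
          rw [mul_add, add_assoc, add_comm (e a * _)]
          gcongr
          exact hxu.1

/-- `F` is a combination of the monomials `∏ p ∈ S, x p`, `S ∈ 𝒮`, with coefficients bounded by
`1`. Only this enters when `F` is averaged over a sequence with a level of distribution. -/
def IsMonomialSum (𝒮 : Finset (Finset ι)) (F : (ι → ℝ) → ℝ) : Prop :=
  ∃ c : Finset ι → ℝ, (∀ S, |c S| ≤ 1) ∧ ∀ x, F x = ∑ S ∈ 𝒮, c S * ∏ p ∈ S, x p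

/-- The subsets of `B` with at most `n` elements. -/
def subsetsCardLE (B : Finset ι) (n : ℕ) : Finset (Finset ι) := {S ∈ B.powerset | #S ≤ n}

lemma mem_subsetsCardLE {B S : Finset ι} {n : ℕ} :
    S ∈ subsetsCardLE B n ↔ S ⊆ B ∧ #S ≤ n := by
  simp [subsetsCardLE]

lemma sum_subsetsCardLE {M : Type*} [AddCommMonoid M] (B : Finset ι) (n : ℕ)
    (f : Finset ι → M) :
    ∑ S ∈ subsetsCardLE B n, f S = ∑ k ∈ range (n + 1), ∑ S ∈ B.powersetCard k, f S := by
  have hmaps : ∀ S ∈ subsetsCardLE B n, #S ∈ range (n + 1) := fun S hS ↦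
    mem_range_succ_iff.2 (mem_subsetsCardLE.1 hS).2
  rw [← sum_fiberwise_of_maps_to hmaps]
  refine sum_congr rfl fun k hk ↦ sum_congr ?_ fun _ _ ↦ rfl
  have := mem_range_succ_iff.1 hk
  ext S
  simp only [mem_filter, mem_subsetsCardLE, mem_powersetCard]
  constructor <;> rintro h <;> simp_all

lemma card_subsetsCardLE_le (B : Finset ι) (n : ℕ) : #(subsetsCardLE B n) ≤ (#B + 1) ^ n := by
  simp only [card_eq_sum_ones, sum_subsetsCardLE]
  simp only [← card_eq_sum_ones, card_powersetCard]
  rw [add_pow]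
  refine sum_le_sum fun k hk ↦ (Nat.choose_le_pow _ _).trans ?_
  rw [one_pow, mul_one]
  exact Nat.le_mul_of_pos_right _ (Nat.choose_pos (mem_range_succ_iff.1 hk))

lemma isMonomialSum_truncProd (B : Finset ι) (n : ℕ) :
    IsMonomialSum (subsetsCardLE B (n + 1)) (truncProd · B n) := by
  refine ⟨fun S ↦ if #S ≤ n then (-1) ^ #S else 0, fun S ↦ by beta_reduce; split_ifs <;> simp,
    fun x ↦ ?_⟩
  beta_reduce
  rw [sum_subsetsCardLE, sum_range_succ, sum_eq_zero (s := B.powersetCard (n + 1)), add_zero]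
  · refine sum_congr rfl fun k hk ↦ ?_
    rw [elemSymm, mul_sum]
    refine sum_congr rfl fun S hS ↦ ?_
    rw [(mem_powersetCard.1 hS).2, if_pos (mem_range_succ_iff.1 hk)]
  · intro S hS
    rw [(mem_powersetCard.1 hS).2, if_neg (by lia), zero_mul]

lemma isMonomialSum_elemSymm (B : Finset ι) (n : ℕ) :
    IsMonomialSum (subsetsCardLE B n) (elemSymm · B n) := by
  refine ⟨fun S ↦ if #S = n then 1 else 0, fun S ↦ by beta_reduce; split_ifs <;> simp,
    fun x ↦ ?_⟩
  beta_reduce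
  rw [sum_subsetsCardLE, sum_range_succ, sum_eq_zero (s := range n), zero_add, elemSymm]
  · refine sum_congr rfl fun S hS ↦ ?_
    rw [(mem_powersetCard.1 hS).2, if_pos rfl, one_mul]
  · refine fun k hk ↦ sum_eq_zero fun S hS ↦ ?_
    rw [(mem_powersetCard.1 hS).2, if_neg (mem_range.1 hk).ne, zero_mul]

lemma abs_sum_mul_prod_sub_le [Fintype κ] {𝒮 : κ → Finset (Finset ι)}
    {F : κ → (ι → ℝ) → ℝ} (hF : ∀ i, IsMonomialSum (𝒮 i) (F i)) (T : Finset τ) (φ : τ → ℝ)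
    (x : τ → ι → ℝ) (g : ι → ℝ) (M err : ℝ)
    (herr : ∀ S : κ → Finset ι, (∀ i, S i ∈ 𝒮 i) →
      |∑ t ∈ T, φ t * ∏ i, ∏ p ∈ S i, x t p - M * ∏ i, ∏ p ∈ S i, g p| ≤ err) :
    |∑ t ∈ T, φ t * ∏ i, F i (x t) - M * ∏ i, F i g| ≤ (∏ i, (#(𝒮 i) : ℝ)) * err := by
  classical
  choose c hc hFc using hF
  have expand (y : ι → ℝ) : ∏ i, F i y
      = ∑ S ∈ Fintype.piFinset 𝒮, (∏ i, c i (S i)) * ∏ i, ∏ p ∈ S i, y p := by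
    simp only [hFc, prod_univ_sum, prod_mul_distrib]
  have regroup : ∑ t ∈ T, φ t * ∏ i, F i (x t) - M * ∏ i, F i g
      = ∑ S ∈ Fintype.piFinset 𝒮, (∏ i, c i (S i)) *
        (∑ t ∈ T, φ t * ∏ i, ∏ p ∈ S i, x t p - M * ∏ i, ∏ p ∈ S i, g p) := by
    simp only [expand, mul_sub, sum_sub_distrib, mul_sum]
    rw [sum_comm]
    congr 1 <;> simp only [mul_left_comm]
  rw [regroup]
  calc |∑ S ∈ Fintype.piFinset 𝒮, (∏ i, c i (S i)) *
        (∑ t ∈ T, φ t * ∏ i, ∏ p ∈ S i, x t p - M * ∏ i, ∏ p ∈ S i, g p)|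
      ≤ ∑ _S ∈ Fintype.piFinset 𝒮, err := by
        refine (abs_sum_le_sum_abs _ _).trans (sum_le_sum fun S hS ↦ ?_)
        rw [abs_mul, abs_prod]
        refine (mul_le_of_le_one_left (abs_nonneg _) ?_).trans (herr S (Fintype.mem_piFinset.1 hS))
        exact prod_le_one (fun _ _ ↦ abs_nonneg _) fun i _ ↦ hc i (S i)
    _ = (∏ i, (#(𝒮 i) : ℝ)) * err := by
        rw [sum_const, Fintype.card_piFinset, nsmul_eq_mul, Nat.cast_prod]

section Bounds

variable [Fintype κ] (B : κ → Finset ι) (k : κ → ℕ)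

/-- Brun's upper bound for `∏ i, ∏ p ∈ B i, (1 - x p)`: each block is truncated after an even
number of terms. -/
noncomputable def brunHooleyUpper (x : ι → ℝ) : ℝ := ∏ i, truncProd x (B i) (2 * k i)

/-- Hooley's bound for the excess of `brunHooleyUpper B k x` over the full product. -/
noncomputable def brunHooleyLoss [DecidableEq κ] (x : ι → ℝ) : ℝ :=
  ∑ i, elemSymm x (B i) (2 * k i + 1) * ∏ j ∈ univ.erase i, truncProd x (B j) (2 * k j)

variable {B k} {x : ι → ℝ}

lemma prod_one_sub_nonneg {s : Finset ι} (hx : ∀ p ∈ s, x p ∈ Set.Icc 0 1) :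
    0 ≤ ∏ p ∈ s, (1 - x p) :=
  prod_nonneg fun p hp ↦ sub_nonneg.2 (hx p hp).2

lemma truncProd_even_nonneg {s : Finset ι} (hx : ∀ p ∈ s, x p ∈ Set.Icc 0 1) (n : ℕ) :
    0 ≤ truncProd x s (2 * n) :=
  (prod_one_sub_nonneg hx).trans (prod_one_sub_le_truncProd_even hx n)

lemma prod_one_sub_le_brunHooleyUpper (hx : ∀ i, ∀ p ∈ B i, x p ∈ Set.Icc 0 1) :
    ∏ i, ∏ p ∈ B i, (1 - x p) ≤ brunHooleyUpper B k x :=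
  prod_le_prod (fun i _ ↦ prod_one_sub_nonneg (hx i))
    fun i _ ↦ prod_one_sub_le_truncProd_even (hx i) (k i)

lemma brunHooleyUpper_le_add_loss [DecidableEq κ] (hx : ∀ i, ∀ p ∈ B i, x p ∈ Set.Icc 0 1) :
    brunHooleyUpper B k x ≤ ∏ i, ∏ p ∈ B i, (1 - x p) + brunHooleyLoss B k x :=
  prod_le_prod_add_sum_mul_prod_erase (fun i _ ↦ prod_one_sub_nonneg (hx i))
    (fun i _ ↦ prod_one_sub_le_truncProd_even (hx i) (k i))
    fun i _ ↦ truncProd_even_le_prod_one_sub_add (hx i) (k i)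

variable {ε : κ → ℝ}

lemma truncProd_le_exp_mul_prod_one_sub {s : Finset ι} {n : ℕ} {δ : ℝ}
    (hx : ∀ p ∈ s, x p ∈ Set.Icc 0 1)
    (hδ : elemSymm x s (2 * n + 1) ≤ δ * ∏ p ∈ s, (1 - x p)) :
    truncProd x s (2 * n) ≤ Real.exp δ * ∏ p ∈ s, (1 - x p) :=
  calc truncProd x s (2 * n) ≤ (δ + 1) * ∏ p ∈ s, (1 - x p) := by
        linarith [truncProd_even_le_prod_one_sub_add hx n]
    _ ≤ Real.exp δ * ∏ p ∈ s, (1 - x p) :=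
        mul_le_mul_of_nonneg_right (Real.add_one_le_exp δ) (prod_one_sub_nonneg hx)

lemma brunHooleyUpper_le_exp_mul (hx : ∀ i, ∀ p ∈ B i, x p ∈ Set.Icc 0 1)
    (hε : ∀ i, elemSymm x (B i) (2 * k i + 1) ≤ ε i * ∏ p ∈ B i, (1 - x p)) :
    brunHooleyUpper B k x ≤ Real.exp (∑ i, ε i) * ∏ i, ∏ p ∈ B i, (1 - x p) := by
  rw [Real.exp_sum, ← prod_mul_distrib]
  exact prod_le_prod (fun i _ ↦ truncProd_even_nonneg (hx i) (k i))
    fun i _ ↦ truncProd_le_exp_mul_prod_one_sub (hx i) (hε i)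

lemma brunHooleyLoss_le_mul_exp_mul [DecidableEq κ]
    (hx : ∀ i, ∀ p ∈ B i, x p ∈ Set.Icc 0 1) (hε0 : ∀ i, 0 ≤ ε i)
    (hε : ∀ i, elemSymm x (B i) (2 * k i + 1) ≤ ε i * ∏ p ∈ B i, (1 - x p)) :
    brunHooleyLoss B k x
      ≤ (∑ i, ε i) * Real.exp (∑ i, ε i) * ∏ i, ∏ p ∈ B i, (1 - x p) := by
  rw [brunHooleyLoss, sum_mul, sum_mul]
  refine sum_le_sum fun i _ ↦ ?_
  have herase : ∏ j ∈ univ.erase i, truncProd x (B j) (2 * k j)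
      ≤ Real.exp (∑ j, ε j) * ∏ j ∈ univ.erase i, ∏ p ∈ B j, (1 - x p) :=
    calc _ ≤ ∏ j ∈ univ.erase i, Real.exp (ε j) * ∏ p ∈ B j, (1 - x p) :=
          prod_le_prod (fun j _ ↦ truncProd_even_nonneg (hx j) (k j))
            fun j _ ↦ truncProd_le_exp_mul_prod_one_sub (hx j) (hε j)
      _ ≤ _ := by
          rw [prod_mul_distrib, ← Real.exp_sum]
          gcongr
          · exact prod_nonneg fun j _ ↦ prod_one_sub_nonneg (hx j)
          · exact fun j _ _ ↦ hε0 j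
          · exact erase_subset i univ
  calc _ ≤ (ε i * ∏ p ∈ B i, (1 - x p))
        * (Real.exp (∑ j, ε j) * ∏ j ∈ univ.erase i, ∏ p ∈ B j, (1 - x p)) := by
        gcongr
        · exact prod_nonneg fun j _ ↦ truncProd_even_nonneg (hx j) (k j)
        · exact mul_nonneg (hε0 i) (prod_one_sub_nonneg (hx i))
        · exact hε i
    _ = ε i * Real.exp (∑ j, ε j) * ∏ j, ∏ p ∈ B j, (1 - x p) := by
        rw [← mul_prod_erase univ (fun j ↦ ∏ p ∈ B j, (1 - x p)) (mem_univ i)]; ring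

end Bounds

section Sieve

variable [Fintype κ] {B : κ → Finset ι} {k : κ → ℕ} {T : Finset τ} {φ : τ → ℝ}
  {x : τ → ι → ℝ} {g : ι → ℝ} {M err : ℝ}

lemma prod_card_subsetsCardLE_mul_le (B : κ → Finset ι) (k : κ → ℕ) (herr : 0 ≤ err) :
    (∏ i, (#(subsetsCardLE (B i) (2 * k i + 1)) : ℝ)) * err
      ≤ (∏ i, ((#(B i) : ℝ) + 1) ^ (2 * k i + 1)) * err := by
  gcongr
  exact_mod_cast card_subsetsCardLE_le _ _

lemma abs_sum_mul_brunHooleyUpper_sub_le (herr : ∀ S : κ → Finset ι,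
      (∀ i, S i ∈ subsetsCardLE (B i) (2 * k i + 1)) →
      |∑ t ∈ T, φ t * ∏ i, ∏ p ∈ S i, x t p - M * ∏ i, ∏ p ∈ S i, g p| ≤ err) (herr0 : 0 ≤ err) :
    |∑ t ∈ T, φ t * brunHooleyUpper B k (x t) - M * brunHooleyUpper B k g|
      ≤ (∏ i, ((#(B i) : ℝ) + 1) ^ (2 * k i + 1)) * err :=
  (abs_sum_mul_prod_sub_le (fun i ↦ isMonomialSum_truncProd (B i) (2 * k i)) T φ x g M err
    herr).trans (prod_card_subsetsCardLE_mul_le B k herr0)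

lemma abs_sum_mul_brunHooleyLoss_sub_le [DecidableEq κ] (herr : ∀ S : κ → Finset ι,
      (∀ i, S i ∈ subsetsCardLE (B i) (2 * k i + 1)) →
      |∑ t ∈ T, φ t * ∏ i, ∏ p ∈ S i, x t p - M * ∏ i, ∏ p ∈ S i, g p| ≤ err) (herr0 : 0 ≤ err) :
    |∑ t ∈ T, φ t * brunHooleyLoss B k (x t) - M * brunHooleyLoss B k g|
      ≤ Fintype.card κ * (∏ i, ((#(B i) : ℝ) + 1) ^ (2 * k i + 1)) * err := by
  let F (i j : κ) : (ι → ℝ) → ℝ :=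
    Function.update (fun j y ↦ truncProd y (B j) (2 * k j)) i (elemSymm · (B i) (2 * k i + 1)) j
  have hF (i j : κ) : IsMonomialSum (subsetsCardLE (B j) (2 * k j + 1)) (F i j) := by
    rcases eq_or_ne j i with rfl | hij
    · simpa only [F, Function.update_self] using isMonomialSum_elemSymm (B j) (2 * k j + 1)
    · simpa only [F, Function.update_of_ne hij] using isMonomialSum_truncProd (B j) (2 * k j)
  have hloss (y : ι → ℝ) : brunHooleyLoss B k y = ∑ i, ∏ j, F i j y := by
    refine sum_congr rfl fun i _ ↦ ?_
    rw [← mul_prod_erase univ (fun j ↦ F i j y) (mem_univ i)]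
    congr 1
    · simp only [F, Function.update_self]
    · refine prod_congr rfl fun j hj ↦ ?_
      simp only [F, Function.update_of_ne (ne_of_mem_erase hj)]
  have regroup : ∑ t ∈ T, φ t * brunHooleyLoss B k (x t) - M * brunHooleyLoss B k g
      = ∑ i, (∑ t ∈ T, φ t * ∏ j, F i j (x t) - M * ∏ j, F i j g) := by
    simp only [hloss, mul_sum, sum_sub_distrib]
    rw [sum_comm]
  rw [regroup, mul_assoc, ← nsmul_eq_mul]
  refine (abs_sum_le_sum_abs _ _).trans (sum_le_card_nsmul _ _ _ fun i _ ↦ ?_)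
  exact (abs_sum_mul_prod_sub_le (hF i) T φ x g M err herr).trans
    (prod_card_subsetsCardLE_mul_le B k herr0)

theorem brunHooley_sieve_of_weights (hx : ∀ t, ∀ i, ∀ p ∈ B i, x t p ∈ Set.Icc 0 1)
    (hg : ∀ i, ∀ p ∈ B i, g p ∈ Set.Icc 0 1) (hφ : ∀ t ∈ T, 0 ≤ φ t) (hM : 0 ≤ M) {ε : κ → ℝ}
    (hε0 : ∀ i, 0 ≤ ε i)
    (hε : ∀ i, elemSymm g (B i) (2 * k i + 1) ≤ ε i * ∏ p ∈ B i, (1 - g p))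
    (herr : ∀ S : κ → Finset ι, (∀ i, S i ∈ subsetsCardLE (B i) (2 * k i + 1)) →
      |∑ t ∈ T, φ t * ∏ i, ∏ p ∈ S i, x t p - M * ∏ i, ∏ p ∈ S i, g p| ≤ err) (herr0 : 0 ≤ err) :
    |∑ t ∈ T, φ t * ∏ i, ∏ p ∈ B i, (1 - x t p) - M * ∏ i, ∏ p ∈ B i, (1 - g p)|
      ≤ (∑ i, ε i) * Real.exp (∑ i, ε i) * (M * ∏ i, ∏ p ∈ B i, (1 - g p))
        + (Fintype.card κ + 1) * (∏ i, ((#(B i) : ℝ) + 1) ^ (2 * k i + 1)) * err := by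
  classical
  have hupper := abs_le.1 (abs_sum_mul_brunHooleyUpper_sub_le herr herr0)
  have hloss := abs_le.1 (abs_sum_mul_brunHooleyLoss_sub_le herr herr0)
  have sum_le_upper : ∑ t ∈ T, φ t * ∏ i, ∏ p ∈ B i, (1 - x t p)
      ≤ ∑ t ∈ T, φ t * brunHooleyUpper B k (x t) :=
    sum_le_sum fun t ht ↦ mul_le_mul_of_nonneg_left (prod_one_sub_le_brunHooleyUpper (hx t))
      (hφ t ht)
  have upper_le_sum : ∑ t ∈ T, φ t * brunHooleyUpper B k (x t)
      ≤ ∑ t ∈ T, φ t * ∏ i, ∏ p ∈ B i, (1 - x t p)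
        + ∑ t ∈ T, φ t * brunHooleyLoss B k (x t) := by
    rw [← sum_add_distrib]
    refine sum_le_sum fun t ht ↦ ?_
    rw [← mul_add]
    exact mul_le_mul_of_nonneg_left (brunHooleyUpper_le_add_loss (hx t)) (hφ t ht)
  have model_upper := mul_le_mul_of_nonneg_left (brunHooleyUpper_le_exp_mul hg hε) hM
  have model_lower := mul_le_mul_of_nonneg_left (prod_one_sub_le_brunHooleyUpper (k := k) hg) hM
  have model_loss := mul_le_mul_of_nonneg_left (brunHooleyLoss_le_mul_exp_mul hg hε0 hε) hM
  set η := ∑ i, ε i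
  set V := ∏ i, ∏ p ∈ B i, (1 - g p)
  set Z := ∏ i, ((#(B i) : ℝ) + 1) ^ (2 * k i + 1)
  have hMV : 0 ≤ M * V := mul_nonneg hM (prod_nonneg fun i _ ↦ prod_one_sub_nonneg (hg i))
  have hZ : 0 ≤ Z := prod_nonneg fun i _ ↦ by positivity
  have exp_sub_one_le : Real.exp η - 1 ≤ η * Real.exp η := by
    have := mul_le_mul_of_nonneg_right (Real.one_sub_le_exp_neg η) (Real.exp_pos η).le
    rw [← Real.exp_add, neg_add_cancel, Real.exp_zero] at this
    linarith
  have hmul := mul_le_mul_of_nonneg_right exp_sub_one_le hMV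
  have hcard : 0 ≤ Fintype.card κ * Z * err := mul_nonneg (mul_nonneg (Nat.cast_nonneg _) hZ) herr0
  rw [abs_le]
  clear_value η V Z
  constructor
  · linarith only [upper_le_sum, hupper.1, hloss.2, model_lower, model_loss]
  · linarith only [sum_le_upper, hupper.2, model_upper, hmul, hcard]

end Sieve

theorem brunHooley_sieve [Fintype κ] [DecidableEq ι] {B : κ → Finset ι}
    {P : Finset ι} (hP : univ.biUnion B = P) (hB : Pairwise (Function.onFun Disjoint B))
    {k : κ → ℕ} {g : ι → ℝ}
    (hg : ∀ i, ∀ p ∈ B i, g p ∈ Set.Icc 0 1) {ε : κ → ℝ} (hε0 : ∀ i, 0 ≤ ε i)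
    (hε : ∀ i, elemSymm g (B i) (2 * k i + 1) ≤ ε i * ∏ p ∈ B i, (1 - g p))
    (E : ι → τ → Prop) [DecidableRel E] {T : Finset τ} {φ : τ → ℝ}
    (hφ : ∀ t ∈ T, 0 ≤ φ t) {M err : ℝ} (hM : 0 ≤ M)
    (herr : ∀ S ⊆ P, (∀ i, #(S ∩ B i) ≤ 2 * k i + 1) →
      |∑ t ∈ T with ∀ p ∈ S, E p t, φ t - M * ∏ p ∈ S, g p| ≤ err) :
    |∑ t ∈ T with ∀ p ∈ P, ¬ E p t, φ t - M * ∏ p ∈ P, (1 - g p)|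
      ≤ (∑ i, ε i) * Real.exp (∑ i, ε i) * (M * ∏ p ∈ P, (1 - g p))
        + (Fintype.card κ + 1) * (∏ i, ((#(B i) : ℝ) + 1) ^ (2 * k i + 1)) * err := by
  subst hP
  let x (t : τ) (p : ι) : ℝ := if E p t then 1 else 0
  have hx (t : τ) (p : ι) : x t p ∈ Set.Icc 0 1 := by
    simp only [x]; split_ifs <;> simp
  have hsum (S : Finset ι) : ∑ t ∈ T with ∀ p ∈ S, E p t, φ t = ∑ t ∈ T, φ t * ∏ p ∈ S, x t p := by
    simp only [x, sum_filter, prod_ite_zero, prod_const_one, mul_ite, mul_one, mul_zero]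
  have hsift (S : Finset ι) : ∑ t ∈ T with ∀ p ∈ S, ¬ E p t, φ t
      = ∑ t ∈ T, φ t * ∏ p ∈ S, (1 - x t p) := by
    have hone (t : τ) (p : ι) : 1 - x t p = if ¬ E p t then 1 else 0 := by
      by_cases h : E p t <;> simp [x, h]
    simp only [hone, sum_filter, prod_ite_zero, prod_const_one, mul_ite, mul_one, mul_zero]
  have hprod (S : κ → Finset ι) (hS : ∀ i, S i ⊆ B i) (f : ι → ℝ) :
      ∏ p ∈ univ.biUnion S, f p = ∏ i, ∏ p ∈ S i, f p :=
    prod_biUnion fun i _ j _ hij ↦ disjoint_of_subset_left (hS i)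
      (disjoint_of_subset_right (hS j) (hB hij))
  have herr0 : 0 ≤ err := (abs_nonneg _).trans (herr ∅ (empty_subset _) (by simp))
  rw [hsift]
  simp only [hprod B fun _ ↦ Subset.rfl]
  refine brunHooley_sieve_of_weights (fun t _ p _ ↦ hx t p) hg hφ hM hε0 hε (fun S hS ↦ ?_) herr0
  have hSB (i : κ) : S i ⊆ B i := (mem_subsetsCardLE.1 (hS i)).1
  have hinter (i : κ) : univ.biUnion S ∩ B i = S i := by
    ext p
    simp only [mem_inter, mem_biUnion, mem_univ, true_and]
    refine ⟨fun ⟨⟨j, hj⟩, hi⟩ ↦ ?_, fun h ↦ ⟨⟨i, h⟩, hSB i h⟩⟩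
    by_contra hp
    have hij : i ≠ j := fun h ↦ hp (h ▸ hj)
    exact disjoint_left.1 (hB hij) hi (hSB j hj)
  have := herr (univ.biUnion S) (biUnion_mono fun i _ ↦ hSB i)
    fun i ↦ by rw [hinter]; exact (mem_subsetsCardLE.1 (hS i)).2
  simpa only [hsum, hprod S hSB] using this

end BrunHooley

/-! ### Mertens' theorems for `χ₄` -/

section Mertens

open Finset ArithmeticFunction

/-- The nontrivial character modulo `4`, with real values. -/
noncomputable def chi (n : ℕ) : ℝ := ((ZMod.χ₄ n : ℤ) : ℝ)

lemma chi_mul (m n : ℕ) : chi (m * n) = chi m * chi n := by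
  rw [chi, chi, chi, Nat.cast_mul, map_mul, Int.cast_mul]

@[simp]
lemma chi_zero : chi 0 = 0 := by
  simp [chi]

@[simp]
lemma chi_one : chi 1 = 1 := by
  simp [chi]

lemma abs_chi_le_one (n : ℕ) : |chi n| ≤ 1 := by
  rw [chi, ZMod.χ₄_nat_eq_if_mod_four]
  split_ifs <;> simp

lemma chi_le_one (n : ℕ) : chi n ≤ 1 := (abs_le.1 (abs_chi_le_one n)).2

lemma neg_one_le_chi (n : ℕ) : -1 ≤ chi n := (abs_le.1 (abs_chi_le_one n)).1

lemma chi_two_mul (n : ℕ) : chi (2 * n) = 0 := by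
  rw [chi, ZMod.χ₄_nat_eq_if_mod_four, if_pos (Nat.mul_mod_right 2 n), Int.cast_zero]

lemma chi_two_mul_add_one (n : ℕ) : chi (2 * n + 1) = (-1) ^ n := by
  rw [chi, ZMod.χ₄_eq_neg_one_pow (by omega), show (2 * n + 1) / 2 = n by omega]
  simp

lemma sum_Ioc_chi (n : ℕ) : ∑ i ∈ Ioc 0 n, chi i = if n % 4 = 1 ∨ n % 4 = 2 then 1 else 0 := by
  induction n with
  | zero => simp
  | succ n ih =>
    rw [sum_Ioc_succ_top n.zero_le, ih, chi, ZMod.χ₄_nat_eq_if_mod_four]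
    split_ifs <;> first | omega | simp

lemma abs_sum_Ioc_chi_le_one (a b : ℕ) : |∑ i ∈ Ioc a b, chi i| ≤ 1 := by
  rcases le_total a b with hab | hba
  · rw [← add_sub_cancel_left (∑ i ∈ Ioc 0 a, chi i) (∑ i ∈ Ioc a b, chi i),
      sum_Ioc_consecutive _ a.zero_le hab, sum_Ioc_chi, sum_Ioc_chi]
    split_ifs <;> simp
  · simp [Ioc_eq_empty_of_le hba]

lemma sum_Ioc_sub_pred {M : Type*} [AddCommGroup M] (f : ℕ → M) {a b : ℕ} (hab : a ≤ b) :
    ∑ n ∈ Ioc a b, (f n - f (n - 1)) = f b - f a := by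
  induction b, hab using Nat.le_induction with
  | base => simp
  | succ b hab ih => rw [sum_Ioc_succ_top hab, ih]; simp

lemma sum_Ioc_mul_le_of_antitoneOn {c φ : ℕ → ℝ} {a : ℕ} {B : ℝ}
    (hc : ∀ k, a ≤ k → ∑ n ∈ Ioc a k, c n ≤ B) (hφ : AntitoneOn φ (Set.Ioi a))
    (hφ0 : ∀ n, a < n → 0 ≤ φ n) (b : ℕ) : ∑ n ∈ Ioc a b, c n * φ n ≤ B * φ (a + 1) := by
  have hB : 0 ≤ B := by simpa using hc a le_rfl
  rcases le_or_gt b a with hba | hab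
  · rw [Ioc_eq_empty_of_le hba, sum_empty]
    exact mul_nonneg hB (hφ0 _ a.lt_succ_self)
  suffices ∑ n ∈ Ioc a b, c n * φ n ≤
      (∑ n ∈ Ioc a b, c n) * φ b + B * (φ (a + 1) - φ b) by
    linarith [mul_le_mul_of_nonneg_right (hc b hab.le) (hφ0 b hab)]
  induction b, hab using Nat.le_induction with
  | base => simp
  | succ b hab ih =>
    rw [sum_Ioc_succ_top (Nat.lt_of_succ_le hab).le, sum_Ioc_succ_top (Nat.lt_of_succ_le hab).le]
    have hstep : φ (b + 1) ≤ φ b := hφ hab (Nat.lt_succ_of_lt hab) b.le_succ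
    linarith [mul_le_mul_of_nonneg_right (hc b (Nat.lt_of_succ_le hab).le)
      (sub_nonneg.2 hstep)]

lemma abs_sum_Ioc_chi_mul_le {φ : ℕ → ℝ} {a : ℕ} (hφ : AntitoneOn φ (Set.Ioi a))
    (hφ0 : ∀ n, a < n → 0 ≤ φ n) (b : ℕ) : |∑ n ∈ Ioc a b, chi n * φ n| ≤ φ (a + 1) := by
  have hsum (k : ℕ) := abs_le.1 (abs_sum_Ioc_chi_le_one a k)
  have hupper := sum_Ioc_mul_le_of_antitoneOn (fun k _ ↦ (hsum k).2) hφ hφ0 b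
  have hlower := sum_Ioc_mul_le_of_antitoneOn (c := fun n ↦ -chi n) (B := 1)
    (fun k _ ↦ by rw [sum_neg_distrib]; linarith [(hsum k).1]) hφ hφ0 b
  simp only [neg_mul, sum_neg_distrib, one_mul] at hupper hlower
  exact abs_le.2 ⟨by linarith, hupper⟩

/-- The partial sums of `L(1, χ₄) = π / 4`. -/
noncomputable def chiHarmonic (n : ℕ) : ℝ := ∑ d ∈ Ioc 0 n, chi d / d

lemma abs_chiHarmonic_sub_le {m n : ℕ} (h : m ≤ n) :
    |chiHarmonic n - chiHarmonic m| ≤ 1 / (m + 1) := by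
  have hsum : chiHarmonic n - chiHarmonic m = ∑ d ∈ Ioc m n, chi d * (1 / d) := by
    rw [chiHarmonic, ← sum_Ioc_consecutive _ m.zero_le h, ← chiHarmonic, add_sub_cancel_left]
    exact sum_congr rfl fun d _ ↦ div_eq_mul_one_div _ _
  have hanti : AntitoneOn (fun d : ℕ ↦ 1 / (d : ℝ)) (Set.Ioi m) := fun a ha b _ hab ↦
    one_div_le_one_div_of_le (by exact_mod_cast (Nat.zero_le m).trans_lt ha) (by exact_mod_cast hab)
  rw [hsum]
  simpa using abs_sum_Ioc_chi_mul_le hanti (fun d _ ↦ by positivity) n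

lemma chiHarmonic_two_mul (n : ℕ) :
    chiHarmonic (2 * n) = ∑ i ∈ range n, (-1 : ℝ) ^ i / (2 * i + 1) := by
  induction n with
  | zero => simp [chiHarmonic]
  | succ n ih =>
    rw [sum_range_succ, ← ih, chiHarmonic, mul_add, mul_one, sum_Ioc_succ_top (Nat.zero_le _),
      sum_Ioc_succ_top (Nat.zero_le _), chi_two_mul_add_one, ← chiHarmonic,
      show 2 * n + 1 + 1 = 2 * (n + 1) by ring, chi_two_mul]
    simp

lemma abs_chiHarmonic_sub_pi_div_four_le (n : ℕ) :
    |chiHarmonic n - Real.pi / 4| ≤ 1 / (n + 1) := by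
  have htendsto :
      Filter.Tendsto (fun k ↦ chiHarmonic (2 * k)) Filter.atTop (nhds (Real.pi / 4)) := by
    simpa only [chiHarmonic_two_mul] using Real.tendsto_sum_pi_div_four
  rw [abs_sub_comm]
  refine le_of_tendsto (htendsto.sub_const _).abs ?_
  filter_upwards [Filter.eventually_ge_atTop n] with k hk
  exact abs_chiHarmonic_sub_le (by omega)

lemma sum_log_eq_sum_vonMangoldt_mul (N : ℕ) :
    ∑ n ∈ Ioc 0 N, Real.log n = ∑ d ∈ Ioc 0 N, Λ d * (N / d : ℕ) := by
  rw [← sum_Ioc_mul_zeta_eq_sum, vonMangoldt_mul_zeta]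
  simp only [log_apply]

lemma sum_log_le (N : ℕ) : ∑ n ∈ Ioc 0 N, Real.log n ≤ N * Real.log N := by
  have hterm : ∀ n ∈ Ioc 0 N, Real.log n ≤ Real.log N := fun n hn ↦
    Real.log_le_log (by exact_mod_cast (mem_Ioc.1 hn).1) (by exact_mod_cast (mem_Ioc.1 hn).2)
  simpa using sum_le_card_nsmul _ _ _ hterm

lemma le_sum_log {N : ℕ} (hN : N ≠ 0) : N * Real.log N - N ≤ ∑ n ∈ Ioc 0 N, Real.log n := by
  have hfact : ∑ n ∈ Ioc 0 N, Real.log n = Real.log N.factorial := by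
    rw [← Real.log_prod fun n hn ↦ by exact_mod_cast (mem_Ioc.1 hn).1.ne', ← Nat.cast_prod,
      ← prod_Ico_id_eq_factorial]
    rfl
  have hexp := Real.log_le_log (by positivity) (Real.pow_div_factorial_le_exp N N.cast_nonneg N)
  rw [Real.log_exp, Real.log_div (by positivity) (by positivity), Real.log_pow] at hexp
  linarith

lemma sum_vonMangoldt_le (N : ℕ) : ∑ n ∈ Ioc 0 N, Λ n ≤ 6 * N := by
  have hpsi := Chebyshev.psi_le_const_mul_self (x := N) N.cast_nonneg
  have hlog : Real.log 4 ≤ 2 := by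
    rw [show (4 : ℝ) = 2 ^ 2 by norm_num, Real.log_pow]
    norm_num
    linarith [Real.log_two_lt_d9]
  rw [Chebyshev.psi, Nat.floor_natCast] at hpsi
  linarith [mul_le_mul_of_nonneg_right hlog (Nat.cast_nonneg (α := ℝ) N)]

lemma natCast_div_sub_one_lt (m n : ℕ) : (m / n : ℝ) - 1 < (m / n : ℕ) := by
  have := Nat.sub_one_lt_floor ((m : ℝ) / n)
  rwa [Nat.floor_div_natCast, Nat.floor_natCast] at this

lemma log_sub_one_le_sum_vonMangoldt_div {N : ℕ} (hN : N ≠ 0) :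
    Real.log N - 1 ≤ ∑ n ∈ Ioc 0 N, Λ n / n := by
  have hsum : ∑ n ∈ Ioc 0 N, Real.log n ≤ N * ∑ n ∈ Ioc 0 N, Λ n / n := by
    rw [sum_log_eq_sum_vonMangoldt_mul, mul_sum]
    refine sum_le_sum fun d _ ↦ ?_
    rw [mul_div_left_comm]
    exact mul_le_mul_of_nonneg_left Nat.cast_div_le vonMangoldt_nonneg
  refine le_of_mul_le_mul_left ?_ (show (0 : ℝ) < N by positivity)
  linarith [le_sum_log hN]

lemma sum_vonMangoldt_div_le {N : ℕ} (hN : N ≠ 0) :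
    ∑ n ∈ Ioc 0 N, Λ n / n ≤ Real.log N + 6 := by
  have hsum : N * ∑ n ∈ Ioc 0 N, Λ n / n - ∑ n ∈ Ioc 0 N, Λ n ≤ ∑ n ∈ Ioc 0 N, Real.log n := by
    rw [sum_log_eq_sum_vonMangoldt_mul, mul_sum, ← sum_sub_distrib]
    refine sum_le_sum fun d _ ↦ ?_
    rw [mul_div_left_comm, ← mul_sub_one]
    exact mul_le_mul_of_nonneg_left (natCast_div_sub_one_lt N d).le vonMangoldt_nonneg
  refine le_of_mul_le_mul_left ?_ (show (0 : ℝ) < N by positivity)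
  linarith [sum_log_le N, sum_vonMangoldt_le N]

lemma abs_sum_chi_mul_log_div_le (N : ℕ) : |∑ n ∈ Ioc 0 N, chi n * (Real.log n / n)| ≤ 1 := by
  have hanti : AntitoneOn (fun n : ℕ ↦ Real.log n / n) (Set.Ioi 2) := fun m hm n hn hmn ↦ by
    have three_le {k : ℕ} (hk : 2 < k) : Real.exp 1 ≤ k :=
      (Real.exp_one_lt_d9.le.trans (by norm_num)).trans (show (3 : ℝ) ≤ k by exact_mod_cast hk)
    exact Real.log_div_self_antitoneOn (three_le hm) (three_le hn) (by exact_mod_cast hmn)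
  have htail : ∑ n ∈ Ioc 0 N, chi n * (Real.log n / n) =
      ∑ n ∈ Ioc 2 N, chi n * (Real.log n / n) := by
    refine (sum_subset (Ioc_subset_Ioc_left zero_le_two) fun n hn hn2 ↦ ?_).symm
    obtain rfl | rfl : n = 1 ∨ n = 2 := by simp only [mem_Ioc] at hn hn2; omega
    · simp
    · simp [chi_two_mul 1]
  rw [htail]
  refine (abs_sum_Ioc_chi_mul_le hanti
    (fun n _ ↦ div_nonneg (Real.log_natCast_nonneg n) n.cast_nonneg) N).trans ?_
  norm_num
  linarith [Real.log_le_self (show (0 : ℝ) ≤ 3 by norm_num)]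

lemma sum_chi_mul_log_div_eq (N : ℕ) :
    ∑ n ∈ Ioc 0 N, chi n * (Real.log n / n) =
      ∑ d ∈ Ioc 0 N, chi d * Λ d / d * chiHarmonic (N / d) := by
  let f : ArithmeticFunction ℝ := ⟨fun n ↦ chi n * Λ n / n, by simp⟩
  let g : ArithmeticFunction ℝ := ⟨fun n ↦ chi n / n, by simp⟩
  refine Eq.trans (sum_congr rfl fun n _ ↦ ?_) (sum_Ioc_mul_eq_sum_sum f g N)
  rw [mul_apply, ← vonMangoldt_sum, ← Nat.sum_divisorsAntidiagonal (fun i _ ↦ Λ i), sum_div,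
    mul_sum]
  refine sum_congr rfl fun x hx ↦ ?_
  change _ = chi x.1 * Λ x.1 / x.1 * (chi x.2 / x.2)
  rw [← (Nat.mem_divisorsAntidiagonal.1 hx).1, chi_mul]
  push_cast
  ring

lemma abs_sum_chi_mul_vonMangoldt_div_le {N : ℕ} (hN : N ≠ 0) :
    |∑ n ∈ Ioc 0 N, chi n * Λ n / n| ≤ 10 := by
  have hN' : (0 : ℝ) < N := by positivity
  have hterm : ∀ d ∈ Ioc 0 N,
      |chi d * Λ d / d * (chiHarmonic (N / d) - Real.pi / 4)| ≤ Λ d / N := by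
    intro d hd
    have hd0 : (0 : ℝ) < d := by exact_mod_cast (mem_Ioc.1 hd).1
    have htail : 1 / (((N / d : ℕ) : ℝ) + 1) ≤ d / N := by
      rw [div_le_div_iff₀ (by positivity) hN', one_mul, ← div_le_iff₀' hd0]
      linarith [natCast_div_sub_one_lt N d]
    rw [abs_mul, abs_div, abs_mul, abs_of_pos hd0, abs_of_nonneg vonMangoldt_nonneg]
    calc |chi d| * Λ d / d * |chiHarmonic (N / d) - Real.pi / 4| ≤ 1 * Λ d / d * (d / N) := by
          gcongr
          · exact abs_chi_le_one d
          · exact (abs_chiHarmonic_sub_pi_div_four_le _).trans htail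
      _ = Λ d / N := by field_simp
  have herr : |∑ d ∈ Ioc 0 N, chi d * Λ d / d * (chiHarmonic (N / d) - Real.pi / 4)| ≤ 6 := by
    refine (abs_sum_le_sum_abs _ _).trans ((sum_le_sum hterm).trans ?_)
    rw [← sum_div, div_le_iff₀ hN']
    exact sum_vonMangoldt_le N
  have hlog := abs_sum_chi_mul_log_div_le N
  simp only [mul_sub, sum_sub_distrib, ← sum_mul, ← sum_chi_mul_log_div_eq] at herr
  have hpi := Real.pi_gt_three
  rw [abs_le] at *
  constructor <;> nlinarith [herr.1, herr.2, hlog.1, hlog.2]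

lemma sum_log_sub_log_pred_div_log_le {u x : ℕ} (hu : 2 ≤ u) (hx : u ≤ x) :
    ∑ m ∈ Ioc u x, (Real.log m - Real.log (m - 1 : ℕ)) / Real.log m ≤
      Real.log (Real.log x) - Real.log (Real.log u) := by
  rw [← sum_Ioc_sub_pred (fun n : ℕ ↦ Real.log (Real.log n)) hx]
  refine sum_le_sum fun m hm ↦ ?_
  rw [mem_Ioc] at hm
  have hpred : 0 < Real.log (m - 1 : ℕ) := Real.log_pos (by exact_mod_cast (by omega : 1 < m - 1))
  have hm0 : 0 < Real.log m := Real.log_pos (by exact_mod_cast (by omega : 1 < m))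
  have := Real.log_le_sub_one_of_pos (div_pos hpred hm0)
  rw [Real.log_div hpred.ne' hm0.ne'] at this
  rw [sub_div, div_self hm0.ne']
  linarith

lemma sum_div_log_le_of_sum_le {a : ℕ → ℝ} {u x : ℕ} (hu : 2 ≤ u) (hx : u ≤ x) {α C : ℝ}
    (hα : 0 ≤ α)
    (h : ∀ n, u ≤ n → ∑ m ∈ Ioc u n, a m ≤ α * (Real.log n - Real.log u) + C) :
    ∑ m ∈ Ioc u x, a m / Real.log m ≤
      α * (Real.log (Real.log x) - Real.log (Real.log u)) + C / Real.log u := by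
  let b : ℕ → ℝ := fun m ↦ a m - α * (Real.log m - Real.log (m - 1 : ℕ))
  have one_lt {n : ℕ} (hn : u < n) : (1 : ℝ) < n := by exact_mod_cast (by omega : 1 < n)
  have hlogu : 0 < Real.log u := Real.log_pos (by exact_mod_cast hu)
  have hC : 0 ≤ C := by simpa using h u le_rfl
  have hb (k : ℕ) (hk : u ≤ k) : ∑ m ∈ Ioc u k, b m ≤ C := by
    rw [sum_sub_distrib, ← mul_sum, sum_Ioc_sub_pred (fun n : ℕ ↦ Real.log n) hk]
    linarith [h k hk]
  have hanti : AntitoneOn (fun n : ℕ ↦ (Real.log n)⁻¹) (Set.Ioi u) := fun m hm n _ hmn ↦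
    inv_anti₀ (Real.log_pos (one_lt hm))
      (Real.log_le_log (by linarith [one_lt hm]) (by exact_mod_cast hmn))
  have hsum_b := sum_Ioc_mul_le_of_antitoneOn hb hanti
    (fun n _ ↦ inv_nonneg.2 (Real.log_natCast_nonneg n)) x
  calc ∑ m ∈ Ioc u x, a m / Real.log m
      = α * ∑ m ∈ Ioc u x, (Real.log m - Real.log (m - 1 : ℕ)) / Real.log m
        + ∑ m ∈ Ioc u x, b m * (Real.log m)⁻¹ := by
        rw [mul_sum, ← sum_add_distrib]
        exact sum_congr rfl fun m _ ↦ by ring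
    _ ≤ α * (Real.log (Real.log x) - Real.log (Real.log u)) + C / Real.log u := by
        refine add_le_add (mul_le_mul_of_nonneg_left (sum_log_sub_log_pred_div_log_le hu hx) hα)
          (hsum_b.trans (mul_le_mul_of_nonneg_left (inv_anti₀ hlogu ?_) hC))
        exact Real.log_le_log (by positivity) (by simp)

lemma sum_primes_one_add_chi_div_le {u x : ℕ} (hu : 2 ≤ u) (hx : u ≤ x) :
    ∑ p ∈ Ioc u x with p.Prime, (1 + chi p) / p ≤
      Real.log (Real.log x) - Real.log (Real.log u) + 27 / Real.log u := by
  have hΛ (n : ℕ) (hn : u ≤ n) : ∑ m ∈ Ioc u n, (1 + chi m) * Λ m / m ≤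
      1 * (Real.log n - Real.log u) + 27 := by
    have hn0 : n ≠ 0 := by omega
    have hu0 : u ≠ 0 := by omega
    have hsplit : ∑ m ∈ Ioc u n, (1 + chi m) * Λ m / m =
        ∑ m ∈ Ioc u n, Λ m / m + ∑ m ∈ Ioc u n, chi m * Λ m / m := by
      rw [← sum_add_distrib]
      exact sum_congr rfl fun m _ ↦ by ring
    linarith [sum_Ioc_consecutive (fun m ↦ Λ m / (m : ℝ)) u.zero_le hn,
      sum_Ioc_consecutive (fun m ↦ chi m * Λ m / (m : ℝ)) u.zero_le hn,
      sum_vonMangoldt_div_le hn0, log_sub_one_le_sum_vonMangoldt_div hu0,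
      abs_le.1 (abs_sum_chi_mul_vonMangoldt_div_le hn0),
      abs_le.1 (abs_sum_chi_mul_vonMangoldt_div_le hu0)]
  refine le_trans ?_ ((sum_div_log_le_of_sum_le hu hx zero_le_one hΛ).trans_eq (by ring))
  rw [sum_filter]
  refine sum_le_sum fun n _ ↦ ?_
  split_ifs with hp
  · rw [vonMangoldt_apply_prime hp, div_right_comm,
      mul_div_cancel_right₀ _ (Real.log_pos (by exact_mod_cast hp.one_lt)).ne']
  · have := neg_one_le_chi n
    exact div_nonneg (div_nonneg (mul_nonneg (by linarith) vonMangoldt_nonneg) n.cast_nonneg)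
      (Real.log_natCast_nonneg n)

lemma sum_primes_log_div_le {x : ℕ} (hx : x ≠ 0) :
    ∑ p ∈ Ioc 0 x with p.Prime, Real.log p / p ≤ Real.log x + 6 := by
  refine le_trans ?_ (sum_vonMangoldt_div_le hx)
  rw [sum_filter]
  refine sum_le_sum fun n _ ↦ ?_
  split_ifs with hp
  · rw [vonMangoldt_apply_prime hp]
  · exact div_nonneg vonMangoldt_nonneg n.cast_nonneg

lemma summable_vonMangoldt_div_nonprime :
    Summable fun n : ℕ ↦ (if n.Prime then 0 else Λ n) / n := by
  simpa [Subsingleton.elim _ (0 : ZMod 1)] using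
    vonMangoldt.summable_residueClass_non_primes_div (0 : ZMod 1)

lemma exists_sum_primes_chi_mul_log_div_le :
    ∃ C : ℝ, ∀ u x : ℕ, 0 < u → u ≤ x →
      ∑ n ∈ Ioc u x, (if n.Prime then chi n * (Real.log n / n) else 0) ≤ C := by
  refine ⟨20 + ∑' n : ℕ, (if n.Prime then 0 else Λ n) / n, fun u x hu hux ↦ ?_⟩
  have nonprime_nonneg (n : ℕ) : 0 ≤ (if n.Prime then 0 else Λ n) / n := by
    split_ifs
    · simp
    · exact div_nonneg vonMangoldt_nonneg n.cast_nonneg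
  have hterm (n : ℕ) : (if n.Prime then chi n * (Real.log n / n) else 0) ≤
      chi n * Λ n / n + (if n.Prime then 0 else Λ n) / n := by
    split_ifs with hp
    · rw [vonMangoldt_apply_prime hp]
      apply le_of_eq
      ring
    · rw [← add_div]
      have := neg_one_le_chi n
      exact div_nonneg (by nlinarith [vonMangoldt_nonneg (n := n)]) n.cast_nonneg
  refine (sum_le_sum fun n _ ↦ hterm n).trans ?_
  rw [sum_add_distrib]
  have htsum := summable_vonMangoldt_div_nonprime.sum_le_tsum (Ioc u x)
    fun n _ ↦ nonprime_nonneg n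
  linarith [sum_Ioc_consecutive (fun m ↦ chi m * Λ m / (m : ℝ)) u.zero_le hux,
    abs_le.1 (abs_sum_chi_mul_vonMangoldt_div_le (hu.trans_le hux).ne'),
    abs_le.1 (abs_sum_chi_mul_vonMangoldt_div_le hu.ne')]

lemma exists_sum_primes_chi_div_le :
    ∃ C : ℝ, 0 ≤ C ∧ ∀ x : ℕ, ∑ p ∈ Ioc 0 x with p.Prime, chi p / p ≤ C := by
  obtain ⟨C, hC⟩ := exists_sum_primes_chi_mul_log_div_le
  have hC0 : 0 ≤ C := by simpa using hC 2 2 two_pos le_rfl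
  have hC2 : 0 ≤ C / Real.log 2 := div_nonneg hC0 (Real.log_nonneg one_le_two)
  refine ⟨C / Real.log 2, hC2, fun x ↦ ?_⟩
  have htail : ∑ p ∈ Ioc 0 x with p.Prime, chi p / p =
      ∑ n ∈ Ioc 2 x, (if n.Prime then chi n * (Real.log n / n) else 0) / Real.log n := by
    rw [sum_filter]
    refine Eq.trans (sum_congr rfl fun n _ ↦ ?_)
      (sum_subset (Ioc_subset_Ioc_left zero_le_two) fun n hn hn2 ↦ ?_).symm
    · split_ifs with hp
      · have := (Real.log_pos (show (1 : ℝ) < n by exact_mod_cast hp.one_lt)).ne'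
        field_simp
      · simp
    · obtain rfl | rfl : n = 1 ∨ n = 2 := by simp only [mem_Ioc] at hn hn2; omega
      · simp
      · simp [chi_two_mul 1]
  rw [htail]
  rcases le_or_gt 2 x with hx | hx
  · simpa using sum_div_log_le_of_sum_le le_rfl hx le_rfl fun n hn ↦
      (hC 2 n two_pos hn).trans (zero_add C ▸ by simp)
  · rwa [Ioc_eq_empty_of_le hx.le, sum_empty]

end Mertens

/-! ### The divisor sum of `χ₄` -/

section WeightedHarmonic

open Finset

lemma sum_Ioc_dvd {M : Type*} [AddCommMonoid M] {p : ℕ} (hp : 0 < p) (n : ℕ) (f : ℕ → M) :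
    ∑ e ∈ Ioc 0 n with p ∣ e, f e = ∑ k ∈ Ioc 0 (n / p), f (p * k) := by
  rw [← sum_image fun _ _ _ _ h ↦ Nat.eq_of_mul_eq_mul_left hp h]
  refine sum_congr ?_ fun _ _ ↦ rfl
  ext e
  simp only [mem_filter, mem_Ioc, mem_image]
  constructor
  · rintro ⟨⟨he0, hen⟩, k, rfl⟩
    exact ⟨k, ⟨Nat.pos_of_mul_pos_left he0, (Nat.le_div_iff_mul_le hp).2 (mul_comm p k ▸ hen)⟩, rfl⟩
  · rintro ⟨k, ⟨hk0, hkn⟩, rfl⟩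
    exact ⟨⟨Nat.mul_pos hp hk0, mul_comm k p ▸ (Nat.le_div_iff_mul_le hp).1 hkn⟩, Dvd.intro _ rfl⟩

/-- The weight of `e` depending only on which primes of `P` divide `e`: each `p ∈ P` contributes
`b p` if `p ∣ e` and `a p` otherwise. -/
noncomputable def localWeight (a b : ℕ → ℝ) (P : Finset ℕ) (e : ℕ) : ℝ :=
  ∏ p ∈ P, if p ∣ e then b p else a p

/-- The partial sums of `L(1, χ₄)`, each term being multiplied by its local weight. -/
noncomputable def weightedChiHarmonic (a b : ℕ → ℝ) (P : Finset ℕ) (n : ℕ) : ℝ :=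
  ∑ e ∈ Ioc 0 n, chi e / e * localWeight a b P e

variable {a b : ℕ → ℝ} {P : Finset ℕ}

lemma localWeight_prime_mul (hP : ∀ q ∈ P, q.Prime) {p : ℕ} (hp : p.Prime) (hpP : p ∉ P) (k : ℕ) :
    localWeight a b P (p * k) = localWeight a b P k := by
  refine prod_congr rfl fun q hq ↦ ?_
  have hqp : ¬ q ∣ p := fun h ↦ hpP ((Nat.prime_dvd_prime_iff_eq (hP q hq) hp).1 h ▸ hq)
  simp only [(hP q hq).dvd_mul, hqp, false_or]

lemma weightedChiHarmonic_insert (hP : ∀ q ∈ P, q.Prime) {p : ℕ} (hp : p.Prime) (hpP : p ∉ P)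
    (n : ℕ) : weightedChiHarmonic a b (insert p P) n =
      a p * weightedChiHarmonic a b P n
        + (b p - a p) * (chi p / p) * weightedChiHarmonic a b P (n / p) := by
  have hterm (e : ℕ) : chi e / e * localWeight a b (insert p P) e =
      a p * (chi e / e * localWeight a b P e) +
        (b p - a p) * if p ∣ e then chi e / e * localWeight a b P e else 0 := by
    rw [localWeight, prod_insert hpP, ← localWeight]
    split_ifs <;> ring
  simp only [weightedChiHarmonic, hterm]
  rw [sum_add_distrib, ← mul_sum, ← mul_sum, ← sum_filter, sum_Ioc_dvd hp.pos,
    mul_assoc (b p - a p)]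
  congr 2
  rw [mul_sum]
  refine sum_congr rfl fun k _ ↦ ?_
  rw [localWeight_prime_mul hP hp hpP, chi_mul, Nat.cast_mul, mul_div_mul_comm, mul_assoc]

lemma abs_weightedChiHarmonic_sub_le (hP : ∀ q ∈ P, q.Prime) (n : ℕ) :
    |weightedChiHarmonic a b P n - Real.pi / 4 * ∏ p ∈ P, (a p + (b p - a p) * (chi p / p))| ≤
      (∏ p ∈ P, (|a p| + |b p - a p|)) / (n + 1) := by
  induction P using Finset.induction_on generalizing n with
  | empty =>
    simpa [weightedChiHarmonic, localWeight, chiHarmonic] using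
      abs_chiHarmonic_sub_pi_div_four_le n
  | insert p P hpP ih =>
    have hp : p.Prime := hP p (mem_insert_self _ _)
    have hP' : ∀ q ∈ P, q.Prime := fun q hq ↦ hP q (mem_insert_of_mem hq)
    rw [weightedChiHarmonic_insert hP' hp hpP, prod_insert hpP, prod_insert hpP]
    have hR : 0 ≤ ∏ p ∈ P, (|a p| + |b p - a p|) := prod_nonneg fun _ _ ↦ by positivity
    have hn := ih hP' n
    have hnp := ih hP' (n / p)
    generalize ∏ p ∈ P, (|a p| + |b p - a p|) = R at *
    generalize ∏ p ∈ P, (a p + (b p - a p) * (chi p / p)) = L at *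
    have hp0 : (0 : ℝ) < p := by exact_mod_cast hp.pos
    have hfloor : R / ((n / p : ℕ) + 1) ≤ p * (R / (n + 1)) := by
      have hlt : (n : ℝ) + 1 ≤ p * ((n / p : ℕ) + 1) := by
        exact_mod_cast Nat.lt_mul_div_succ n hp.pos
      rw [← mul_div_assoc, div_le_div_iff₀ (by positivity) (by positivity)]
      linarith [mul_le_mul_of_nonneg_left hlt hR]
    have hchi : |(b p - a p) * (chi p / p)| ≤ |b p - a p| * (1 / p) := by
      rw [abs_mul, abs_div, Nat.abs_cast]
      gcongr
      exact abs_chi_le_one p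
    calc
      _ = |a p * (weightedChiHarmonic a b P n - Real.pi / 4 * L) + (b p - a p) * (chi p / p) *
            (weightedChiHarmonic a b P (n / p) - Real.pi / 4 * L)| := by ring_nf
      _ ≤ |a p| * (R / (n + 1)) + |b p - a p| * (1 / p) * (p * (R / (n + 1))) := by
        refine (abs_add_le _ _).trans ?_
        rw [abs_mul, abs_mul (_ * _)]
        gcongr
        exact hnp.trans hfloor
      _ = (|a p| + |b p - a p|) * R / (n + 1) := by field_simp

end WeightedHarmonic

section ChiDivisorSum

open Finset ArithmeticFunction
open scoped ArithmeticFunction.zeta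

/-- `r(n) = ∑_{d ∣ n} χ₄(d)`, a quarter of the number of representations of `n` as an ordered sum
of two squares of integers. -/
noncomputable def chiDivisorSum (n : ℕ) : ℝ := ∑ d ∈ n.divisors, chi d

lemma chiDivisorSum_eq_prod {n : ℕ} (hn : n ≠ 0) :
    chiDivisorSum n = n.factorization.prod fun p k ↦ chiDivisorSum (p ^ k) := by
  have hr (n : ℕ) : chiDivisorSum n = ((ζ : ArithmeticFunction ℝ) * ⟨chi, chi_zero⟩) n :=
    (coe_zeta_mul_apply (f := ⟨chi, chi_zero⟩)).symm
  have hmul : IsMultiplicative (⟨chi, chi_zero⟩ : ArithmeticFunction ℝ) :=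
    ⟨chi_one, fun {m n} _ ↦ chi_mul m n⟩
  simp only [hr]
  exact (isMultiplicative_zeta.natCast.mul hmul).multiplicative_factorization _ hn

lemma chi_pow (n k : ℕ) : chi (n ^ k) = chi n ^ k := by
  induction k with
  | zero => simp
  | succ k ih => rw [pow_succ, chi_mul, ih, pow_succ]

lemma chiDivisorSum_prime_pow {p : ℕ} (hp : p.Prime) (k : ℕ) :
    chiDivisorSum (p ^ k) = ∑ i ∈ range (k + 1), chi p ^ i := by
  simp only [chiDivisorSum, Nat.sum_divisors_prime_pow hp, chi_pow]

lemma chiDivisorSum_nonneg (n : ℕ) : 0 ≤ chiDivisorSum n := by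
  rcases eq_or_ne n 0 with rfl | hn
  · simp [chiDivisorSum]
  rw [chiDivisorSum_eq_prod hn]
  refine prod_nonneg fun p hp ↦ ?_
  simp only [chiDivisorSum_prime_pow (Nat.prime_of_mem_primeFactors hp), chi,
    ZMod.χ₄_nat_eq_if_mod_four]
  split_ifs
  · exact sum_nonneg fun i _ ↦ by simp
  · exact sum_nonneg fun i _ ↦ by simp
  · simp only [Int.cast_neg, Int.cast_one, neg_one_geom_sum]
    split_ifs <;> simp

lemma isSumTwoSquares_of_chiDivisorSum_ne_zero {n : ℕ} (h : chiDivisorSum n ≠ 0) :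
    IsSumTwoSquares n := by
  have hn : n ≠ 0 := by
    rintro rfl
    simp [chiDivisorSum] at h
  refine ⟨Nat.pos_of_ne_zero hn, Nat.eq_sq_add_sq_iff.2 fun p hp hp4 ↦ ?_⟩
  have hprime := Nat.prime_of_mem_primeFactors hp
  rw [chiDivisorSum_eq_prod hn, Finsupp.prod, prod_ne_zero_iff] at h
  have hne := h p (by simpa using hp)
  rw [chiDivisorSum_prime_pow hprime, chi, ZMod.χ₄_nat_eq_if_mod_four, if_neg (by omega),
    if_neg (by omega), Int.cast_neg, Int.cast_one, neg_one_geom_sum] at hne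
  rw [← Nat.factorization_def n hprime]
  simpa [Nat.even_add_one] using hne

lemma chiDivisorSum_le_two_pow_cardFactors {n : ℕ} (hn : n ≠ 0) :
    chiDivisorSum n ≤ 2 ^ cardFactors n := by
  have hcard : #n.divisors ≤ 2 ^ cardFactors n := by
    rw [Nat.card_divisors hn, cardFactors_eq_sum_factorization, Finsupp.sum,
      Nat.support_factorization, ← prod_pow_eq_pow_sum]
    exact prod_le_prod' fun p _ ↦ Nat.lt_two_pow_self
  calc chiDivisorSum n ≤ ∑ _d ∈ n.divisors, (1 : ℝ) := sum_le_sum fun d _ ↦ chi_le_one d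
    _ = #n.divisors := by simp
    _ ≤ 2 ^ cardFactors n := by exact_mod_cast hcard

lemma chi_div_eq_of_chi_eq_one {n d : ℕ} (hn : chi n = 1) (hd : d ∣ n) : chi (n / d) = chi d := by
  obtain ⟨k, rfl⟩ := hd
  rw [chi_mul] at hn
  have hd0 : d ≠ 0 := by
    rintro rfl
    simp at hn
  rw [Nat.mul_div_cancel_left k (Nat.pos_of_ne_zero hd0)]
  have hd1 := abs_le.1 (abs_chi_le_one d)
  have hk1 := abs_le.1 (abs_chi_le_one k)
  nlinarith

lemma sum_divisors_chi_lt_sq {n : ℕ} (hn : chi n = 1) :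
    ∑ e ∈ n.divisors with n < e ^ 2, chi e = ∑ e ∈ n.divisors with e ^ 2 < n, chi e := by
  rw [sum_filter, sum_filter, ← Nat.sum_div_divisors]
  refine sum_congr rfl fun e he ↦ ?_
  obtain ⟨hen, hn0⟩ := Nat.mem_divisors.1 he
  rw [chi_div_eq_of_chi_eq_one hn hen]
  obtain ⟨k, rfl⟩ := hen
  have he0 : 0 < e := Nat.pos_of_ne_zero (left_ne_zero_of_mul hn0)
  have hk0 : 0 < k := Nat.pos_of_ne_zero (right_ne_zero_of_mul hn0)
  simp only [Nat.mul_div_cancel_left k he0, sq, Nat.mul_lt_mul_right hk0, Nat.mul_lt_mul_left he0]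

lemma abs_chiDivisorSum_sub_le {n : ℕ} (hn : chi n = 1) :
    |chiDivisorSum n - 2 * ∑ e ∈ n.divisors with e ^ 2 < n, chi e| ≤
      if IsSquare n then 1 else 0 := by
  have hsplit : chiDivisorSum n = ∑ e ∈ n.divisors with e ^ 2 < n, chi e +
      ∑ e ∈ n.divisors with n < e ^ 2, chi e + ∑ e ∈ n.divisors with e ^ 2 = n, chi e := by
    simp only [chiDivisorSum, sum_filter, ← sum_add_distrib]
    refine sum_congr rfl fun e _ ↦ ?_
    rcases lt_trichotomy (e ^ 2) n with h | h | h
    · simp [h, h.ne, h.not_gt]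
    · simp [h]
    · simp [h, h.ne', h.not_gt]
  rw [hsplit, sum_divisors_chi_lt_sq hn, ← two_mul, add_sub_cancel_left]
  split_ifs with hs
  · obtain ⟨s, rfl⟩ := hs
    refine (abs_sum_le_sum_abs _ _).trans ?_
    calc _ ≤ ∑ e ∈ {s}, |chi e| := by
          refine sum_le_sum_of_subset_of_nonneg (fun e he ↦ ?_) fun _ _ _ ↦ abs_nonneg _
          rw [← sq] at he
          exact mem_singleton.2 (Nat.pow_left_injective two_ne_zero (mem_filter.1 he).2)
      _ ≤ 1 := by simpa using abs_chi_le_one s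
  · rw [filter_eq_empty_iff.2 fun e _ he ↦ hs ⟨e, by rw [← he, sq]⟩]
    simp

end ChiDivisorSum

section ChiDivisorSumModEq

open Finset

lemma sum_Ioc_mul_sub_mul_eq (c φ : ℕ → ℝ) (L : ℝ) (b : ℕ) :
    ∑ n ∈ Ioc 0 b, c n * φ n - L * φ 1 = (∑ n ∈ Ioc 0 b, c n - L) * φ (b + 1) +
      ∑ n ∈ Ioc 0 b, (∑ m ∈ Ioc 0 n, c m - L) * (φ n - φ (n + 1)) := by
  induction b with
  | zero => simp
  | succ b ih =>
    simp only [sum_Ioc_succ_top b.zero_le] at ih ⊢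
    linear_combination ih

lemma abs_sum_Ioc_mul_sub_le {c φ : ℕ → ℝ} {L R : ℝ} (hR : 0 ≤ R) {E : ℕ}
    (hc : ∀ n, |∑ m ∈ Ioc 0 n, c m - L| ≤ R / (n + 1)) (hφ : Antitone φ)
    (hstep : ∀ n, φ n - φ (n + 1) ≤ 2 * n + 1) (hE : φ (E + 1) = 0) :
    |∑ n ∈ Ioc 0 E, c n * φ n - L * φ 1| ≤ 2 * R * E := by
  rw [sum_Ioc_mul_sub_mul_eq, hE, mul_zero, zero_add]
  refine (abs_sum_le_sum_abs _ _).trans ?_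
  have hterm (n : ℕ) : |(∑ m ∈ Ioc 0 n, c m - L) * (φ n - φ (n + 1))| ≤ 2 * R := by
    have hdiff : 0 ≤ φ n - φ (n + 1) := sub_nonneg.2 (hφ n.le_succ)
    rw [abs_mul, abs_of_nonneg hdiff]
    calc _ ≤ R / (n + 1) * (2 * (n + 1)) :=
          mul_le_mul (hc n) (by linarith [hstep n]) hdiff (by positivity)
      _ = 2 * R := by field_simp
  calc _ ≤ #(Ioc 0 E) • (2 * R) := sum_le_card_nsmul _ _ _ fun n _ ↦ hterm n
    _ = 2 * R * E := by rw [Nat.card_Ioc, Nat.sub_zero, nsmul_eq_mul, mul_comm]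

/-- The number of `n ∈ (A, B]` with `e ^ 2 < n`, which is the range of `n` for which `e` is the
smaller of two complementary divisors. -/
def hyperbolaLength (A B e : ℕ) : ℝ := (B - max A (e ^ 2) : ℕ)

lemma hyperbolaLength_one {A B : ℕ} (hA : 1 ≤ A) (hAB : A ≤ B) :
    hyperbolaLength A B 1 = B - A := by
  rw [hyperbolaLength, one_pow, max_eq_left hA, Nat.cast_sub hAB]

lemma antitone_hyperbolaLength (A B : ℕ) : Antitone (hyperbolaLength A B) := fun d e hde ↦ by
  simp only [hyperbolaLength]
  gcongr

lemma hyperbolaLength_sub_le (A B e : ℕ) :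
    hyperbolaLength A B e - hyperbolaLength A B (e + 1) ≤ 2 * e + 1 := by
  have hsq : (e + 1) ^ 2 = e ^ 2 + 2 * e + 1 := by ring
  have hle : B - max A (e ^ 2) ≤ B - max A ((e + 1) ^ 2) + (2 * e + 1) := by omega
  rw [hyperbolaLength, hyperbolaLength, sub_le_iff_le_add']
  exact_mod_cast hle

lemma hyperbolaLength_sqrt_add_one (A B : ℕ) : hyperbolaLength A B (B.sqrt + 1) = 0 := by
  rw [hyperbolaLength, Nat.cast_eq_zero, Nat.sub_eq_zero_iff_le, sq]
  exact (Nat.lt_succ_sqrt B).le.trans (le_max_right _ _)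

lemma abs_sum_localWeight_mul_hyperbolaLength_sub_le {a b : ℕ → ℝ} {P : Finset ℕ}
    (hP : ∀ q ∈ P, q.Prime) {A B : ℕ} (hA : 1 ≤ A) (hAB : A ≤ B) :
    |∑ e ∈ Ioc 0 B.sqrt, chi e / e * localWeight a b P e * hyperbolaLength A B e -
      Real.pi / 4 * (∏ p ∈ P, (a p + (b p - a p) * (chi p / p))) * (B - A)| ≤
      2 * (∏ p ∈ P, (|a p| + |b p - a p|)) * B.sqrt := by
  rw [← hyperbolaLength_one hA hAB]
  exact abs_sum_Ioc_mul_sub_le (prod_nonneg fun _ _ ↦ by positivity)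
    (abs_weightedChiHarmonic_sub_le hP) (antitone_hyperbolaLength A B)
    (hyperbolaLength_sub_le A B) (hyperbolaLength_sqrt_add_one A B)

lemma abs_card_Ioc_modEq_sub_le (A B : ℕ) {r : ℕ} (hr : 0 < r) (c : ℕ) :
    |(#{n ∈ Ioc A B | n ≡ c [MOD r]} : ℝ) - (B - A : ℕ) / r| ≤ 1 := by
  rcases le_or_gt B A with hBA | hAB
  · simp [Ioc_eq_empty_of_le hBA, Nat.sub_eq_zero_of_le hBA]
  have hmono : ⌊((A : ℚ) - c) / r⌋ ≤ ⌊((B : ℚ) - c) / r⌋ := by gcongr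
  have hcard := Nat.Ioc_filter_modEq_card A B hr c
  rw [max_eq_left (sub_nonneg.2 hmono)] at hcard
  have hcard' : (#{n ∈ Ioc A B | n ≡ c [MOD r]} : ℚ) =
      ⌊((B : ℚ) - c) / r⌋ - ⌊((A : ℚ) - c) / r⌋ := by exact_mod_cast hcard
  have hrat : |(#{n ∈ Ioc A B | n ≡ c [MOD r]} : ℚ) - (B - A : ℕ) / r| ≤ 1 := by
    rw [hcard', Nat.cast_sub hAB.le, ← sub_sub_sub_cancel_right (B : ℚ) A c, sub_div (_ - _),
      abs_le]
    constructor <;>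
    linarith [Int.floor_le (((B : ℚ) - c) / r), Int.lt_floor_add_one (((B : ℚ) - c) / r),
      Int.floor_le (((A : ℚ) - c) / r), Int.lt_floor_add_one (((A : ℚ) - c) / r)]
  simpa only [Rat.cast_abs, Rat.cast_sub, Rat.cast_div, Rat.cast_natCast, Rat.cast_one] using
    (Rat.cast_le (K := ℝ)).2 hrat

lemma abs_card_Ioc_modEq_and_dvd_sub_le (A B : ℕ) {q L : ℕ} (hq : 0 < q) (hL : 0 < L)
    (hqL : q.Coprime L) (a : ℕ) :
    |(#{n ∈ Ioc A B | n ≡ a [MOD q] ∧ L ∣ n} : ℝ) - (B - A : ℕ) / (q * L)| ≤ 1 := by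
  obtain ⟨c, hca, hc0⟩ := Nat.chineseRemainder hqL a 0
  have hcrt (n : ℕ) : n ≡ a [MOD q] ∧ L ∣ n ↔ n ≡ c [MOD q * L] := by
    rw [← Nat.modEq_and_modEq_iff_modEq_mul hqL, ← Nat.modEq_zero_iff_dvd]
    exact and_congr ⟨fun h ↦ h.trans hca.symm, fun h ↦ h.trans hca⟩
      ⟨fun h ↦ h.trans hc0.symm, fun h ↦ h.trans hc0⟩
  simp only [hcrt]
  exact_mod_cast abs_card_Ioc_modEq_sub_le A B (Nat.mul_pos hq hL) c

lemma card_Ioc_isSquare_le (A B : ℕ) : #{n ∈ Ioc A B | IsSquare n} ≤ B.sqrt := by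
  have hsub : {n ∈ Ioc A B | IsSquare n} ⊆ (Ioc 0 B.sqrt).image fun s ↦ s * s := by
    intro n hn
    obtain ⟨hnAB, s, rfl⟩ := mem_filter.1 hn
    obtain ⟨hA, hB⟩ := mem_Ioc.1 hnAB
    exact mem_image.2 ⟨s, mem_Ioc.2 ⟨Nat.pos_of_mul_pos_left (A.zero_le.trans_lt hA),
      Nat.le_sqrt.2 hB⟩, rfl⟩
  simpa using (card_le_card hsub).trans card_image_le

/-- The density, for the weight `r(n) = ∑_{d ∣ n} χ₄(d)`, of the event `p ∣ n`. -/
noncomputable def chiDensity (p : ℕ) : ℝ := 1 / p + (1 - 1 / p) * (chi p / p)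

lemma mul_prod_dvd_iff {S : Finset ℕ} (hS : ∀ p ∈ S, p.Prime) (e n : ℕ) :
    e * ∏ p ∈ S with ¬ p ∣ e, p ∣ n ↔ e ∣ n ∧ ∀ p ∈ S, p ∣ n := by
  constructor
  · refine fun h ↦ ⟨dvd_of_mul_right_dvd h, fun p hp ↦ ?_⟩
    by_cases hpe : p ∣ e
    · exact hpe.trans (dvd_of_mul_right_dvd h)
    · exact (dvd_prod_of_mem id (mem_filter.2 ⟨hp, hpe⟩)).trans (dvd_of_mul_left_dvd h)
  · rintro ⟨hen, hSn⟩
    refine Nat.Coprime.mul_dvd_of_dvd_of_dvd (Nat.Coprime.prod_right fun p hp ↦ ?_) hen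
      (prod_primes_dvd n (fun p hp ↦ (hS p (mem_filter.1 hp).1).prime)
        fun p hp ↦ hSn p (mem_filter.1 hp).1)
    obtain ⟨hpS, hpe⟩ := mem_filter.1 hp
    exact ((hS p hpS).coprime_iff_not_dvd.2 hpe).symm

lemma abs_sum_chiDivisorSum_sub_le {A B : ℕ} {F : Finset ℕ} (hF : F ⊆ Ioc A B)
    (hchi : ∀ n ∈ F, chi n = 1) :
    |∑ n ∈ F, chiDivisorSum n -
      2 * ∑ e ∈ Ioc 0 B.sqrt, chi e * #{n ∈ F | e ∣ n ∧ e ^ 2 < n}| ≤ B.sqrt := by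
  have hswap : ∑ e ∈ Ioc 0 B.sqrt, chi e * #{n ∈ F | e ∣ n ∧ e ^ 2 < n} =
      ∑ n ∈ F, ∑ e ∈ n.divisors with e ^ 2 < n, chi e := by
    have hdiv : ∀ n ∈ F, ∑ e ∈ n.divisors with e ^ 2 < n, chi e =
        ∑ e ∈ Ioc 0 B.sqrt, if e ∣ n ∧ e ^ 2 < n then chi e else 0 := fun n hn ↦ by
      rw [← sum_filter]
      refine sum_congr (Finset.ext fun e ↦ ?_) fun _ _ ↦ rfl
      have hn' := mem_Ioc.1 (hF hn)
      simp only [mem_filter, Nat.mem_divisors, mem_Ioc, Nat.le_sqrt']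
      constructor
      · rintro ⟨⟨hen, -⟩, hlt⟩
        exact ⟨⟨Nat.pos_of_dvd_of_pos hen (by omega), by omega⟩, hen, hlt⟩
      · rintro ⟨-, hen, hlt⟩
        exact ⟨⟨hen, by omega⟩, hlt⟩
    rw [sum_congr rfl hdiv, sum_comm]
    simp only [← sum_filter, sum_const, nsmul_eq_mul, mul_comm]
  rw [hswap, mul_sum, ← sum_sub_distrib]
  calc _ ≤ ∑ n ∈ F, if IsSquare n then (1 : ℝ) else 0 :=
        (abs_sum_le_sum_abs _ _).trans
          (sum_le_sum fun n hn ↦ abs_chiDivisorSum_sub_le (hchi n hn))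
    _ = #{n ∈ F | IsSquare n} := by simp
    _ ≤ B.sqrt := by
      exact_mod_cast (card_le_card (filter_subset_filter _ hF)).trans (card_Ioc_isSquare_le A B)

/-- The relative density of `{n | n ≡ a [MOD q] ∧ ∀ p ∈ S, p ∣ n}` among the multiples of `e`,
multiplied by `q`; here `a` is coprime to `q` and so are the primes in `S`. -/
noncomputable def modEqWeight (q : ℕ) (S : Finset ℕ) : ℕ → ℝ :=
  localWeight (fun p ↦ if p ∈ S then 1 / p else 1) (fun p ↦ if p ∈ S then 1 else 0)
    (q.primeFactors ∪ S)

variable {q : ℕ} {S : Finset ℕ}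

lemma disjoint_primeFactors (hS : ∀ p ∈ S, ¬ p ∣ q) : Disjoint q.primeFactors S :=
  disjoint_left.2 fun p hpq hpS ↦ hS p hpS (Nat.dvd_of_mem_primeFactors hpq)

lemma modEqWeight_of_coprime (hS : ∀ p ∈ S, ¬ p ∣ q) {e : ℕ} (he : q.Coprime e) :
    modEqWeight q S e = 1 / (∏ p ∈ S with ¬ p ∣ e, p : ℕ) := by
  have hdisj := disjoint_primeFactors hS
  rw [modEqWeight, localWeight, prod_union hdisj, prod_eq_one, one_mul, prod_filter, Nat.cast_prod,
    one_div, ← prod_inv_distrib]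
  · refine prod_congr rfl fun p hp ↦ ?_
    by_cases hpe : p ∣ e <;> simp [hp, hpe]
  · intro p hp
    have hpe : ¬ p ∣ e := fun h ↦ (Nat.prime_of_mem_primeFactors hp).ne_one
      (Nat.eq_one_of_dvd_coprimes he (Nat.dvd_of_mem_primeFactors hp) h)
    rw [if_neg hpe, if_neg (disjoint_left.1 hdisj hp)]

lemma modEqWeight_of_not_coprime (hS : ∀ p ∈ S, ¬ p ∣ q) (hq : q ≠ 0) {e : ℕ}
    (he : ¬ q.Coprime e) : modEqWeight q S e = 0 := by
  obtain ⟨p, hp, hpq, hpe⟩ := Nat.Prime.not_coprime_iff_dvd.1 he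
  have hpq' : p ∈ q.primeFactors := Nat.mem_primeFactors.2 ⟨hp, hpq, hq⟩
  refine prod_eq_zero (mem_union_left _ hpq') ?_
  simp [hpe, disjoint_left.1 (disjoint_primeFactors hS) hpq']

lemma abs_card_dvd_sub_le (hq : q ≠ 0) {a : ℕ} (ha : a.Coprime q)
    (hS : ∀ p ∈ S, p.Prime ∧ ¬ p ∣ q) (A B : ℕ) {e : ℕ} (he : e ≠ 0) :
    |(#{n ∈ Ioc A B | (n ≡ a [MOD q] ∧ ∀ p ∈ S, p ∣ n) ∧ e ∣ n ∧ e ^ 2 < n} : ℝ) -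
      1 / e * modEqWeight q S e * hyperbolaLength A B e / q| ≤ 1 := by
  have hSq : ∀ p ∈ S, ¬ p ∣ q := fun p hp ↦ (hS p hp).2
  by_cases hqe : q.Coprime e
  · rw [modEqWeight_of_coprime hSq hqe]
    set D := ∏ p ∈ S with ¬ p ∣ e, p with hD
    have hqD : q.Coprime (e * D) := hqe.mul_right <| Nat.Coprime.prod_right fun p hp ↦
      (((hS p (mem_filter.1 hp).1).1.coprime_iff_not_dvd).2 (hSq p (mem_filter.1 hp).1)).symm
    have hD0 : 0 < D := prod_pos fun p hp ↦ (hS p (mem_filter.1 hp).1).1.pos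
    have hset : {n ∈ Ioc A B | (n ≡ a [MOD q] ∧ ∀ p ∈ S, p ∣ n) ∧ e ∣ n ∧ e ^ 2 < n} =
        {n ∈ Ioc (max A (e ^ 2)) B | n ≡ a [MOD q] ∧ e * D ∣ n} := by
      ext n
      simp only [mem_filter, mem_Ioc, hD, mul_prod_dvd_iff fun p hp ↦ (hS p hp).1, max_lt_iff]
      tauto
    have hcard := abs_card_Ioc_modEq_and_dvd_sub_le (max A (e ^ 2)) B hq.pos
      (Nat.mul_pos he.pos hD0) hqD a
    rw [hset]
    convert hcard using 3
    rw [hyperbolaLength, Nat.cast_mul]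
    field_simp
  · rw [modEqWeight_of_not_coprime hSq hq hqe, mul_zero, zero_mul, zero_div, sub_zero,
      filter_eq_empty_iff.2]
    · simp
    rintro n - ⟨⟨hna, -⟩, hen, -⟩
    exact hqe (Nat.Coprime.coprime_dvd_left hen (hna.gcd_eq.trans ha)).symm

lemma abs_sum_modEqWeight_sub_le (hS : ∀ p ∈ S, p.Prime ∧ ¬ p ∣ q) {A B : ℕ} (hA : 1 ≤ A)
    (hAB : A ≤ B) :
    |∑ e ∈ Ioc 0 B.sqrt, chi e / e * modEqWeight q S e * hyperbolaLength A B e -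
      Real.pi / 4 * ((∏ p ∈ q.primeFactors, (1 - chi p / p)) * ∏ p ∈ S, chiDensity p) * (B - A)| ≤
      2 * 2 ^ #q.primeFactors * B.sqrt := by
  have hdisj := disjoint_primeFactors fun p hp ↦ (hS p hp).2
  have hprime : ∀ p ∈ q.primeFactors ∪ S, p.Prime := fun p hp ↦
    (mem_union.1 hp).elim Nat.prime_of_mem_primeFactors fun h ↦ (hS p h).1
  convert abs_sum_localWeight_mul_hyperbolaLength_sub_le (a := fun p ↦ if p ∈ S then 1 / p else 1)
    (b := fun p ↦ if p ∈ S then 1 else 0) hprime hA hAB using 5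
  · rfl
  · rw [prod_union hdisj]
    congr 1 <;> refine prod_congr rfl fun p hp ↦ ?_
    · simp only [if_neg (disjoint_left.1 hdisj hp)]
      ring
    · simp only [if_pos hp, chiDensity]
  · rw [prod_union hdisj, ← mul_one (2 ^ _)]
    congr 1
    · rw [← prod_const]
      refine prod_congr rfl fun p hp ↦ ?_
      simp only [if_neg (disjoint_left.1 hdisj hp)]
      norm_num
    · refine (prod_eq_one fun p hp ↦ ?_).symm
      have hp1 : 1 / (p : ℝ) ≤ 1 := by
        simpa using Nat.cast_inv_le_one (α := ℝ) p
      simp only [if_pos hp]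
      rw [abs_of_nonneg (by positivity), abs_of_nonneg (by linarith), add_sub_cancel]

theorem abs_sum_chiDivisorSum_modEq_sub_le (hq : q ≠ 0) (hq4 : 4 ∣ q) {a : ℕ} (ha4 : a % 4 = 1)
    (ha : a.Coprime q) (hS : ∀ p ∈ S, p.Prime ∧ ¬ p ∣ q) {A B : ℕ} (hA : 1 ≤ A) (hAB : A ≤ B) :
    |∑ n ∈ Ioc A B with n ≡ a [MOD q] ∧ ∀ p ∈ S, p ∣ n, chiDivisorSum n -
      Real.pi / 2 * ((B - A) / q) * (∏ p ∈ q.primeFactors, (1 - chi p / p)) *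
        ∏ p ∈ S, chiDensity p| ≤ 7 * 2 ^ #q.primeFactors * B.sqrt := by
  set F := {n ∈ Ioc A B | n ≡ a [MOD q] ∧ ∀ p ∈ S, p ∣ n} with hF
  have hchi : ∀ n ∈ F, chi n = 1 := fun n hn ↦ by
    have hn4 : n % 4 = 1 := ((mem_filter.1 hn).2.1.of_dvd hq4).trans (show a ≡ 1 [MOD 4] from ha4)
    rw [chi, ZMod.χ₄_nat_eq_if_mod_four, if_neg (by omega), if_pos hn4, Int.cast_one]
  set T := ∑ e ∈ Ioc 0 B.sqrt, chi e / e * modEqWeight q S e * hyperbolaLength A B e with hT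
  have hhyperbola := abs_sum_chiDivisorSum_sub_le (F := F) (filter_subset _ _) hchi
  have hcount :
      |∑ e ∈ Ioc 0 B.sqrt, chi e * #{n ∈ F | e ∣ n ∧ e ^ 2 < n} - T / q| ≤ B.sqrt := by
    rw [hT, sum_div, ← sum_sub_distrib]
    have hterm : ∀ e ∈ Ioc 0 B.sqrt, |chi e * #{n ∈ F | e ∣ n ∧ e ^ 2 < n} -
        chi e / e * modEqWeight q S e * hyperbolaLength A B e / q| ≤ 1 := fun e he ↦ by
      have hcard := abs_card_dvd_sub_le hq ha hS A B (mem_Ioc.1 he).1.ne'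
      rw [← filter_filter, ← hF] at hcard
      rw [div_eq_mul_one_div (chi e), mul_assoc (chi e), mul_assoc (chi e), mul_div_assoc (chi e),
        ← mul_sub, abs_mul]
      exact mul_le_one₀ (abs_chi_le_one e) (abs_nonneg _) hcard
    simpa using (abs_sum_le_sum_abs _ _).trans (sum_le_card_nsmul _ _ _ hterm)
  have hmain := (div_le_self (abs_nonneg _) (by exact_mod_cast hq.pos : (1 : ℝ) ≤ q)).trans
    (abs_sum_modEqWeight_sub_le hS hA hAB)
  rw [← hT, ← Nat.abs_cast q, ← abs_div, sub_div] at hmain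
  have hpow : (B.sqrt : ℝ) ≤ 2 ^ #q.primeFactors * B.sqrt :=
    le_mul_of_one_le_left (Nat.cast_nonneg _) (one_le_pow₀ one_le_two)
  rw [show ∀ x y : ℝ, Real.pi / 2 * ((B - A) / q) * x * y =
    2 * (Real.pi / 4 * (x * y) * (B - A) / q) by intros; ring]
  rw [abs_le] at *
  constructor <;> linarith

end ChiDivisorSumModEq

/-! ### Sieving linear forms -/

section LinearForms

open Finset

lemma exists_forall_dvd_one_add_mul_iff_modEq {q v : ℕ} (hq : q ≠ 0) (hv : q.Coprime v) :
    ∃ c, ∀ t, q ∣ 1 + v * t ↔ t ≡ c [MOD q] := by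
  have : NeZero q := ⟨hq⟩
  have hinv := ZMod.coe_mul_inv_eq_one v hv.symm
  refine ⟨(-(v : ZMod q)⁻¹).val, fun t ↦ ?_⟩
  rw [← ZMod.natCast_eq_natCast_iff, ZMod.natCast_zmod_val, ← ZMod.natCast_eq_zero_iff]
  push_cast
  exact ⟨fun h ↦ by linear_combination (v : ZMod q)⁻¹ * h - t * hinv,
    fun h ↦ by linear_combination v * h - hinv⟩

lemma exists_forall_forall_dvd_iff_modEq {κ : Type*} {Q : Finset κ} {p v : κ → ℕ}
    (hp : ∀ q ∈ Q, p q ≠ 0) (hcop : (Q : Set κ).Pairwise (Function.onFun Nat.Coprime p))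
    (hv : ∀ q ∈ Q, (p q).Coprime (v q)) :
    ∃ c, ∀ t, (∀ q ∈ Q, p q ∣ 1 + v q * t) ↔ t ≡ c [MOD ∏ q ∈ Q, p q] := by
  have hres : ∀ q, ∃ c, q ∈ Q → ∀ t, p q ∣ 1 + v q * t ↔ t ≡ c [MOD p q] := fun q ↦ by
    by_cases hq : q ∈ Q
    · obtain ⟨c, hc⟩ := exists_forall_dvd_one_add_mul_iff_modEq (hp q hq) (hv q hq)
      exact ⟨c, fun _ ↦ hc⟩
    · exact ⟨0, fun h ↦ absurd h hq⟩
  choose c hc using hres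
  obtain ⟨k, hk⟩ := Nat.chineseRemainderOfFinset c p Q hp hcop
  refine ⟨k, fun t ↦ ?_⟩
  have hpairwise : Q.toList.Pairwise (Function.onFun Nat.Coprime p) :=
    Q.nodup_toList.pairwise_of_forall_ne fun q hq q' hq' ↦
      hcop (mem_toList.1 hq) (mem_toList.1 hq')
  rw [← prod_map_toList, Nat.modEq_list_map_prod_iff hpairwise]
  simp only [mem_toList]
  exact forall₂_congr fun q hq ↦ (hc q hq t).trans
    ⟨fun h ↦ h.trans (hk q hq).symm, fun h ↦ h.trans (hk q hq)⟩

lemma abs_sum_filter_forall_exists_sub_le {ι τ : Type*} {I : Finset ι}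
    {S : Finset ℕ} {E : ℕ → ι → τ → Prop} [∀ q i, DecidablePred (E q i)] {T : Finset τ}
    (huniq : ∀ q ∈ S, ∀ t, ∀ i ∈ I, ∀ i' ∈ I, E q i t → E q i' t → i = i') {w : τ → ℝ}
    {g : ℕ → ι → ℝ} {M err : ℝ}
    (h : ∀ f : S → ι, (∀ q, f q ∈ I) →
      |∑ t ∈ T with ∀ q : S, E q (f q) t, w t - M * ∏ q : S, g q (f q)| ≤ err) :
    |∑ t ∈ T with ∀ q ∈ S, ∃ i ∈ I, E q i t, w t - M * ∏ q ∈ S, ∑ i ∈ I, g q i| ≤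
      #I ^ #S * err := by
  classical
  have hunion : {t ∈ T | ∀ q ∈ S, ∃ i ∈ I, E q i t} =
      (Fintype.piFinset fun _ : S ↦ I).biUnion fun f ↦ {t ∈ T | ∀ q : S, E q (f q) t} := by
    ext t
    simp only [mem_filter, mem_biUnion, Fintype.mem_piFinset]
    constructor
    · rintro ⟨ht, hE⟩
      choose f hf using hE
      exact ⟨fun q ↦ f q q.2, fun q ↦ (hf q q.2).1, ht, fun q ↦ (hf q q.2).2⟩
    · rintro ⟨f, hf, ht, hE⟩
      exact ⟨ht, fun q hq ↦ ⟨f ⟨q, hq⟩, hf _, hE ⟨q, hq⟩⟩⟩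
  have hdisj : ((Fintype.piFinset fun _ : S ↦ I : Finset (S → ι)) : Set (S → ι)).PairwiseDisjoint
      fun f ↦ {t ∈ T | ∀ q : S, E q (f q) t} := fun f hf f' hf' hne ↦ by
    rw [mem_coe, Fintype.mem_piFinset] at hf hf'
    exact disjoint_left.2 fun t ht ht' ↦ hne <| funext fun q ↦ huniq q q.2 t _ (hf q) _ (hf' q)
      ((mem_filter.1 ht).2 q) ((mem_filter.1 ht').2 q)
  rw [hunion, sum_biUnion hdisj, ← prod_coe_sort S, prod_univ_sum, mul_sum, ← sum_sub_distrib]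
  refine ((abs_sum_le_sum_abs _ _).trans
    (sum_le_card_nsmul _ _ err fun f hf ↦ h f (Fintype.mem_piFinset.1 hf))).trans_eq ?_
  simp

/-- The linear form `t ↦ 1 + Vᵢ t`. -/
def linearForm {ι : Type*} (V : ι → ℕ) (i : ι) (t : ℕ) : ℕ := 1 + V i * t

lemma linearForm_ne_zero {ι : Type*} {V : ι → ℕ} {i : ι} {t : ℕ} : linearForm V i t ≠ 0 := by
  rw [linearForm]
  omega

lemma linearForm_mono {ι : Type*} (V : ι → ℕ) (i : ι) : Monotone (linearForm V i) := fun _ _ h ↦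
  Nat.add_le_add_left (Nat.mul_le_mul_left _ h) 1

/-- Coefficients `Vᵢ` for which the linear forms `1 + Vᵢ t` can be sieved by the primes exceeding
`N`: each such prime divides exactly one residue class of each form and never divides two of the
forms at once. Divisibility by `4` makes all values of the forms `1` modulo `4`. -/
structure IsSievable {ι : Type*} (I : Finset ι) (N : ℕ) (V : ι → ℕ) : Prop where
  pos : ∀ i ∈ I, 0 < V i
  four_dvd : ∀ i ∈ I, 4 ∣ V i
  not_dvd : ∀ i ∈ I, ∀ q : ℕ, q.Prime → N < q → ¬ q ∣ V i
  eq_of_dvd : ∀ q : ℕ, q.Prime → N < q → ∀ t, ∀ i ∈ I, ∀ i' ∈ I,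
    q ∣ linearForm V i t → q ∣ linearForm V i' t → i = i'

variable {ι : Type*} {I : Finset ι} {N : ℕ} {V : ι → ℕ} {S : Finset ℕ} {T₁ T₂ : ℕ}

lemma IsSievable.exists_forall_dvd_iff_modEq (hV : IsSievable I N V)
    (hS : ∀ q ∈ S, q.Prime ∧ N < q) {f : S → ι} (hf : ∀ q, f q ∈ I) (Q : Finset S) :
    ∃ c, ∀ t, (∀ q ∈ Q, (q : ℕ) ∣ linearForm V (f q) t) ↔ t ≡ c [MOD ∏ q ∈ Q, (q : ℕ)] :=
  exists_forall_forall_dvd_iff_modEq (p := fun q : S ↦ (q : ℕ)) (v := fun q ↦ V (f q))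
    (fun q _ ↦ (hS q q.2).1.ne_zero)
    (fun q _ q' _ hne ↦ (Nat.coprime_primes (hS q q.2).1 (hS q' q'.2).1).2
      (Subtype.coe_injective.ne hne))
    fun q _ ↦ (hS q q.2).1.coprime_iff_not_dvd.2 (hV.not_dvd _ (hf q) q (hS q q.2).1 (hS q q.2).2)

theorem IsSievable.abs_card_sub_le (hV : IsSievable I N V) (hS : ∀ q ∈ S, q.Prime ∧ N < q)
    (hT : T₁ ≤ T₂) :
    |(#{t ∈ Ioc T₁ T₂ | ∀ q ∈ S, ∃ i ∈ I, q ∣ linearForm V i t} : ℝ) -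
      (T₂ - T₁) * ∏ q ∈ S, (#I / q : ℝ)| ≤ #I ^ #S := by
  have hexpand := abs_sum_filter_forall_exists_sub_le (T := Ioc T₁ T₂) (w := 1)
    (E := fun q i t ↦ q ∣ linearForm V i t) (g := fun q _ ↦ (1 : ℝ) / q) (M := T₂ - T₁) (err := 1)
    (fun q hq ↦ hV.eq_of_dvd q (hS q hq).1 (hS q hq).2) fun f hf ↦ by
      obtain ⟨c, hc⟩ := hV.exists_forall_dvd_iff_modEq hS hf univ
      simp only [mem_univ, true_imp_iff] at hc
      have hpos : 0 < ∏ q : S, (q : ℕ) := prod_pos fun q _ ↦ (hS q q.2).1.pos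
      have hcard := abs_card_Ioc_modEq_sub_le T₁ T₂ hpos c
      rw [Nat.cast_sub hT, Nat.cast_prod] at hcard
      simp only [hc, Pi.one_apply, sum_const, nsmul_one, one_div, prod_inv_distrib,
        ← div_eq_mul_inv]
      exact hcard
  simpa [div_eq_mul_inv] using hexpand

lemma sum_linearForm_modEq {v m : ℕ} (hv : 0 < v) (c : ℕ) (D : Finset ℕ) (F : ℕ → ℝ) (T₁ T₂ : ℕ) :
    ∑ t ∈ Ioc T₁ T₂ with t ≡ c [MOD m] ∧ ∀ p ∈ D, p ∣ 1 + v * t, F (1 + v * t) =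
      ∑ n ∈ Ioc (1 + v * T₁) (1 + v * T₂) with
        n ≡ 1 + v * c [MOD m * v] ∧ ∀ p ∈ D, p ∣ n, F n := by
  have hmod : ∀ t, 1 + v * t ≡ 1 + v * c [MOD m * v] ↔ t ≡ c [MOD m] := fun t ↦ by
    rw [mul_comm m, Nat.ModEq.add_iff_left rfl, Nat.ModEq.mul_left_cancel_iff' hv.ne']
  have hinj : Function.Injective fun t ↦ 1 + v * t :=
    (add_right_injective 1).comp (mul_right_injective₀ hv.ne')
  rw [← sum_image (f := F) hinj.injOn]
  refine sum_congr (ext fun n ↦ ?_) fun _ _ ↦ rfl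
  simp only [mem_image, mem_filter, mem_Ioc]
  constructor
  · rintro ⟨t, ⟨ht, htc, htD⟩, rfl⟩
    exact ⟨⟨by gcongr; exact ht.1, by gcongr; exact ht.2⟩, (hmod t).2 htc, htD⟩
  · rintro ⟨hn, hnc, hnD⟩
    have hn1 : n ≡ 1 [MOD v] := (hnc.of_dvd (dvd_mul_left v m)).trans (by simp [Nat.ModEq])
    obtain ⟨t, ht⟩ := (Nat.modEq_iff_dvd' (by omega : 1 ≤ n)).1 hn1.symm
    obtain rfl : n = 1 + v * t := by omega
    simp only [add_lt_add_iff_left, add_le_add_iff_left, mul_lt_mul_iff_right₀ hv,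
      mul_le_mul_iff_right₀ hv] at hn
    exact ⟨t, ⟨hn, (hmod t).1 hnc, hnD⟩, rfl⟩

lemma abs_sum_chiDivisorSum_linearForm_modEq_sub_le {v c : ℕ} (hv : 0 < v) (hv4 : 4 ∣ v)
    {Q D : Finset ℕ} (hQ : ∀ q ∈ Q, q.Prime ∧ ¬ q ∣ v) (hD : ∀ p ∈ D, p.Prime ∧ ¬ p ∣ v)
    (hQD : Disjoint Q D) (hc : ∀ q ∈ Q, ¬ q ∣ 1 + v * c) (hT : T₁ ≤ T₂) :
    |∑ t ∈ Ioc T₁ T₂ with t ≡ c [MOD ∏ q ∈ Q, q] ∧ ∀ p ∈ D, p ∣ 1 + v * t,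
        chiDivisorSum (1 + v * t) -
      Real.pi / 2 * (T₂ - T₁) * (∏ p ∈ v.primeFactors, (1 - chi p / p)) *
        ((∏ p ∈ D, chiDensity p) * ∏ q ∈ Q, (1 - chi q / q) / q)| ≤
      2 ^ #Q * (7 * 2 ^ #v.primeFactors * (1 + v * T₂).sqrt) := by
  set m := ∏ q ∈ Q, q with hm
  have hm0 : m ≠ 0 := prod_ne_zero_iff.2 fun q hq ↦ (hQ q hq).1.ne_zero
  have hcop : (1 + v * c).Coprime m := Nat.Coprime.prod_right fun q hq ↦
    ((hQ q hq).1.coprime_iff_not_dvd.2 (hc q hq)).symm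
  have hDm : ∀ p ∈ D, p.Prime ∧ ¬ p ∣ m * v := fun p hp ↦ by
    refine ⟨(hD p hp).1, fun h ↦ ?_⟩
    obtain ⟨q, hq, hpq⟩ := (hD p hp).1.prime.exists_mem_finset_dvd
      (((hD p hp).1.dvd_mul.1 h).resolve_right (hD p hp).2)
    rw [Nat.prime_dvd_prime_iff_eq (hD p hp).1 (hQ q hq).1] at hpq
    exact disjoint_left.1 hQD hq (hpq ▸ hp)
  have hpf : (m * v).primeFactors = Q ∪ v.primeFactors := by
    rw [Nat.primeFactors_mul hm0 hv.ne', hm, Nat.primeFactors_prod fun q hq ↦ (hQ q hq).1]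
  have hdisj : Disjoint Q v.primeFactors := disjoint_left.2 fun q hq h ↦
    (hQ q hq).2 (Nat.dvd_of_mem_primeFactors h)
  have hmain := abs_sum_chiDivisorSum_modEq_sub_le (mul_ne_zero hm0 hv.ne') (hv4.mul_left m)
    (a := 1 + v * c) (by have := hv4.mul_right c; omega)
    (hcop.mul_right (by simp)) hDm (A := 1 + v * T₁) (B := 1 + v * T₂)
    (Nat.le_add_right 1 _) (by gcongr)
  have hv0 : (v : ℝ) ≠ 0 := by exact_mod_cast hv.ne'
  have hlen : (((1 + v * T₂ : ℕ) : ℝ) - (1 + v * T₁ : ℕ)) / (m * v : ℕ) = (T₂ - T₁) / m := by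
    push_cast
    rw [add_sub_add_left_eq_sub, ← mul_sub, mul_comm (v : ℝ), mul_div_mul_right _ _ hv0]
  rw [hlen, ← sum_linearForm_modEq hv, hpf, prod_union hdisj, card_union_of_disjoint hdisj] at hmain
  convert hmain using 1
  · rw [prod_div_distrib, ← Nat.cast_prod, ← hm]
    congr 2
    ring
  · ring

/-- The `r`-weighted proportion of `t` for which the prime `p` divides one of `K` linear forms:
it divides the form carrying the weight with probability `chiDensity p`, and each of the `K - 1`
others with probability `(1 - χ₄(p) / p) / p`. -/
noncomputable def formsDensity (K p : ℕ) : ℝ :=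
  (K - 1) * ((1 - chi p / p) / p) + chiDensity p

lemma IsSievable.abs_sum_chiDivisorSum_assignment_sub_le [DecidableEq ι] (hV : IsSievable I N V)
    (hS : ∀ q ∈ S, q.Prime ∧ N < q) {D : Finset ℕ} (hD : ∀ p ∈ D, p.Prime ∧ N < p)
    (hSD : Disjoint S D) (hT : T₁ ≤ T₂) {j : ι} (hj : j ∈ I) {f : S → ι} (hf : ∀ q, f q ∈ I) :
    |∑ t ∈ {t ∈ Ioc T₁ T₂ | ∀ p ∈ D, p ∣ linearForm V j t} with
          ∀ q : S, (q : ℕ) ∣ linearForm V (f q) t, chiDivisorSum (linearForm V j t) -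
      Real.pi / 2 * (T₂ - T₁) * (∏ p ∈ (V j).primeFactors, (1 - chi p / p)) *
        (∏ p ∈ D, chiDensity p) *
        ∏ q : S, (if f q = j then chiDensity q else (1 - chi q / q) / q)| ≤
      2 ^ #S * (7 * 2 ^ #(V j).primeFactors * (1 + V j * T₂).sqrt) := by
  set Q : Finset S := {q | f q ≠ j}
  set R : Finset S := {q | f q = j}
  have hprime : ∀ q : ℕ, q.Prime ∧ N < q → q.Prime ∧ ¬ q ∣ V j := fun q hq ↦
    ⟨hq.1, hV.not_dvd j hj q hq.1 hq.2⟩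
  have hsub : ∀ P : Finset S, P.map (.subtype _) ⊆ S := fun P q hq ↦ by
    obtain ⟨q, -, rfl⟩ := mem_map.1 hq
    exact q.2
  have hRD : Disjoint (R.map (.subtype _)) D := hSD.mono_left (hsub R)
  obtain ⟨c, hc⟩ := hV.exists_forall_dvd_iff_modEq hS hf Q
  have hmain := abs_sum_chiDivisorSum_linearForm_modEq_sub_le (c := c) (hV.pos j hj)
    (hV.four_dvd j hj) (Q := Q.map (.subtype _)) (D := R.map (.subtype _) ∪ D)
    (fun q hq ↦ hprime q (hS q (hsub Q hq)))
    (forall_mem_union.2 ⟨fun q hq ↦ hprime q (hS q (hsub R hq)), fun p hp ↦ hprime p (hD p hp)⟩)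
    (disjoint_union_right.2 ⟨(disjoint_map _).2 (disjoint_filter_filter_not _ _ _).symm,
      hSD.mono_left (hsub Q)⟩)
    (forall_mem_map.2 fun q hq h ↦ (mem_filter.1 hq).2 <|
      hV.eq_of_dvd q (hS q q.2).1 (hS q q.2).2 c _ (hf q) j hj ((hc c).2 rfl q hq) h) hT
  simp only [prod_union hRD, prod_map, card_map, forall_mem_union, forall_mem_map,
    Function.Embedding.subtype_apply, ← hc] at hmain
  have hfilter : ∀ t, ((∀ q ∈ Q, (q : ℕ) ∣ linearForm V (f q) t) ∧
      (∀ p ∈ R, (p : ℕ) ∣ 1 + V j * t) ∧ ∀ p ∈ D, p ∣ 1 + V j * t) ↔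
      (∀ p ∈ D, p ∣ linearForm V j t) ∧ ∀ q : S, (q : ℕ) ∣ linearForm V (f q) t := fun t ↦ by
    refine ⟨fun ⟨hQt, hRt, hDt⟩ ↦ ⟨hDt, fun q ↦ ?_⟩,
      fun ⟨hDt, h⟩ ↦ ⟨fun q _ ↦ h q, fun p hp ↦ ?_, hDt⟩⟩
    · by_cases hq : f q = j
      · simpa [linearForm, hq] using hRt q (mem_filter.2 ⟨mem_univ q, hq⟩)
      · exact hQt q (mem_filter.2 ⟨mem_univ q, hq⟩)
    · simpa [linearForm, (mem_filter.1 hp).2] using h p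
  simp only [hfilter] at hmain
  rw [filter_filter, prod_ite]
  convert! hmain.trans ?_ using 3
  · ring
  · gcongr
    · norm_num
    · simpa using Q.card_le_univ

theorem IsSievable.abs_sum_chiDivisorSum_sub_le (hV : IsSievable I N V)
    (hS : ∀ q ∈ S, q.Prime ∧ N < q) {D : Finset ℕ} (hD : ∀ p ∈ D, p.Prime ∧ N < p)
    (hSD : Disjoint S D) (hT : T₁ ≤ T₂) {j : ι} (hj : j ∈ I) :
    |∑ t ∈ {t ∈ Ioc T₁ T₂ | ∀ p ∈ D, p ∣ linearForm V j t} with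
          ∀ q ∈ S, ∃ i ∈ I, q ∣ linearForm V i t, chiDivisorSum (linearForm V j t) -
      Real.pi / 2 * (T₂ - T₁) * (∏ p ∈ (V j).primeFactors, (1 - chi p / p)) *
        (∏ p ∈ D, chiDensity p) * ∏ q ∈ S, formsDensity #I q| ≤
      (2 * #I) ^ #S * (7 * 2 ^ #(V j).primeFactors * (1 + V j * T₂).sqrt) := by
  classical
  have hdensity : ∀ q : ℕ, ∑ i ∈ I, (if i = j then chiDensity q else (1 - chi q / q) / q) =
      formsDensity #I q := fun q ↦ by
    rw [← insert_erase hj, sum_insert (notMem_erase j I), if_pos rfl,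
      sum_congr rfl fun i hi ↦ if_neg (mem_erase.1 hi).1, sum_const, card_erase_of_mem hj,
      insert_erase hj, nsmul_eq_mul, Nat.cast_pred (card_pos.2 ⟨j, hj⟩), formsDensity, add_comm]
  have hexpand := abs_sum_filter_forall_exists_sub_le
    (T := {t ∈ Ioc T₁ T₂ | ∀ p ∈ D, p ∣ linearForm V j t})
    (E := fun q i t ↦ q ∣ linearForm V i t)
    (g := fun q i ↦ if i = j then chiDensity q else (1 - chi q / q) / q)
    (fun q hq ↦ hV.eq_of_dvd q (hS q hq).1 (hS q hq).2)
    fun f hf ↦ hV.abs_sum_chiDivisorSum_assignment_sub_le hS hD hSD hT hj hf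
  rw [prod_congr rfl fun q _ ↦ hdensity q] at hexpand
  rwa [mul_pow, mul_comm (2 ^ _), mul_assoc ((#I : ℝ) ^ #S)]

end LinearForms

section DyadicSieve

open Finset

/-- The range of a sieve by the primes `N < p ≤ z`. -/
noncomputable def siftingPrimes (N : ℕ) (z : ℝ) : Finset ℕ := {p ∈ Ioc N ⌊z⌋₊ | p.Prime}

/-- The sieving levels `z ^ (1 / 2 ^ i)`, whose logarithms decrease geometrically, so that each of
the blocks of primes they delimit has bounded reciprocal sum. -/
noncomputable def sieveLevel (z : ℝ) (i : ℕ) : ℝ := z ^ ((1 / 2 : ℝ) ^ i)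

/-- The sifting primes between two consecutive sieving levels. -/
noncomputable def primeBlock (N : ℕ) (z : ℝ) (i : ℕ) : Finset ℕ :=
  {p ∈ siftingPrimes N z | sieveLevel z (i + 1) < p ∧ p ≤ sieveLevel z i}

variable {N : ℕ} {z : ℝ}

lemma mem_siftingPrimes {p : ℕ} (hz : 0 ≤ z) :
    p ∈ siftingPrimes N z ↔ (N < p ∧ (p : ℝ) ≤ z) ∧ p.Prime := by
  rw [siftingPrimes, mem_filter, mem_Ioc, Nat.le_floor_iff hz]

lemma prime_and_lt_of_mem_siftingPrimes {p : ℕ} (hp : p ∈ siftingPrimes N z) : p.Prime ∧ N < p :=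
  ⟨(mem_filter.1 hp).2, (mem_Ioc.1 (mem_filter.1 hp).1).1⟩

lemma primeBlock_subset (N : ℕ) (z : ℝ) (i : ℕ) : primeBlock N z i ⊆ siftingPrimes N z :=
  filter_subset _ _

@[simp]
lemma sieveLevel_zero (z : ℝ) : sieveLevel z 0 = z := by simp [sieveLevel]

lemma one_le_sieveLevel (hz : 1 ≤ z) (i : ℕ) : 1 ≤ sieveLevel z i :=
  Real.one_le_rpow hz (by positivity)

lemma log_sieveLevel (hz : 0 < z) (i : ℕ) :
    Real.log (sieveLevel z i) = (1 / 2 : ℝ) ^ i * Real.log z :=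
  Real.log_rpow hz _

lemma sieveLevel_antitone (hz : 1 ≤ z) : Antitone (sieveLevel z) := fun _ _ h ↦
  Real.rpow_le_rpow_of_exponent_le hz (pow_le_pow_of_le_one (by norm_num) (by norm_num) h)

lemma pairwise_disjoint_primeBlock (hz : 1 ≤ z) :
    Pairwise (Function.onFun Disjoint (primeBlock N z)) := by
  have hlt : ∀ i j, i < j → Disjoint (primeBlock N z i) (primeBlock N z j) := fun i j hij ↦
    disjoint_left.2 fun p hi hj ↦ ((mem_filter.1 hi).2.1.trans_le (mem_filter.1 hj).2.2).not_ge
      (sieveLevel_antitone hz hij)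
  exact fun i j hij ↦ hij.lt_or_gt.elim (hlt i j) fun h ↦ (hlt j i h).symm

lemma biUnion_primeBlock (hz : 1 ≤ z) {m : ℕ} (hm : sieveLevel z m ≤ N) :
    univ.biUnion (fun i : Fin m ↦ primeBlock N z i) = siftingPrimes N z := by
  refine Subset.antisymm (biUnion_subset.2 fun i _ ↦ primeBlock_subset N z i) fun p hp ↦ ?_
  obtain ⟨⟨hNp, hpz⟩, -⟩ := (mem_siftingPrimes (by linarith)).1 hp
  have hmp : sieveLevel z m < p := hm.trans_lt (by exact_mod_cast hNp)
  have hex : ∃ i, sieveLevel z i < p := ⟨m, hmp⟩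
  obtain ⟨i, hi⟩ : ∃ i, Nat.find hex = i + 1 := Nat.exists_eq_succ_of_ne_zero fun h ↦ by
    have := h ▸ Nat.find_spec hex
    rw [sieveLevel_zero] at this
    linarith
  refine mem_biUnion.2 ⟨⟨i, ?_⟩, mem_univ _, mem_filter.2 ⟨hp, hi ▸ Nat.find_spec hex, ?_⟩⟩
  · have := Nat.find_le (h := hex) hmp
    omega
  · exact not_lt.1 (Nat.find_min hex (by omega : i < Nat.find hex))

lemma sum_primeBlock_one_div_le (hN : 8 ≤ N) (hz : 1 ≤ z) (i : ℕ) :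
    ∑ p ∈ primeBlock N z i, 1 / (p : ℝ) ≤ 8 := by
  obtain h | ⟨q, hq⟩ := (primeBlock N z i).eq_empty_or_nonempty
  · simp [h]
  have hz0 : 0 < z := by linarith
  have hlevel : 8 ≤ sieveLevel z i := by
    have hNq : N < q := (prime_and_lt_of_mem_siftingPrimes (mem_filter.1 hq).1).2
    have : (8 : ℝ) ≤ q := by exact_mod_cast hN.trans hNq.le
    exact this.trans (mem_filter.1 hq).2.2
  have hlog : 2 ≤ Real.log (sieveLevel z i) := by
    rw [Real.le_log_iff_exp_le (by linarith), show (2 : ℝ) = 1 + 1 by norm_num, Real.exp_add]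
    nlinarith [Real.exp_pos 1, Real.exp_one_lt_d9]
  have hhalf : Real.log (sieveLevel z (i + 1)) = Real.log (sieveLevel z i) / 2 := by
    rw [log_sieveLevel hz0, log_sieveLevel hz0, pow_succ]
    ring
  set x := ⌊sieveLevel z i⌋₊
  have hx1 : 1 ≤ x := Nat.le_floor (by push_cast; linarith)
  have hlogx : Real.log x ≤ Real.log (sieveLevel z i) :=
    Real.log_le_log (by exact_mod_cast hx1) (Nat.floor_le (by linarith))
  have hweighted : Real.log (sieveLevel z (i + 1)) * ∑ p ∈ primeBlock N z i, 1 / (p : ℝ) ≤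
      ∑ p ∈ Ioc 0 x with p.Prime, Real.log p / p := by
    rw [mul_sum]
    refine (sum_le_sum fun p hp ↦ ?_).trans (sum_le_sum_of_subset_of_nonneg (fun p hp ↦ ?_)
      fun p _ _ ↦ div_nonneg (Real.log_natCast_nonneg p) p.cast_nonneg)
    · rw [mul_one_div]
      gcongr
      · linarith [one_le_sieveLevel hz (i + 1)]
      · exact (mem_filter.1 hp).2.1.le
    · have hprime := (prime_and_lt_of_mem_siftingPrimes (mem_filter.1 hp).1).1
      exact mem_filter.2 ⟨mem_Ioc.2 ⟨hprime.pos, Nat.le_floor (mem_filter.1 hp).2.2⟩, hprime⟩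
  refine le_of_mul_le_mul_left ?_ (by linarith : 0 < Real.log (sieveLevel z (i + 1)))
  linarith [sum_primes_log_div_le (x := x) (by omega)]

lemma exp_neg_two_mul_le_one_sub {x : ℝ} (hx : x ∈ Set.Icc 0 (1 / 2)) :
    Real.exp (-(2 * x)) ≤ 1 - x := by
  obtain ⟨h0, h1⟩ := hx
  rw [Real.exp_neg, inv_le_iff_one_le_mul₀ (Real.exp_pos _)]
  nlinarith [Real.add_one_le_exp (2 * x)]

lemma exp_neg_two_mul_le_prod_one_sub {ι : Type*} {B : Finset ι} {g : ι → ℝ}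
    (hg : ∀ p ∈ B, g p ∈ Set.Icc 0 (1 / 2)) {Λ : ℝ} (hΛ : ∑ p ∈ B, g p ≤ Λ) :
    Real.exp (-(2 * Λ)) ≤ ∏ p ∈ B, (1 - g p) :=
  calc Real.exp (-(2 * Λ)) ≤ Real.exp (∑ p ∈ B, -(2 * g p)) := by
        rw [sum_neg_distrib, ← mul_sum]
        gcongr
    _ = ∏ p ∈ B, Real.exp (-(2 * g p)) := Real.exp_sum _ _
    _ ≤ ∏ p ∈ B, (1 - g p) :=
      prod_le_prod (fun _ _ ↦ (Real.exp_pos _).le) fun p hp ↦ exp_neg_two_mul_le_one_sub (hg p hp)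

lemma elemSymm_le_exp_neg {ι : Type*} {B : Finset ι} {g : ι → ℝ} (hg : ∀ p ∈ B, 0 ≤ g p) {Λ : ℝ}
    (hΛ : ∑ p ∈ B, g p ≤ Λ) {n : ℕ} (hn : 21 * Λ ≤ n) :
    elemSymm g B n ≤ Real.exp (-(2 * n)) := by
  have hexp : Real.exp 1 ^ 3 ≤ 21 :=
    (pow_le_pow_left₀ (Real.exp_pos 1).le (b := 2.72) (by linarith [Real.exp_one_lt_d9]) 3).trans
      (by norm_num)
  have hsum := sum_nonneg hg
  have hfact : (0 : ℝ) < n.factorial := by exact_mod_cast n.factorial_pos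
  have hpow : (n : ℝ) ^ n ≤ n.factorial * Real.exp 1 ^ n := by
    rw [← Real.exp_nat_mul, mul_one]
    exact (div_le_iff₀' hfact).1 (Real.pow_div_factorial_le_exp n n.cast_nonneg n)
  have hchain : n.factorial * (elemSymm g B n * (Real.exp 1 ^ 3) ^ n) ≤
      n.factorial * Real.exp 1 ^ n := by
    calc n.factorial * (elemSymm g B n * (Real.exp 1 ^ 3) ^ n)
        ≤ (∑ p ∈ B, g p) ^ n * 21 ^ n := by
          rw [← mul_assoc]
          gcongr
          exact factorial_mul_elemSymm_le_pow hg n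
      _ ≤ (n : ℝ) ^ n := by
          rw [← mul_pow]
          gcongr
          linarith
      _ ≤ n.factorial * Real.exp 1 ^ n := hpow
  have hcancel := le_of_mul_le_mul_left hchain hfact
  rw [← le_div_iff₀ (by positivity), ← div_pow] at hcancel
  refine hcancel.trans_eq ?_
  rw [← Real.exp_nat_mul, ← Real.exp_sub, ← Real.exp_nat_mul]
  congr 1
  push_cast
  ring

lemma sum_coe_mul_half_pow_le_two (m : ℕ) : ∑ i ∈ range m, (i : ℝ) * (1 / 2) ^ i ≤ 2 := by
  have hsum := hasSum_coe_mul_geometric_of_norm_lt_one (r := (1 / 2 : ℝ)) (by norm_num)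
  refine (sum_le_hasSum _ (fun i _ ↦ by positivity) hsum).trans_eq ?_
  norm_num

/-- Half the depth to which the sieve is carried out in the `i`-th block of primes, for a sieve of
dimension about `K`. -/
def sieveDepth (K i : ℕ) : ℕ := 200 * K + i

variable {K : ℕ}

lemma prod_sieveLevel_pow_le (hK : 1 ≤ K) (hz : 1 ≤ z) (m : ℕ) :
    ∏ i : Fin m, sieveLevel z i ^ (2 * sieveDepth K i + 1) ≤ z ^ (1000 * K) := by
  have hexponent : ∀ i, sieveLevel z i ^ (2 * sieveDepth K i + 1) =
      z ^ ((400 * K + 1) * (1 / 2 : ℝ) ^ i + 2 * (i * (1 / 2 : ℝ) ^ i)) := fun i ↦ by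
    rw [sieveLevel, ← Real.rpow_mul_natCast (by linarith), sieveDepth]
    congr 1
    push_cast
    ring
  rw [Fin.prod_univ_eq_prod_range (fun i ↦ sieveLevel z i ^ (2 * sieveDepth K i + 1)) m,
    prod_congr rfl fun i _ ↦ hexponent i, ← Real.rpow_sum_of_pos (by linarith),
    ← Real.rpow_natCast]
  refine Real.rpow_le_rpow_of_exponent_le hz ?_
  have hK1 : (1 : ℝ) ≤ K := by exact_mod_cast hK
  rw [sum_add_distrib, ← mul_sum, ← mul_sum]
  push_cast
  nlinarith [sum_geometric_two_le m, sum_coe_mul_half_pow_le_two m]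

lemma card_primeBlock_add_one_le (hz : 1 ≤ z) (i : ℕ) :
    (#(primeBlock N z i) : ℝ) + 1 ≤ sieveLevel z i := by
  have hlevel := one_le_sieveLevel hz i
  have hsub : primeBlock N z i ⊆ Ioc 1 ⌊sieveLevel z i⌋₊ := fun p hp ↦ mem_Ioc.2
    ⟨(prime_and_lt_of_mem_siftingPrimes (mem_filter.1 hp).1).1.one_lt,
      Nat.le_floor (mem_filter.1 hp).2.2⟩
  have hcard := card_le_card hsub
  rw [Nat.card_Ioc] at hcard
  have hfloor : #(primeBlock N z i) + 1 ≤ ⌊sieveLevel z i⌋₊ := by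
    have : 1 ≤ ⌊sieveLevel z i⌋₊ := Nat.le_floor (by simpa using hlevel)
    omega
  exact_mod_cast (Nat.le_floor_iff (by linarith)).1 hfloor

lemma prod_le_pow_of_card_inter_primeBlock_le (hK : 1 ≤ K) (hz : 1 ≤ z) {m : ℕ}
    (hm : sieveLevel z m ≤ N) {S : Finset ℕ} (hS : S ⊆ siftingPrimes N z)
    (hcard : ∀ i : Fin m, #(S ∩ primeBlock N z i) ≤ 2 * sieveDepth K i + 1) :
    ∏ p ∈ S, (p : ℝ) ≤ z ^ (1000 * K) := by
  refine le_trans ?_ (prod_sieveLevel_pow_le hK hz m)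
  have hunion : univ.biUnion (fun i : Fin m ↦ S ∩ primeBlock N z i) = S := by
    rw [← inter_biUnion, biUnion_primeBlock hz hm, inter_eq_left.2 hS]
  rw [← hunion, prod_biUnion fun i _ j _ hij ↦
    (pairwise_disjoint_primeBlock hz (Fin.val_injective.ne hij)).mono inter_subset_right
      inter_subset_right]
  refine prod_le_prod (fun _ _ ↦ prod_nonneg fun _ _ ↦ Nat.cast_nonneg _) fun i _ ↦ ?_
  calc ∏ p ∈ S ∩ primeBlock N z i, (p : ℝ)
      ≤ ∏ _p ∈ S ∩ primeBlock N z i, sieveLevel z i :=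
        prod_le_prod (fun _ _ ↦ Nat.cast_nonneg _) fun _ hp ↦ (mem_filter.1 (mem_inter.1 hp).2).2.2
    _ = sieveLevel z i ^ #(S ∩ primeBlock N z i) := prod_const _
    _ ≤ sieveLevel z i ^ (2 * sieveDepth K i + 1) :=
        pow_le_pow_right₀ (one_le_sieveLevel hz i) (hcard i)

lemma siftingDensity_mem_Icc (hKN : 4 * K ≤ N) {g : ℕ → ℝ}
    (hg : ∀ p ∈ siftingPrimes N z, g p ∈ Set.Icc 0 (2 * K / p : ℝ)) :
    ∀ p ∈ siftingPrimes N z, g p ∈ Set.Icc 0 (1 / 2) := fun p hp ↦ by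
  refine ⟨(hg p hp).1, (hg p hp).2.trans ?_⟩
  have hNp := (prime_and_lt_of_mem_siftingPrimes hp).2
  have hKp : (4 * K : ℝ) < p := by exact_mod_cast hKN.trans_lt hNp
  rw [div_le_iff₀ (by exact_mod_cast hNp.pos)]
  linarith

lemma sum_primeBlock_le (hN : 8 ≤ N) (hz : 1 ≤ z) {g : ℕ → ℝ}
    (hg : ∀ p ∈ siftingPrimes N z, g p ∈ Set.Icc 0 (2 * K / p : ℝ)) (i : ℕ) :
    ∑ p ∈ primeBlock N z i, g p ≤ 16 * K :=
  calc ∑ p ∈ primeBlock N z i, g p ≤ ∑ p ∈ primeBlock N z i, 2 * K * (1 / (p : ℝ)) :=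
        sum_le_sum fun p hp ↦ by
          rw [mul_one_div]
          exact (hg p (primeBlock_subset N z i hp)).2
    _ = 2 * K * ∑ p ∈ primeBlock N z i, 1 / (p : ℝ) := (mul_sum ..).symm
    _ ≤ 2 * K * 8 := by
        gcongr
        exact sum_primeBlock_one_div_le hN hz i
    _ = 16 * K := by ring

lemma exp_neg_le_prod_primeBlock (hN : 8 ≤ N) (hKN : 4 * K ≤ N) (hz : 1 ≤ z) {g : ℕ → ℝ}
    (hg : ∀ p ∈ siftingPrimes N z, g p ∈ Set.Icc 0 (2 * K / p : ℝ)) (i : ℕ) :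
    Real.exp (-(2 * (16 * K))) ≤ ∏ p ∈ primeBlock N z i, (1 - g p) :=
  exp_neg_two_mul_le_prod_one_sub
    (fun p hp ↦ siftingDensity_mem_Icc hKN hg p (primeBlock_subset N z i hp))
    (sum_primeBlock_le hN hz hg i)

theorem exp_neg_le_prod_siftingPrimes (hN : 8 ≤ N) (hKN : 4 * K ≤ N) (hz : 1 ≤ z) {m : ℕ}
    (hm : sieveLevel z m ≤ N) {g : ℕ → ℝ}
    (hg : ∀ p ∈ siftingPrimes N z, g p ∈ Set.Icc 0 (2 * K / p : ℝ)) :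
    Real.exp (-(32 * K * m)) ≤ ∏ p ∈ siftingPrimes N z, (1 - g p) := by
  have hdisj : Pairwise (Function.onFun Disjoint fun i : Fin m ↦ primeBlock N z i) :=
    fun _ _ hij ↦ pairwise_disjoint_primeBlock hz (Fin.val_injective.ne hij)
  rw [← biUnion_primeBlock hz hm, prod_biUnion (hdisj.set_pairwise _)]
  calc Real.exp (-(32 * K * m)) = ∏ _i : Fin m, Real.exp (-(2 * (16 * K))) := by
        rw [prod_const, card_univ, Fintype.card_fin, ← Real.exp_nat_mul]
        congr 1
        ring
    _ ≤ ∏ i : Fin m, ∏ p ∈ primeBlock N z i, (1 - g p) :=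
        prod_le_prod (fun _ _ ↦ (Real.exp_pos _).le) fun i _ ↦
          exp_neg_le_prod_primeBlock hN hKN hz hg i

lemma elemSymm_primeBlock_le (hN : 8 ≤ N) (hKN : 4 * K ≤ N) (hz : 1 ≤ z) {g : ℕ → ℝ}
    (hg : ∀ p ∈ siftingPrimes N z, g p ∈ Set.Icc 0 (2 * K / p : ℝ)) (i : ℕ) :
    elemSymm g (primeBlock N z i) (2 * sieveDepth K i + 1) ≤
      Real.exp (-(2 * sieveDepth K i + 1 : ℕ)) * ∏ p ∈ primeBlock N z i, (1 - g p) := by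
  have hdepth : 400 * K ≤ 2 * sieveDepth K i + 1 := by
    unfold sieveDepth
    omega
  generalize 2 * sieveDepth K i + 1 = n at hdepth ⊢
  have hdepth' : (400 * K : ℝ) ≤ n := by exact_mod_cast hdepth
  calc elemSymm g (primeBlock N z i) n ≤ Real.exp (-(2 * n)) :=
        elemSymm_le_exp_neg (fun p hp ↦ (hg p (primeBlock_subset N z i hp)).1)
          (sum_primeBlock_le hN hz hg i) (by linarith [K.cast_nonneg (α := ℝ)])
    _ ≤ Real.exp (-n) * Real.exp (-(2 * (16 * K))) := by
        rw [← Real.exp_add]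
        gcongr
        linarith [K.cast_nonneg (α := ℝ)]
    _ ≤ Real.exp (-n) * ∏ p ∈ primeBlock N z i, (1 - g p) := by
        gcongr
        exact exp_neg_le_prod_primeBlock hN hKN hz hg i

lemma sum_exp_neg_sieveDepth_le (hK : 1 ≤ K) (m : ℕ) :
    ∑ i : Fin m, Real.exp (-(2 * sieveDepth K i + 1 : ℕ)) ≤ 1 / 512 := by
  have hterm : ∀ i, Real.exp (-(2 * sieveDepth K i + 1 : ℕ)) ≤ 1 / 1024 * (1 / 2) ^ i := fun i ↦
    calc Real.exp (-(2 * sieveDepth K i + 1 : ℕ))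
        = Real.exp (-1) ^ (2 * sieveDepth K i + 1) := by
          rw [← Real.exp_nat_mul, mul_neg_one]
      _ ≤ (1 / 2) ^ (2 * sieveDepth K i + 1) := by
          gcongr
          rw [Real.exp_neg, ← one_div]
          gcongr
          linarith [Real.add_one_le_exp 1]
      _ ≤ (1 / 2) ^ (10 + i) := by
          refine pow_le_pow_of_le_one (by norm_num) (by norm_num) ?_
          unfold sieveDepth
          omega
      _ = 1 / 1024 * (1 / 2) ^ i := by
          rw [pow_add]
          norm_num
  rw [Fin.sum_univ_eq_sum_range (fun i ↦ Real.exp (-(2 * sieveDepth K i + 1 : ℕ))) m]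
  refine (sum_le_sum fun i _ ↦ hterm i).trans ?_
  rw [← mul_sum]
  linarith [sum_geometric_two_le m]

theorem abs_sum_sifted_sub_le (hK : 1 ≤ K) (hN : 8 ≤ N) (hKN : 4 * K ≤ N) (hz : 1 ≤ z) {m : ℕ}
    (hm : sieveLevel z m ≤ N) {g : ℕ → ℝ}
    (hg : ∀ p ∈ siftingPrimes N z, g p ∈ Set.Icc 0 (2 * K / p : ℝ)) {τ : Type*}
    {E : ℕ → τ → Prop} [DecidableRel E] {T : Finset τ} {φ : τ → ℝ} (hφ : ∀ t ∈ T, 0 ≤ φ t)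
    {M err : ℝ} (hM : 0 ≤ M) (herr0 : 0 ≤ err)
    (herr : ∀ S ⊆ siftingPrimes N z, ∏ p ∈ S, (p : ℝ) ≤ z ^ (1000 * K) →
      |∑ t ∈ T with ∀ p ∈ S, E p t, φ t - M * ∏ p ∈ S, g p| ≤ err) :
    |∑ t ∈ T with ∀ p ∈ siftingPrimes N z, ¬ E p t, φ t - M * ∏ p ∈ siftingPrimes N z, (1 - g p)| ≤
      1 / 100 * (M * ∏ p ∈ siftingPrimes N z, (1 - g p)) + (m + 1) * z ^ (1000 * K) * err := by
  have hsieve := brunHooley_sieve (biUnion_primeBlock hz hm)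
    (fun i j hij ↦ pairwise_disjoint_primeBlock hz (Fin.val_injective.ne hij))
    (k := fun i : Fin m ↦ sieveDepth K i)
    (fun i p hp ↦ Set.Icc_subset_Icc_right (by norm_num)
      (siftingDensity_mem_Icc hKN hg p (primeBlock_subset N z i hp)))
    (fun _ ↦ (Real.exp_pos _).le) (fun i ↦ elemSymm_primeBlock_le hN hKN hz hg i) E hφ hM
    fun S hS hcard ↦ herr S hS (prod_le_pow_of_card_inter_primeBlock_le hK hz hm hS hcard)
  refine hsieve.trans ?_
  rw [Fintype.card_fin]
  have hmain : 0 ≤ M * ∏ p ∈ siftingPrimes N z, (1 - g p) :=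
    mul_nonneg hM ((Real.exp_pos _).le.trans (exp_neg_le_prod_siftingPrimes hN hKN hz hm hg))
  have hη := sum_exp_neg_sieveDepth_le hK m
  gcongr ?_ * _ + (_ + 1) * ?_ * _
  · refine (mul_le_mul hη (Real.exp_le_exp.2 (hη.trans (by norm_num : _ ≤ (1 : ℝ))))
      (Real.exp_pos _).le (by norm_num)).trans ?_
    linarith [Real.exp_one_lt_d9]
  · refine le_trans ?_ (prod_sieveLevel_pow_le hK hz m)
    gcongr with i
    exact card_primeBlock_add_one_le hz i

end DyadicSieve

section SiftedSet

open Finset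

lemma abs_chi_div_prime_le {p : ℕ} (hp : p.Prime) : |chi p / p| ≤ 1 / 2 := by
  rcases hp.eq_two_or_odd with rfl | hodd
  · simpa using by norm_num [chi_two_mul 1]
  · have hp3 : (3 : ℝ) ≤ p := by
      have := hp.two_le
      exact_mod_cast (by omega : 3 ≤ p)
    rw [abs_div, Nat.abs_cast, div_le_iff₀ (by linarith)]
    linarith [abs_chi_le_one p]

lemma one_sub_chi_div_prime_pos {p : ℕ} (hp : p.Prime) : 0 < 1 - chi p / p := by
  linarith [(abs_le.1 (abs_chi_div_prime_le hp)).2]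

lemma chiDensity_nonneg {p : ℕ} (hp : p.Prime) : 0 ≤ chiDensity p := by
  have hp1 : (1 : ℝ) ≤ p := by exact_mod_cast hp.one_le
  have hdensity : chiDensity p = (p + (p - 1) * chi p) / p ^ 2 := by
    rw [chiDensity]
    field_simp [hp.ne_zero]
  rw [hdensity]
  exact div_nonneg (by nlinarith [neg_one_le_chi p]) (sq_nonneg _)

lemma one_sub_formsDensity (K : ℕ) {p : ℕ} (hp : p.Prime) :
    1 - formsDensity K p = (1 - chi p / p) * (1 - K / p) := by
  have hp0 : (p : ℝ) ≠ 0 := by exact_mod_cast hp.ne_zero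
  rw [formsDensity, chiDensity]
  field_simp
  ring

lemma formsDensity_mem_Icc {K p : ℕ} (hK : 1 ≤ K) (hp : p.Prime) :
    formsDensity K p ∈ Set.Icc 0 (2 * K / p : ℝ) := by
  have hK1 : (1 : ℝ) ≤ K := by exact_mod_cast hK
  have hp1 : (1 : ℝ) ≤ p := by exact_mod_cast hp.one_le
  have hp0 : (0 : ℝ) < p := by linarith
  constructor
  · exact add_nonneg (mul_nonneg (by linarith)
      (div_nonneg (one_sub_chi_div_prime_pos hp).le hp0.le)) (chiDensity_nonneg hp)
  · have hdensity : formsDensity K p =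
        ((K - 1) * (1 - chi p / p) + (1 + (1 - 1 / p) * chi p)) / p := by
      rw [formsDensity, chiDensity]
      field_simp
    have hinv : 1 / (p : ℝ) ∈ Set.Icc 0 1 :=
      ⟨by positivity, (div_le_one hp0).2 hp1⟩
    rw [hdensity]
    gcongr
    nlinarith [(abs_le.1 (abs_chi_div_prime_le hp)).1, chi_le_one p, hinv.1, hinv.2]

lemma natCast_div_mem_Icc (K p : ℕ) : (K / p : ℝ) ∈ Set.Icc 0 (2 * K / p : ℝ) := by
  refine ⟨by positivity, ?_⟩
  gcongr
  linarith [K.cast_nonneg (α := ℝ)]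

/-- The parameters of the sieve: finitely many linear forms `1 + Vᵢ t`, considered for
`t ∈ (T₁, T₂]` and sieved by the primes in `(N, z]`. The primes up to `N` divide every coefficient
`Vᵢ`, so they never divide a value of a form; the sieving range splits into `m` blocks
`(z ^ (1 / 2 ^ (i + 1)), z ^ (1 / 2 ^ i)]`; and `z` is a small power of the values of the forms,
with an exponent inversely proportional to the number of forms. -/
structure IsSieveSetup {ι : Type*} (I : Finset ι) (N : ℕ) (V : ι → ℕ) (z : ℝ) (m T₁ T₂ : ℕ) :
    Prop where
  isSievable : IsSievable I N V
  primeFactors_eq : ∀ i ∈ I, (V i).primeFactors = {p ∈ Ioc 0 N | p.Prime}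
  nonempty : I.Nonempty
  eight_le : 8 ≤ N
  four_mul_card_le : 4 * #I ≤ N
  natCast_le : (N : ℝ) ≤ z
  sieveLevel_le : sieveLevel z m ≤ N
  le : T₁ ≤ T₂
  linearForm_le : ∀ i ∈ I, (linearForm V i T₂ : ℝ) ≤ z ^ (60000 * #I)

/-- The `t ∈ (T₁, T₂]` for which no linear form has a prime factor in `(N, z]`. -/
noncomputable def siftedSet {ι : Type*} (I : Finset ι) (N : ℕ) (V : ι → ℕ) (z : ℝ) (T₁ T₂ : ℕ) :
    Finset ℕ :=
  {t ∈ Ioc T₁ T₂ | ∀ q ∈ siftingPrimes N z, ¬ ∃ i ∈ I, q ∣ linearForm V i t}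

/-- The expected proportion of `t` surviving the sieve of `K` linear forms by the primes in
`(N, z]`. -/
noncomputable def siftedDensity (K N : ℕ) (z : ℝ) : ℝ :=
  ∏ p ∈ siftingPrimes N z, (1 - K / p : ℝ)

/-- The expected mean of `r` over the integers congruent to `1` modulo `4` that have no prime
factor up to `z`. -/
noncomputable def roughMean (z : ℝ) : ℝ :=
  Real.pi / 2 * ∏ p ∈ Ioc 0 ⌊z⌋₊ with p.Prime, (1 - chi p / p)

/-- The error term of the sieve of `K` linear forms, see `IsSieveSetup`. -/
noncomputable def sieveError (K N : ℕ) (z : ℝ) (m : ℕ) : ℝ :=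
  (m + 1) * z ^ (1000 * K) * (z ^ (1000 * K) * (7 * 2 ^ N * z ^ (30000 * K)))

lemma pow_card_le_prod_natCast {c : ℝ} (hc : 0 ≤ c) {S : Finset ℕ} (h : ∀ p ∈ S, c ≤ p) :
    c ^ #S ≤ ∏ p ∈ S, (p : ℝ) := by
  rw [← prod_const]
  exact prod_le_prod (fun _ _ ↦ hc) h

namespace IsSieveSetup

variable {ι : Type*} {I : Finset ι} {N : ℕ} {V : ι → ℕ} {z : ℝ} {m T₁ T₂ : ℕ} {j : ι}
  (h : IsSieveSetup I N V z m T₁ T₂)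

include h

lemma eight_le_z : 8 ≤ z := le_trans (by exact_mod_cast h.eight_le) h.natCast_le

lemma one_le_z : 1 ≤ z := by linarith [h.eight_le_z]

lemma sieveError_nonneg : 0 ≤ sieveError #I N z m := by
  have := h.one_le_z
  unfold sieveError
  positivity

lemma length_nonneg : (0 : ℝ) ≤ T₂ - T₁ := sub_nonneg.2 (by exact_mod_cast h.le)

lemma two_mul_card_pow_le {S : Finset ℕ} (hS : S ⊆ siftingPrimes N z)
    (hprod : ∏ p ∈ S, (p : ℝ) ≤ z ^ (1000 * #I)) : (2 * #I : ℝ) ^ #S ≤ z ^ (1000 * #I) :=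
  (pow_card_le_prod_natCast (by positivity) fun p hp ↦ by
    have := h.four_mul_card_le.trans (prime_and_lt_of_mem_siftingPrimes (hS hp)).2.le
    exact_mod_cast (by omega : 2 * #I ≤ p)).trans hprod

lemma exp_neg_le_siftedDensity : Real.exp (-(32 * #I * m)) ≤ siftedDensity #I N z :=
  exp_neg_le_prod_siftingPrimes h.eight_le h.four_mul_card_le h.one_le_z h.sieveLevel_le
    fun p _ ↦ natCast_div_mem_Icc #I p

theorem abs_card_siftedSet_sub_le :
    |#(siftedSet I N V z T₁ T₂) - (T₂ - T₁) * siftedDensity #I N z| ≤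
      1 / 100 * ((T₂ - T₁) * siftedDensity #I N z) + sieveError #I N z m := by
  have hz := h.one_le_z
  have hsieve := abs_sum_sifted_sub_le (T := Ioc T₁ T₂)
    (E := fun q t ↦ ∃ i ∈ I, q ∣ linearForm V i t) (φ := 1) (g := fun p ↦ #I / p)
    (err := z ^ (1000 * #I) * (7 * 2 ^ N * z ^ (30000 * #I))) h.nonempty.card_pos h.eight_le
    h.four_mul_card_le hz h.sieveLevel_le (fun p _ ↦ natCast_div_mem_Icc #I p)
    (fun _ _ ↦ zero_le_one) h.length_nonneg (by positivity) fun S hS hprod ↦ by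
      have hcount := h.isSievable.abs_card_sub_le
        (fun q hq ↦ prime_and_lt_of_mem_siftingPrimes (hS hq)) h.le
      simp only [Pi.one_apply, sum_const, nsmul_one]
      calc _ ≤ (#I : ℝ) ^ #S := hcount
        _ ≤ (2 * #I) ^ #S := by
            gcongr
            linarith [(#I).cast_nonneg (α := ℝ)]
        _ ≤ z ^ (1000 * #I) := h.two_mul_card_pow_le hS hprod
        _ ≤ z ^ (1000 * #I) * (7 * 2 ^ N * z ^ (30000 * #I)) :=
            le_mul_of_one_le_right (by positivity) <| one_le_mul_of_one_le_of_one_le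
              (by linarith [one_le_pow₀ (n := N) (one_le_two (α := ℝ))]) (one_le_pow₀ hz)
  simpa only [siftedSet, siftedDensity, sieveError, Pi.one_apply, sum_const, nsmul_one] using hsieve

lemma prod_one_sub_formsDensity (hj : j ∈ I) :
    (∏ p ∈ (V j).primeFactors, (1 - chi p / p)) *
        ∏ p ∈ siftingPrimes N z, (1 - formsDensity #I p) =
      (∏ p ∈ Ioc 0 ⌊z⌋₊ with p.Prime, (1 - chi p / p)) * siftedDensity #I N z := by
  have hdisj : Disjoint {p ∈ Ioc 0 N | p.Prime} (siftingPrimes N z) :=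
    disjoint_filter_filter (Ioc_disjoint_Ioc_of_le le_rfl)
  have hunion : {p ∈ Ioc 0 ⌊z⌋₊ | p.Prime} = {p ∈ Ioc 0 N | p.Prime} ∪ siftingPrimes N z := by
    rw [siftingPrimes, ← filter_union, Ioc_union_Ioc_eq_Ioc N.zero_le (Nat.le_floor h.natCast_le)]
  rw [hunion, prod_union hdisj, h.primeFactors_eq j hj, mul_assoc, siftedDensity,
    ← prod_mul_distrib]
  congr 1
  exact prod_congr rfl fun p hp ↦
    one_sub_formsDensity _ (prime_and_lt_of_mem_siftingPrimes hp).1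

lemma hyperbola_error_le (hj : j ∈ I) :
    (7 * 2 ^ #(V j).primeFactors * (1 + V j * T₂).sqrt : ℝ) ≤ 7 * 2 ^ N * z ^ (30000 * #I) := by
  have hz := h.one_le_z
  have hcard : #(V j).primeFactors ≤ N := by
    rw [h.primeFactors_eq j hj]
    exact (card_filter_le _ _).trans (by simp)
  have hsqrt : ((1 + V j * T₂).sqrt : ℝ) ≤ z ^ (30000 * #I) := by
    refine le_trans Real.nat_sqrt_le_real_sqrt (Real.sqrt_le_iff.2 ⟨by positivity, ?_⟩)
    rw [← pow_mul]
    exact (h.linearForm_le j hj).trans_eq (by ring)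
  gcongr
  norm_num

theorem abs_sum_chiDivisorSum_siftedSet_sub_le (hj : j ∈ I) {D : Finset ℕ}
    (hD : ∀ p ∈ D, p.Prime ∧ z < p) :
    |∑ t ∈ siftedSet I N V z T₁ T₂ with ∀ p ∈ D, p ∣ linearForm V j t,
        chiDivisorSum (linearForm V j t) -
      roughMean z * ((T₂ - T₁) * siftedDensity #I N z) * ∏ p ∈ D, chiDensity p| ≤
      1 / 100 * (roughMean z * ((T₂ - T₁) * siftedDensity #I N z) * ∏ p ∈ D, chiDensity p) +
        sieveError #I N z m := by
  have hz := h.one_le_z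
  have hDN : ∀ p ∈ D, p.Prime ∧ N < p := fun p hp ↦
    ⟨(hD p hp).1, by exact_mod_cast h.natCast_le.trans_lt (hD p hp).2⟩
  have hdisj : Disjoint (siftingPrimes N z) D := disjoint_left.2 fun p hp hpD ↦
    ((mem_siftingPrimes (by linarith)).1 hp).1.2.not_gt (hD p hpD).2
  have hM : 0 ≤ Real.pi / 2 * (T₂ - T₁) * (∏ p ∈ (V j).primeFactors, (1 - chi p / p)) *
      ∏ p ∈ D, chiDensity p :=
    mul_nonneg (mul_nonneg (mul_nonneg (by positivity) h.length_nonneg) <| prod_nonneg fun p hp ↦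
      (one_sub_chi_div_prime_pos (Nat.prime_of_mem_primeFactors hp)).le) <|
      prod_nonneg fun p hp ↦ chiDensity_nonneg (hD p hp).1
  have hsieve := abs_sum_sifted_sub_le (T := {t ∈ Ioc T₁ T₂ | ∀ p ∈ D, p ∣ linearForm V j t})
    (E := fun q t ↦ ∃ i ∈ I, q ∣ linearForm V i t) (φ := fun t ↦ chiDivisorSum (linearForm V j t))
    (err := z ^ (1000 * #I) * (7 * 2 ^ N * z ^ (30000 * #I))) h.nonempty.card_pos h.eight_le
    h.four_mul_card_le hz h.sieveLevel_le
    (fun p hp ↦ formsDensity_mem_Icc h.nonempty.card_pos (prime_and_lt_of_mem_siftingPrimes hp).1)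
    (fun _ _ ↦ chiDivisorSum_nonneg _) hM (by positivity) fun S hS hprod ↦
      (h.isSievable.abs_sum_chiDivisorSum_sub_le
        (fun q hq ↦ prime_and_lt_of_mem_siftingPrimes (hS hq)) hDN (hdisj.mono_left hS) h.le
        hj).trans <| mul_le_mul (h.two_mul_card_pow_le hS hprod) (h.hyperbola_error_le hj)
          (by positivity) (by positivity)
  have hmain : Real.pi / 2 * (T₂ - T₁) * (∏ p ∈ (V j).primeFactors, (1 - chi p / p)) *
      (∏ p ∈ D, chiDensity p) * ∏ p ∈ siftingPrimes N z, (1 - formsDensity #I p) =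
      roughMean z * ((T₂ - T₁) * siftedDensity #I N z) * ∏ p ∈ D, chiDensity p := by
    rw [roughMean]
    linear_combination Real.pi / 2 * (T₂ - T₁) * (∏ p ∈ D, chiDensity p) *
      h.prod_one_sub_formsDensity hj
  rwa [hmain, filter_comm] at hsieve

end IsSieveSetup

end SiftedSet

/-! ### Typical values -/

section MediumPrimes

open Finset

lemma exp_neg_sub_le_one_sub {x : ℝ} (hx : |x| ≤ 1 / 2) :
    Real.exp (-(x + 2 * x ^ 2)) ≤ 1 - x := by
  have hpos : 0 < 1 - x := by linarith [le_abs_self x]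
  have htaylor := Real.abs_log_sub_add_sum_range_le (by linarith : |x| < 1) 1
  have herr : |x| ^ (1 + 1) / (1 - |x|) ≤ 2 * x ^ 2 := by
    rw [div_le_iff₀ (by linarith), one_add_one_eq_two, sq_abs]
    nlinarith [sq_nonneg x]
  simp only [range_one, sum_singleton, zero_add, pow_one, Nat.cast_zero, div_one] at htaylor
  rw [← Real.le_log_iff_exp_le hpos]
  linarith [(abs_le.1 (htaylor.trans herr)).1]

lemma sum_one_div_sq_le (u x : ℕ) :
    ∑ p ∈ Ioc u x with p.Prime, 1 / (p : ℝ) ^ 2 ≤ 2 / (u + 1 : ℝ) :=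
  calc ∑ p ∈ Ioc u x with p.Prime, 1 / (p : ℝ) ^ 2
      ≤ ∑ n ∈ Ioo u (x + 1), 1 / (n : ℝ) ^ 2 :=
        sum_le_sum_of_subset_of_nonneg
          (fun p hp ↦ by
            have := mem_Ioc.1 (mem_filter.1 hp).1
            exact mem_Ioo.2 ⟨this.1, by omega⟩)
          fun _ _ _ ↦ by positivity
    _ ≤ 2 / (u + 1 : ℝ) := by simpa only [one_div] using sum_Ioo_inv_sq_le u (x + 1)

theorem exists_exp_neg_le_roughMean : ∃ l, 0 ≤ l ∧ ∀ z, Real.exp (-l) ≤ roughMean z := by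
  obtain ⟨C, hC0, hC⟩ := exists_sum_primes_chi_div_le
  refine ⟨C + 4, by linarith, fun z ↦ ?_⟩
  have hsq : ∑ p ∈ Ioc 0 ⌊z⌋₊ with p.Prime, (chi p / p) ^ 2 ≤ 2 := by
    refine le_trans (sum_le_sum fun p _ ↦ ?_) ((sum_one_div_sq_le 0 _).trans (by norm_num))
    rw [div_pow]
    gcongr
    exact (sq_le_one_iff_abs_le_one _).2 (abs_chi_le_one p)
  have hprod : Real.exp (-(C + 4)) ≤ ∏ p ∈ Ioc 0 ⌊z⌋₊ with p.Prime, (1 - chi p / p) :=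
    calc Real.exp (-(C + 4))
        ≤ Real.exp (∑ p ∈ Ioc 0 ⌊z⌋₊ with p.Prime, -(chi p / p + 2 * (chi p / p) ^ 2)) := by
          rw [Real.exp_le_exp, sum_neg_distrib, sum_add_distrib, ← mul_sum]
          linarith [hC ⌊z⌋₊]
      _ = ∏ p ∈ Ioc 0 ⌊z⌋₊ with p.Prime, Real.exp (-(chi p / p + 2 * (chi p / p) ^ 2)) :=
          Real.exp_sum _ _
      _ ≤ ∏ p ∈ Ioc 0 ⌊z⌋₊ with p.Prime, (1 - chi p / p) :=
          prod_le_prod (fun _ _ ↦ (Real.exp_pos _).le) fun p hp ↦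
            exp_neg_sub_le_one_sub (abs_chi_div_prime_le (mem_filter.1 hp).2)
  rw [roughMean]
  nlinarith [Real.pi_gt_three, Real.exp_pos (-(C + 4))]

/-- The primes `p` with `z < p ≤ w`: those not sifted out, but small compared with the values of
the linear forms. -/
noncomputable def mediumPrimes (z w : ℝ) : Finset ℕ := {p ∈ Ioc ⌊z⌋₊ ⌊w⌋₊ | p.Prime}

lemma mem_mediumPrimes {z w : ℝ} (hz : 0 ≤ z) (hw : 0 ≤ w) {p : ℕ} :
    p ∈ mediumPrimes z w ↔ (z < p ∧ (p : ℝ) ≤ w) ∧ p.Prime := by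
  rw [mediumPrimes, mem_filter, mem_Ioc, Nat.floor_lt hz, Nat.le_floor_iff hw]

lemma card_mediumPrimes_le (z : ℝ) {w : ℝ} (hw : 0 ≤ w) : (#(mediumPrimes z w) : ℝ) ≤ w := by
  have hcard : #(mediumPrimes z w) ≤ ⌊w⌋₊ :=
    (card_filter_le _ _).trans (by simp)
  exact (Nat.cast_le.2 hcard).trans (Nat.floor_le hw)

lemma sum_mediumPrimes_one_div_sq_le {z : ℝ} (hz : 0 < z) (w : ℝ) :
    ∑ p ∈ mediumPrimes z w, 1 / (p : ℝ) ^ 2 ≤ 2 / z :=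
  (sum_one_div_sq_le _ _).trans (by gcongr; exact (Nat.lt_floor_add_one z).le)

lemma chiDensity_le {p : ℕ} (hp : p.Prime) : chiDensity p ≤ (1 + chi p) / p + 1 / (p : ℝ) ^ 2 := by
  have hdensity : (1 + chi p) / p + 1 / (p : ℝ) ^ 2 - chiDensity p = (1 + chi p) / p ^ 2 := by
    rw [chiDensity]
    field_simp [hp.ne_zero]
    ring
  have : 0 ≤ (1 + chi p) / (p : ℝ) ^ 2 :=
    div_nonneg (by linarith [neg_one_le_chi p]) (sq_nonneg _)
  linarith

theorem sum_mediumPrimes_chiDensity_le {z w : ℝ} (hz : 8 ≤ z) (hzw : z ≤ w) :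
    ∑ p ∈ mediumPrimes z w, chiDensity p ≤ Real.log (Real.log w / Real.log z) + 20 := by
  have hu : 8 ≤ ⌊z⌋₊ := Nat.le_floor (by exact_mod_cast hz)
  have hu8 : (8 : ℝ) ≤ ⌊z⌋₊ := by exact_mod_cast hu
  have huw : ⌊z⌋₊ ≤ ⌊w⌋₊ := Nat.floor_le_floor hzw
  have hmertens := sum_primes_one_add_chi_div_le (by omega : 2 ≤ ⌊z⌋₊) huw
  have hsq := sum_mediumPrimes_one_div_sq_le (by linarith : 0 < z) w
  have hsplit : ∑ p ∈ mediumPrimes z w, chiDensity p ≤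
      ∑ p ∈ mediumPrimes z w, (1 + chi p) / p + ∑ p ∈ mediumPrimes z w, 1 / (p : ℝ) ^ 2 := by
    rw [← sum_add_distrib]
    exact sum_le_sum fun p hp ↦ chiDensity_le (mem_filter.1 hp).2
  have hlogu : 2 ≤ Real.log ⌊z⌋₊ := by
    rw [Real.le_log_iff_exp_le (by linarith), show (2 : ℝ) = 1 + 1 by norm_num, Real.exp_add]
    nlinarith [Real.exp_pos 1, Real.exp_one_lt_d9]
  have hlogz : Real.log z ≤ 2 * Real.log ⌊z⌋₊ := by
    rw [← Real.log_rpow (by linarith)]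
    refine Real.log_le_log (by linarith) ?_
    rw [Real.rpow_two]
    nlinarith [Nat.lt_floor_add_one z]
  have hlogz0 : 0 < Real.log z := Real.log_pos (by linarith)
  have hlogw0 : 0 < Real.log w := Real.log_pos (by linarith)
  have hloglogz : Real.log (Real.log z) ≤ Real.log 2 + Real.log (Real.log ⌊z⌋₊) := by
    rw [← Real.log_mul two_ne_zero (by linarith)]
    exact Real.log_le_log hlogz0 hlogz
  have hloglogw : Real.log (Real.log ⌊w⌋₊) ≤ Real.log (Real.log w) := by
    have hw : (⌊z⌋₊ : ℝ) ≤ ⌊w⌋₊ := by exact_mod_cast huw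
    exact Real.log_le_log (Real.log_pos (by linarith))
      (Real.log_le_log (by linarith) (Nat.floor_le (by linarith)))
  have h27 : 27 / Real.log ⌊z⌋₊ ≤ 27 / 2 := by gcongr
  have h2z : 2 / z ≤ 1 / 4 := by
    rw [div_le_iff₀ (by linarith)]
    linarith
  rw [Real.log_div hlogw0.ne' hlogz0.ne']
  rw [mediumPrimes] at hsplit hsq ⊢
  linarith [Real.log_two_lt_d9]

lemma pow_cardFactors_le {n : ℕ} (hn : n ≠ 0) {w : ℝ} (hw : 0 ≤ w)
    (hrough : ∀ p, p.Prime → p ∣ n → w ≤ p) : w ^ ArithmeticFunction.cardFactors n ≤ n := by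
  induction n using induction_on_primes with
  | zero => exact absurd rfl hn
  | one => simp
  | prime_mul p a hp ih =>
    have ha : a ≠ 0 := right_ne_zero_of_mul hn
    rw [ArithmeticFunction.cardFactors_mul hp.ne_zero ha,
      ArithmeticFunction.cardFactors_apply_prime hp, pow_add, pow_one, Nat.cast_mul]
    gcongr
    · exact hrough p hp (dvd_mul_right p a)
    · exact ih ha fun q hq hqa ↦ hrough q hq (hqa.mul_left p)

lemma cardFactors_prod_primes {D : Finset ℕ} (hD : ∀ p ∈ D, p.Prime) :
    ArithmeticFunction.cardFactors (∏ p ∈ D, p) = #D := by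
  classical
  induction D using Finset.induction_on with
  | empty => simp
  | insert p D hp ih =>
    have hD' : ∀ q ∈ D, q.Prime := fun q hq ↦ hD q (mem_insert_of_mem hq)
    have hpp : p.Prime := hD p (mem_insert_self p D)
    rw [prod_insert hp, ArithmeticFunction.cardFactors_mul hpp.ne_zero
      (prod_ne_zero_iff.2 fun q hq ↦ (hD' q hq).ne_zero),
      ArithmeticFunction.cardFactors_apply_prime hpp, ih hD', card_insert_of_notMem hp, add_comm]

lemma cardFactors_le_card_add {n : ℕ} (hn : n ≠ 0) {Q : Finset ℕ} (hQ : ∀ p ∈ Q, p.Prime)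
    (hsq : ∀ p ∈ Q, ¬ p ^ 2 ∣ n) {w : ℝ} (hw : 1 < w)
    (hrough : ∀ p, p.Prime → p ∣ n → p ∉ Q → w ≤ p) {A : ℕ} (hA : (n : ℝ) ≤ w ^ A) :
    ArithmeticFunction.cardFactors n ≤ #{p ∈ Q | p ∣ n} + A := by
  have hD : ∀ p ∈ {p ∈ Q | p ∣ n}, p.Prime := fun p hp ↦ hQ p (mem_filter.1 hp).1
  obtain ⟨m, hm⟩ : ∏ p ∈ Q with p ∣ n, p ∣ n :=
    prod_primes_dvd n (fun p hp ↦ (hD p hp).prime) fun p hp ↦ (mem_filter.1 hp).2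
  have hprod : ∏ p ∈ Q with p ∣ n, p ≠ 0 := fun h ↦ hn (by rw [hm, h, zero_mul])
  have hm0 : m ≠ 0 := fun h ↦ hn (by rw [hm, h, mul_zero])
  have hmn : m ∣ n := Dvd.intro_left _ hm.symm
  have hroughm : ∀ p, p.Prime → p ∣ m → w ≤ p := fun p hp hpm ↦
    hrough p hp (hpm.trans hmn) fun hpQ ↦ hsq p hpQ <| by
      have hpD : p ∣ ∏ p ∈ Q with p ∣ n, p :=
        dvd_prod_of_mem _ (mem_filter.2 ⟨hpQ, hpm.trans hmn⟩)
      rw [sq]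
      exact (mul_dvd_mul hpD hpm).trans hm.symm.dvd
  have hmA : ArithmeticFunction.cardFactors m ≤ A := by
    refine (pow_le_pow_iff_right₀ hw).1 ((pow_cardFactors_le hm0 (by linarith) hroughm).trans ?_)
    exact (Nat.cast_le.2 (Nat.le_of_dvd (Nat.pos_of_ne_zero hn) hmn)).trans hA
  calc ArithmeticFunction.cardFactors n
      = ArithmeticFunction.cardFactors (∏ p ∈ Q with p ∣ n, p) +
          ArithmeticFunction.cardFactors m := by
        rw [← ArithmeticFunction.cardFactors_mul hprod hm0, ← hm]
    _ ≤ #{p ∈ Q | p ∣ n} + A := by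
        rw [cardFactors_prod_primes hD]
        gcongr

lemma card_dvd_one_add_mul_le {q v : ℕ} (hq : q ≠ 0) (hv : q.Coprime v) {T₁ T₂ : ℕ}
    (hT : T₁ ≤ T₂) : (#{t ∈ Ioc T₁ T₂ | q ∣ 1 + v * t} : ℝ) ≤ (T₂ - T₁) / q + 1 := by
  obtain ⟨c, hc⟩ := exists_forall_dvd_one_add_mul_iff_modEq hq hv
  have hcount := abs_card_Ioc_modEq_sub_le T₁ T₂ (Nat.pos_of_ne_zero hq) c
  rw [Nat.cast_sub hT] at hcount
  simp only [hc]
  linarith [(abs_le.1 hcount).2]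

end MediumPrimes

section TypicalValues

open Finset

/-- `n` has at most `11 / 10 * R` prime factors in `(z, w]`, none of them repeated. The sieve
weight of the other values is controlled by its first moment, while `r` is small at typical
values. -/
def IsTypical (z w R : ℝ) (n : ℕ) : Prop :=
  #{p ∈ mediumPrimes z w | p ∣ n} ≤ 11 / 10 * R ∧ ∀ p ∈ mediumPrimes z w, ¬ p ^ 2 ∣ n

noncomputable instance (z w R : ℝ) : DecidablePred (IsTypical z w R) := Classical.decPred _

/-- The number of linear forms whose value at `t` is certified to be a sum of two squares by
`r ≠ 0`. -/
noncomputable def representedCount {ι : Type*} (I : Finset ι) (V : ι → ℕ) (t : ℕ) : ℕ :=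
  #{i ∈ I | chiDivisorSum (linearForm V i t) ≠ 0}

/-- The error in the total weight of typical values, when the `t` range over an interval of
length `L`. -/
noncomputable def typicalError (K N : ℕ) (z : ℝ) (m : ℕ) (w L : ℝ) : ℝ :=
  (1 + w) * sieveError K N z m + 2 ^ (60000 * K) * (2 * L / z + w)

lemma chiDivisorSum_le_of_not_isTypical {z w R B : ℝ} {n : ℕ} (hR : 0 < R)
    (hB : chiDivisorSum n ≤ B) (hn : ¬ IsTypical z w R n) :
    chiDivisorSum n ≤ #{p ∈ mediumPrimes z w | p ∣ n} * chiDivisorSum n / (11 / 10 * R) +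
      B * #{p ∈ mediumPrimes z w | p ^ 2 ∣ n} := by
  have hr := chiDivisorSum_nonneg n
  have hB0 := hr.trans hB
  rw [IsTypical, not_and_or, not_le] at hn
  rcases hn with hmany | hsquare
  · refine le_add_of_le_of_nonneg ?_ (by positivity)
    rw [le_div_iff₀ (by positivity), mul_comm]
    gcongr
  · push Not at hsquare
    obtain ⟨p, hp, hpn⟩ := hsquare
    have hcard : (1 : ℝ) ≤ #{p ∈ mediumPrimes z w | p ^ 2 ∣ n} := by
      exact_mod_cast card_pos.2 ⟨p, mem_filter.2 ⟨hp, hpn⟩⟩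
    exact le_add_of_nonneg_of_le (by positivity) (hB.trans (le_mul_of_one_le_right hB0 hcard))

lemma sum_le_card_mul_add_card_filter_mul {α : Type*} (S : Finset α) {f : α → ℝ} {s M : ℝ}
    (hs : 0 ≤ s) (hM : ∀ t ∈ S, f t ≤ M) :
    ∑ t ∈ S, f t ≤ #S * s + #{t ∈ S | s ≤ f t} * M := by
  rw [← sum_filter_not_add_sum_filter S (s ≤ f ·), ← nsmul_eq_mul, ← nsmul_eq_mul]
  refine add_le_add ?_ (sum_le_card_nsmul _ _ _ fun t ht ↦ hM t (mem_filter.1 ht).1)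
  refine (sum_le_card_nsmul _ _ s fun t ht ↦ (not_le.1 (mem_filter.1 ht).2).le).trans ?_
  gcongr
  exact filter_subset _ _

namespace IsSieveSetup

variable {ι : Type*} {I : Finset ι} {N : ℕ} {V : ι → ℕ} {z w R c : ℝ} {m T₁ T₂ A t : ℕ} {j : ι}
  (h : IsSieveSetup I N V z m T₁ T₂)

include h

lemma lt_of_prime_dvd_linearForm (ht : t ∈ siftedSet I N V z T₁ T₂) (hj : j ∈ I) {q : ℕ}
    (hq : q.Prime) (hqt : q ∣ linearForm V j t) : z < q := by
  by_contra! hqz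
  rcases le_or_gt q N with hqN | hqN
  · have hqV : q ∈ (V j).primeFactors := by
      rw [h.primeFactors_eq j hj, mem_filter, mem_Ioc]
      exact ⟨⟨hq.pos, hqN⟩, hq⟩
    have hq1 := (Nat.dvd_add_left ((Nat.dvd_of_mem_primeFactors hqV).mul_right t)).1 hqt
    exact hq.one_lt.ne' (Nat.dvd_one.1 hq1)
  · exact (mem_filter.1 ht).2 q
      ((mem_siftingPrimes (by linarith [h.one_le_z])).2 ⟨⟨hqN, hqz⟩, hq⟩) ⟨j, hj, hqt⟩

lemma chiDivisorSum_le_two_pow (ht : t ∈ siftedSet I N V z T₁ T₂) (hj : j ∈ I) :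
    chiDivisorSum (linearForm V j t) ≤ 2 ^ (60000 * #I) := by
  have hz := h.eight_le_z
  refine (chiDivisorSum_le_two_pow_cardFactors linearForm_ne_zero).trans ?_
  gcongr
  · exact one_le_two
  · refine (pow_le_pow_iff_right₀ (by linarith : 1 < z)).1 ?_
    calc z ^ ArithmeticFunction.cardFactors (linearForm V j t)
        ≤ linearForm V j t := pow_cardFactors_le linearForm_ne_zero (by linarith)
          fun p hp hpt ↦ (h.lt_of_prime_dvd_linearForm ht hj hp hpt).le
      _ ≤ linearForm V j T₂ := by
          exact_mod_cast linearForm_mono V j (mem_Ioc.1 (mem_filter.1 ht).1).2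
      _ ≤ z ^ (60000 * #I) := h.linearForm_le j hj

lemma chiDivisorSum_le_rpow_of_isTypical (ht : t ∈ siftedSet I N V z T₁ T₂) (hj : j ∈ I)
    (hw : 1 < w) (hA : (linearForm V j T₂ : ℝ) ≤ w ^ A)
    (htyp : IsTypical z w R (linearForm V j t)) :
    chiDivisorSum (linearForm V j t) ≤ 2 ^ (11 / 10 * R + A) := by
  have hmono : (linearForm V j t : ℝ) ≤ linearForm V j T₂ := by
    exact_mod_cast linearForm_mono V j (mem_Ioc.1 (mem_filter.1 ht).1).2
  have hfactors := cardFactors_le_card_add linearForm_ne_zero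
    (fun p hp ↦ (mem_filter.1 hp).2) htyp.2 hw (fun p hp hpt hpQ ↦ by
      by_contra! hpw
      exact hpQ ((mem_mediumPrimes (by linarith [h.one_le_z]) (by linarith)).2
        ⟨⟨h.lt_of_prime_dvd_linearForm ht hj hp hpt, hpw.le⟩, hp⟩)) (hmono.trans hA)
  calc chiDivisorSum (linearForm V j t)
      ≤ 2 ^ ArithmeticFunction.cardFactors (linearForm V j t) :=
        chiDivisorSum_le_two_pow_cardFactors linearForm_ne_zero
    _ ≤ 2 ^ (#{p ∈ mediumPrimes z w | p ∣ linearForm V j t} + A) :=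
        pow_le_pow_right₀ one_le_two hfactors
    _ = (2 : ℝ) ^ ((#{p ∈ mediumPrimes z w | p ∣ linearForm V j t} + A : ℕ) : ℝ) :=
        (Real.rpow_natCast _ _).symm
    _ ≤ 2 ^ (11 / 10 * R + A) := by
        push_cast
        exact Real.rpow_le_rpow_of_exponent_le one_le_two (by linarith [htyp.1])

lemma prime_and_lt_of_mem_mediumPrimes {p : ℕ} (hp : p ∈ mediumPrimes z w) :
    p.Prime ∧ z < p :=
  ⟨(mem_filter.1 hp).2,
    (Nat.floor_lt (by linarith [h.one_le_z])).1 (mem_Ioc.1 (mem_filter.1 hp).1).1⟩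

lemma siftedDensity_nonneg : 0 ≤ siftedDensity #I N z :=
  (Real.exp_pos _).le.trans h.exp_neg_le_siftedDensity

lemma sum_card_mul_chiDivisorSum_le (hj : j ∈ I) (hw : 0 ≤ w) (hroughMean : 0 ≤ roughMean z)
    (hR : ∑ p ∈ mediumPrimes z w, chiDensity p ≤ R) :
    ∑ t ∈ siftedSet I N V z T₁ T₂, #{p ∈ mediumPrimes z w | p ∣ linearForm V j t} *
        chiDivisorSum (linearForm V j t) ≤
      101 / 100 * (roughMean z * ((T₂ - T₁) * siftedDensity #I N z)) * R +
        w * sieveError #I N z m := by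
  set H := roughMean z * ((T₂ - T₁) * siftedDensity #I N z)
  have hH : 0 ≤ H :=
    mul_nonneg hroughMean (mul_nonneg h.length_nonneg h.siftedDensity_nonneg)
  have hE := h.sieveError_nonneg
  calc ∑ t ∈ siftedSet I N V z T₁ T₂, #{p ∈ mediumPrimes z w | p ∣ linearForm V j t} *
        chiDivisorSum (linearForm V j t)
      = ∑ p ∈ mediumPrimes z w, ∑ t ∈ siftedSet I N V z T₁ T₂ with p ∣ linearForm V j t,
          chiDivisorSum (linearForm V j t) := by
        simp only [← nsmul_eq_mul, ← sum_const]
        exact sum_comm' fun _ _ ↦ by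
          simp only [mem_filter]
          tauto
    _ ≤ ∑ p ∈ mediumPrimes z w, (101 / 100 * H * chiDensity p + sieveError #I N z m) := by
        refine sum_le_sum fun p hp ↦ ?_
        have hsum := h.abs_sum_chiDivisorSum_siftedSet_sub_le hj (D := {p})
          (by simpa using h.prime_and_lt_of_mem_mediumPrimes hp)
        simp only [mem_singleton, forall_eq, prod_singleton] at hsum
        linarith [(abs_le.1 hsum).2]
    _ = 101 / 100 * H * ∑ p ∈ mediumPrimes z w, chiDensity p +
          #(mediumPrimes z w) * sieveError #I N z m := by
        rw [sum_add_distrib, ← mul_sum, sum_const, nsmul_eq_mul]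
    _ ≤ 101 / 100 * H * R + w * sieveError #I N z m := by
        gcongr
        exact card_mediumPrimes_le z hw

lemma sum_card_sq_dvd_le (hj : j ∈ I) (hw : 0 ≤ w) :
    ∑ t ∈ siftedSet I N V z T₁ T₂, (#{p ∈ mediumPrimes z w | p ^ 2 ∣ linearForm V j t} : ℝ) ≤
      2 * (T₂ - T₁) / z + w := by
  have hL := h.length_nonneg
  calc ∑ t ∈ siftedSet I N V z T₁ T₂, (#{p ∈ mediumPrimes z w | p ^ 2 ∣ linearForm V j t} : ℝ)
      = ∑ p ∈ mediumPrimes z w,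
          (#{t ∈ siftedSet I N V z T₁ T₂ | p ^ 2 ∣ linearForm V j t} : ℝ) := by
        exact_mod_cast sum_card_bipartiteAbove_eq_sum_card_bipartiteBelow
          fun t p ↦ p ^ 2 ∣ linearForm V j t
    _ ≤ ∑ p ∈ mediumPrimes z w, ((T₂ - T₁) * (1 / (p : ℝ) ^ 2) + 1) := by
        refine sum_le_sum fun p hp ↦ ?_
        obtain ⟨hp, hzp⟩ := h.prime_and_lt_of_mem_mediumPrimes hp
        have hNp : N < p := by exact_mod_cast h.natCast_le.trans_lt hzp
        have hcoprime : (p ^ 2).Coprime (V j) :=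
          (hp.coprime_iff_not_dvd.2 (h.isSievable.not_dvd j hj p hp hNp)).pow_left 2
        have hcount := card_dvd_one_add_mul_le (pow_ne_zero 2 hp.ne_zero) hcoprime h.le
        have hsubset : #{t ∈ siftedSet I N V z T₁ T₂ | p ^ 2 ∣ linearForm V j t} ≤
            #{t ∈ Ioc T₁ T₂ | p ^ 2 ∣ 1 + V j * t} :=
          card_le_card (filter_subset_filter _ (filter_subset _ _))
        rw [Nat.cast_pow] at hcount
        rw [mul_one_div]
        exact (Nat.cast_le.2 hsubset).trans hcount
    _ = (T₂ - T₁) * ∑ p ∈ mediumPrimes z w, 1 / (p : ℝ) ^ 2 + #(mediumPrimes z w) := by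
        rw [sum_add_distrib, ← mul_sum, sum_const, nsmul_eq_mul, mul_one]
    _ ≤ (T₂ - T₁) * (2 / z) + w := by
        gcongr
        · exact sum_mediumPrimes_one_div_sq_le (by linarith [h.one_le_z]) w
        · exact card_mediumPrimes_le z hw
    _ = 2 * (T₂ - T₁) / z + w := by ring

lemma sum_not_isTypical_le (hj : j ∈ I) (hR : 0 < R) :
    ∑ t ∈ siftedSet I N V z T₁ T₂ with ¬ IsTypical z w R (linearForm V j t),
        chiDivisorSum (linearForm V j t) ≤
      (∑ t ∈ siftedSet I N V z T₁ T₂, #{p ∈ mediumPrimes z w | p ∣ linearForm V j t} *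
          chiDivisorSum (linearForm V j t)) / (11 / 10 * R) +
        2 ^ (60000 * #I) *
          ∑ t ∈ siftedSet I N V z T₁ T₂,
            (#{p ∈ mediumPrimes z w | p ^ 2 ∣ linearForm V j t} : ℝ) := by
  rw [sum_div, mul_sum, ← sum_add_distrib]
  refine (sum_le_sum fun t ht ↦ chiDivisorSum_le_of_not_isTypical hR
    (h.chiDivisorSum_le_two_pow (mem_filter.1 ht).1 hj) (mem_filter.1 ht).2).trans ?_
  refine sum_le_sum_of_subset_of_nonneg (filter_subset _ _) fun t _ _ ↦ ?_
  have := chiDivisorSum_nonneg (linearForm V j t)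
  positivity

theorem le_sum_isTypical (hj : j ∈ I) (hw : 0 ≤ w) (hroughMean : 0 ≤ roughMean z) (hR1 : 1 ≤ R)
    (hR : ∑ p ∈ mediumPrimes z w, chiDensity p ≤ R) :
    7 / 100 * (roughMean z * ((T₂ - T₁) * siftedDensity #I N z)) -
        typicalError #I N z m w (T₂ - T₁) ≤
      ∑ t ∈ siftedSet I N V z T₁ T₂ with IsTypical z w R (linearForm V j t),
        chiDivisorSum (linearForm V j t) := by
  have hall := h.abs_sum_chiDivisorSum_siftedSet_sub_le hj (D := ∅) (by simp)
  have hdvd := h.sum_card_mul_chiDivisorSum_le hj hw hroughMean hR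
  have hsq := h.sum_card_sq_dvd_le hj hw
  set S := siftedSet I N V z T₁ T₂
  set Q := mediumPrimes z w
  set H := roughMean z * ((T₂ - T₁) * siftedDensity #I N z)
  have hH : 0 ≤ H :=
    mul_nonneg hroughMean (mul_nonneg h.length_nonneg h.siftedDensity_nonneg)
  have hwE : 0 ≤ w * sieveError #I N z m := mul_nonneg hw h.sieveError_nonneg
  have hatypical := h.sum_not_isTypical_le (w := w) hj (by linarith : 0 < R)
  have hfirst : (∑ t ∈ S, #{p ∈ Q | p ∣ linearForm V j t} * chiDivisorSum (linearForm V j t)) /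
      (11 / 10 * R) ≤ 101 / 110 * H + w * sieveError #I N z m := by
    rw [div_le_iff₀ (by linarith)]
    refine hdvd.trans ?_
    nlinarith
  have hsecond : 2 ^ (60000 * #I) * ∑ t ∈ S, (#{p ∈ Q | p ^ 2 ∣ linearForm V j t} : ℝ) ≤
      2 ^ (60000 * #I) * (2 * (T₂ - T₁) / z + w) := by gcongr
  have hsplit := sum_filter_add_sum_filter_not S (fun t ↦ IsTypical z w R (linearForm V j t))
    fun t ↦ chiDivisorSum (linearForm V j t)
  simp only [notMem_empty, IsEmpty.forall_iff, implies_true, filter_true, prod_empty,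
    mul_one] at hall
  rw [typicalError]
  linarith [(abs_le.1 hall).1]

lemma sum_isTypical_le (ht : t ∈ siftedSet I N V z T₁ T₂) (hw : 1 < w)
    (hA : ∀ i ∈ I, (linearForm V i T₂ : ℝ) ≤ w ^ A) :
    ∑ i ∈ I with IsTypical z w R (linearForm V i t), chiDivisorSum (linearForm V i t) ≤
      2 ^ (11 / 10 * R + A) * representedCount I V t := by
  rw [← sum_filter_ne_zero, filter_filter, mul_comm, ← nsmul_eq_mul]
  refine (sum_le_card_nsmul _ _ (2 ^ (11 / 10 * R + A)) fun i hi ↦ ?_).trans ?_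
  · obtain ⟨hi, htyp, -⟩ := mem_filter.1 hi
    exact h.chiDivisorSum_le_rpow_of_isTypical ht hi hw (hA i hi) htyp
  · refine nsmul_le_nsmul_left (by positivity) (card_le_card ?_)
    exact monotone_filter_right _ fun _ _ ↦ And.right

theorem le_sum_representedCount (hw : 1 < w) (hR1 : 1 ≤ R)
    (hR : ∑ p ∈ mediumPrimes z w, chiDensity p ≤ R)
    (hA : ∀ i ∈ I, (linearForm V i T₂ : ℝ) ≤ w ^ A) (hc0 : 0 < c) (hc : c ≤ roughMean z)
    (herr : typicalError #I N z m w (T₂ - T₁) ≤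
      1 / 100 * c * ((T₂ - T₁) * siftedDensity #I N z)) :
    #I * (6 / 100 * c * ((T₂ - T₁) * siftedDensity #I N z)) ≤
      2 ^ (11 / 10 * R + A) * ∑ t ∈ siftedSet I N V z T₁ T₂, (representedCount I V t : ℝ) := by
  set M := (T₂ - T₁) * siftedDensity #I N z
  have hM : 0 ≤ M := mul_nonneg h.length_nonneg h.siftedDensity_nonneg
  set S := siftedSet I N V z T₁ T₂
  have hlower : #I * (6 / 100 * c * M) ≤
      ∑ i ∈ I, ∑ t ∈ S with IsTypical z w R (linearForm V i t),
        chiDivisorSum (linearForm V i t) := by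
    rw [← nsmul_eq_mul]
    refine card_nsmul_le_sum _ _ _ fun i hi ↦ ?_
    have hmass := h.le_sum_isTypical hi (by linarith) (hc0.le.trans hc) hR1 hR
    have : c * M ≤ roughMean z * M := by gcongr
    linarith
  have hupper : ∑ i ∈ I, ∑ t ∈ S with IsTypical z w R (linearForm V i t),
      chiDivisorSum (linearForm V i t) ≤
      2 ^ (11 / 10 * R + A) * ∑ t ∈ S, (representedCount I V t : ℝ) := by
    rw [mul_sum, sum_comm' (s' := fun t ↦ {i ∈ I | IsTypical z w R (linearForm V i t)}) (t' := S)
      fun _ _ ↦ by simp only [mem_filter]; tauto]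
    exact sum_le_sum fun t ht ↦ h.sum_isTypical_le ht hw hA
  exact hlower.trans hupper

theorem le_card_filter_le_representedCount (hw : 1 < w) (hR1 : 1 ≤ R)
    (hR : ∑ p ∈ mediumPrimes z w, chiDensity p ≤ R)
    (hA : ∀ i ∈ I, (linearForm V i T₂ : ℝ) ≤ w ^ A) (hc0 : 0 < c) (hc1 : c ≤ 1)
    (hc : c ≤ roughMean z)
    (herr : typicalError #I N z m w (T₂ - T₁) ≤
      1 / 100 * c * ((T₂ - T₁) * siftedDensity #I N z)) :
    9 / 1000 * c * ((T₂ - T₁) * siftedDensity #I N z) / 2 ^ (11 / 10 * R + A) ≤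
      #{t ∈ Ioc T₁ T₂ | 5 / 100 * c * #I / 2 ^ (11 / 10 * R + A) ≤ representedCount I V t} := by
  set M := (T₂ - T₁) * siftedDensity #I N z
  set B : ℝ := 2 ^ (11 / 10 * R + A)
  set S := siftedSet I N V z T₁ T₂
  set s := 5 / 100 * c * #I / B with hs
  have hM : 0 ≤ M := mul_nonneg h.length_nonneg h.siftedDensity_nonneg
  have hB : 0 < B := by positivity
  have hI : (1 : ℝ) ≤ #I := by exact_mod_cast h.nonempty.card_pos
  have hE : sieveError #I N z m ≤ 1 / 100 * M := by
    have hsquare : 0 ≤ 2 ^ (60000 * #I) * (2 * (T₂ - T₁) / z + w) := by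
      have := h.length_nonneg
      have := h.one_le_z
      positivity
    rw [typicalError] at herr
    nlinarith [mul_nonneg (by linarith : 0 ≤ w) h.sieveError_nonneg]
  have hS : #S ≤ 102 / 100 * M := by linarith [(abs_le.1 h.abs_card_siftedSet_sub_le).2]
  have hmarkov := sum_le_card_mul_add_card_filter_mul S (f := fun t ↦ (representedCount I V t : ℝ))
    (by positivity : 0 ≤ s) fun t _ ↦ Nat.cast_le.2 (card_filter_le I _)
  have hsubset : #{t ∈ S | s ≤ representedCount I V t} ≤
      #{t ∈ Ioc T₁ T₂ | s ≤ representedCount I V t} :=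
    card_le_card (filter_subset_filter _ (filter_subset _ _))
  refine le_trans ?_ (Nat.cast_le.2 hsubset)
  have hBs : B * s = 5 / 100 * c * #I := mul_div_cancel₀ _ hB.ne'
  have hfew : #S * (B * s) ≤ 102 / 100 * M * (5 / 100 * c * #I) := by
    rw [hBs]
    gcongr
  have hchain := (h.le_sum_representedCount hw hR1 hR hA hc0 hc herr).trans
    (mul_le_mul_of_nonneg_left hmarkov hB.le)
  rw [div_le_iff₀ hB]
  refine le_of_mul_le_mul_left ?_ (by linarith : (0 : ℝ) < #I)
  linarith

end IsSieveSetup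

end TypicalValues

/-! ### Shifts by squares -/

section ShiftsBySquares

open Finset

/-- The cube of `N!`. If `x = squareModulus N * t`, then for `0 < i ≤ N` the shift `x + i ^ 2` is
`i ^ 2` times a linear form in `t` whose constant term is `1`. -/
def squareModulus (N : ℕ) : ℕ := N.factorial ^ 3

/-- The coefficient `squareModulus N / i ^ 2` of that linear form. -/
def squareCoeff (N i : ℕ) : ℕ := N.factorial * (N.factorial / i) ^ 2

lemma squareModulus_pos (N : ℕ) : 0 < squareModulus N := pow_pos N.factorial_pos 3

lemma sq_mul_squareCoeff {N i : ℕ} (hi0 : 0 < i) (hi : i ≤ N) :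
    i ^ 2 * squareCoeff N i = squareModulus N := by
  obtain ⟨k, hk⟩ := Nat.dvd_factorial hi0 hi
  rw [squareCoeff, squareModulus, hk, Nat.mul_div_cancel_left _ hi0]
  ring

lemma sq_mul_linearForm_squareCoeff {N i : ℕ} (hi0 : 0 < i) (hi : i ≤ N) (t : ℕ) :
    i ^ 2 * linearForm (squareCoeff N) i t = squareModulus N * t + i ^ 2 := by
  rw [linearForm, mul_add, ← mul_assoc, sq_mul_squareCoeff hi0 hi]
  ring

lemma squareCoeff_pos {N i : ℕ} (hi0 : 0 < i) (hi : i ≤ N) : 0 < squareCoeff N i :=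
  Nat.pos_of_mul_pos_left (sq_mul_squareCoeff hi0 hi ▸ squareModulus_pos N)

lemma squareCoeff_le {N i : ℕ} (hi0 : 0 < i) (hi : i ≤ N) : squareCoeff N i ≤ squareModulus N :=
  sq_mul_squareCoeff hi0 hi ▸ Nat.le_mul_of_pos_left _ (pow_pos hi0 2)

lemma prime_dvd_squareCoeff_iff {N i q : ℕ} (hi0 : 0 < i) (hi : i ≤ N) (hq : q.Prime) :
    q ∣ squareCoeff N i ↔ q ≤ N := by
  refine ⟨fun hdvd ↦ ?_, fun hqN ↦ ((hq.dvd_factorial).2 hqN).mul_right _⟩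
  have hdvd' : q ∣ N.factorial ^ 3 :=
    (hdvd.mul_left (i ^ 2)).trans (sq_mul_squareCoeff hi0 hi).dvd
  exact hq.dvd_factorial.1 (hq.dvd_of_dvd_pow hdvd')

lemma primeFactors_squareCoeff {N i : ℕ} (hi0 : 0 < i) (hi : i ≤ N) :
    (squareCoeff N i).primeFactors = {p ∈ Ioc 0 N | p.Prime} := by
  ext q
  rw [Nat.mem_primeFactors, mem_filter, mem_Ioc]
  constructor
  · rintro ⟨hq, hdvd, -⟩
    exact ⟨⟨hq.pos, (prime_dvd_squareCoeff_iff hi0 hi hq).1 hdvd⟩, hq⟩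
  · rintro ⟨⟨-, hqN⟩, hq⟩
    exact ⟨hq, (prime_dvd_squareCoeff_iff hi0 hi hq).2 hqN, (squareCoeff_pos hi0 hi).ne'⟩

lemma not_dvd_add_sq_of_lt {K a q i i' : ℕ} (hq : K ^ 2 < q) (hi0 : 0 < i) (hii' : i < i')
    (hi' : i' ≤ K) (hdvd : q ∣ a + i ^ 2) : ¬ q ∣ a + i' ^ 2 := by
  intro hdvd'
  have hsub := Nat.dvd_sub hdvd' hdvd
  rw [Nat.add_sub_add_left] at hsub
  have hlt : i ^ 2 < i' ^ 2 := Nat.pow_lt_pow_left hii' two_ne_zero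
  have hle : i' ^ 2 ≤ K ^ 2 := Nat.pow_le_pow_left hi' 2
  have hpos : 0 < i ^ 2 := pow_pos hi0 2
  have := Nat.le_of_dvd (by omega) hsub
  omega

theorem isSievable_squareCoeff {K : ℕ} (hK : 2 ≤ K) :
    IsSievable (Ioc 0 K) (K ^ 2) (squareCoeff (K ^ 2)) := by
  have hmem : ∀ i ∈ Ioc 0 K, 0 < i ∧ i ≤ K ∧ i ≤ K ^ 2 := fun i hi ↦ by
    rw [mem_Ioc] at hi
    exact ⟨hi.1, hi.2, by nlinarith⟩
  refine ⟨fun i hi ↦ ?_, fun _ _ ↦ ?_, fun i hi q hq hNq hdvd ↦ ?_,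
    fun _ _ hNq t i hi i' hi' hdvd hdvd' ↦ ?_⟩
  · exact squareCoeff_pos (hmem i hi).1 (hmem i hi).2.2
  · exact (Nat.dvd_factorial (by norm_num) (by nlinarith)).mul_right _
  · have := (prime_dvd_squareCoeff_iff (hmem i hi).1 (hmem i hi).2.2 hq).1 hdvd
    omega
  · obtain ⟨hi0, hiK, hiN⟩ := hmem i hi
    obtain ⟨hi0', hiK', hiN'⟩ := hmem i' hi'
    have hdvd := sq_mul_linearForm_squareCoeff hi0 hiN t ▸ hdvd.mul_left (i ^ 2)
    have hdvd' := sq_mul_linearForm_squareCoeff hi0' hiN' t ▸ hdvd'.mul_left (i' ^ 2)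
    rcases lt_trichotomy i i' with hlt | heq | hlt
    · exact (not_dvd_add_sq_of_lt hNq hi0 hlt hiK' hdvd hdvd').elim
    · exact heq
    · exact (not_dvd_add_sq_of_lt hNq hi0' hlt hiK hdvd' hdvd).elim

end ShiftsBySquares

section ChoiceOfParameters

open Finset

lemma two_pow_le_exp (n : ℕ) : (2 : ℝ) ^ n ≤ Real.exp n := by
  rw [← Real.exp_one_pow]
  gcongr
  linarith [Real.add_one_le_exp 1]

lemma exp_neg_seven_le : Real.exp (-7) ≤ 1 / 600 := by
  rw [Real.exp_neg, ← one_div]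
  gcongr
  calc (600 : ℝ) ≤ 2.7 ^ 7 := by norm_num
    _ ≤ Real.exp 1 ^ 7 := by
      gcongr
      linarith [Real.exp_one_gt_d9]
    _ = Real.exp 7 := by rw [Real.exp_one_pow]; norm_num

lemma exists_mul_mem_Icc {W : ℕ} {X : ℝ} (hW : 0 < W) (hX : 4 * W ≤ X) :
    ∃ T₁ T₂ : ℕ, X ≤ W * T₁ ∧ W * T₂ ≤ 2 * X ∧ X / (2 * W) ≤ T₂ - T₁ := by
  have hW0 : (0 : ℝ) < W := Nat.cast_pos.2 hW
  have hq : 4 ≤ X / W := (le_div_iff₀ hW0).2 hX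
  refine ⟨⌈X / W⌉₊, ⌊2 * (X / W)⌋₊, ?_, ?_, ?_⟩
  · rw [← div_le_iff₀' hW0]
    exact Nat.le_ceil _
  · rw [← le_div_iff₀' hW0, mul_div_assoc]
    exact Nat.floor_le (by linarith)
  · rw [mul_comm 2, ← div_div]
    linarith [Nat.ceil_lt_add_one (by linarith : 0 ≤ X / W), Nat.lt_floor_add_one (2 * (X / W))]

/-- The bound for `r` at the typical values of the `K` linear forms: these have at most
`11 / 10 * R` prime factors in `(z, w]`, with `R = log (1000 * K) + 20`, and at most `60` larger
ones. -/
noncomputable def typicalWeightBound (K : ℕ) : ℝ :=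
  2 ^ (11 / 10 * (Real.log (1000 * K) + 20) + 60)

lemma typicalWeightBound_pos (K : ℕ) : 0 < typicalWeightBound K := by
  unfold typicalWeightBound
  positivity

lemma typicalWeightBound_le {K : ℕ} (hK : 1 ≤ K) :
    typicalWeightBound K ≤ 2 ^ 92 * (K : ℝ) ^ (4 / 5 : ℝ) := by
  have hK1 : (1 : ℝ) ≤ K := by exact_mod_cast hK
  have hlog : 0 ≤ Real.log (1000 * K) := Real.log_nonneg (by linarith)
  have hpow : (2 : ℝ) ^ (11 / 10 * Real.log (1000 * K)) ≤ (1000 * K) ^ (4 / 5 : ℝ) := by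
    rw [Real.rpow_def_of_pos two_pos, Real.rpow_def_of_pos (by positivity), Real.exp_le_exp]
    nlinarith [Real.log_two_lt_d9]
  have hconst : (1000 : ℝ) ^ (4 / 5 : ℝ) ≤ 2 ^ 10 :=
    (Real.rpow_le_rpow_of_exponent_le (by norm_num) (by norm_num)).trans_eq (Real.rpow_one _)
      |>.trans (by norm_num)
  calc typicalWeightBound K
      = 2 ^ (11 / 10 * Real.log (1000 * K)) * 2 ^ 82 := by
        rw [typicalWeightBound, ← Real.rpow_natCast, ← Real.rpow_add two_pos]
        push_cast
        ring_nf
    _ ≤ (1000 ^ (4 / 5 : ℝ) * (K : ℝ) ^ (4 / 5 : ℝ)) * 2 ^ 82 := by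
        rw [← Real.mul_rpow (by norm_num) (by linarith)]
        gcongr
    _ ≤ (2 ^ 10 * (K : ℝ) ^ (4 / 5 : ℝ)) * 2 ^ 82 := by gcongr
    _ = 2 ^ 92 * (K : ℝ) ^ (4 / 5 : ℝ) := by ring

lemma typicalWeightBound_le_exp {K : ℕ} (hK : 1 ≤ K) :
    typicalWeightBound K ≤ Real.exp (K + 92) := by
  have hK1 : (1 : ℝ) ≤ K := by exact_mod_cast hK
  calc typicalWeightBound K ≤ 2 ^ 92 * (K : ℝ) ^ (4 / 5 : ℝ) := typicalWeightBound_le hK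
    _ ≤ Real.exp (92 : ℕ) * Real.exp K := by
        gcongr
        · exact two_pow_le_exp 92
        · calc (K : ℝ) ^ (4 / 5 : ℝ) ≤ K ^ (1 : ℝ) :=
                Real.rpow_le_rpow_of_exponent_le hK1 (by norm_num)
            _ = K := Real.rpow_one _
            _ ≤ Real.exp K := by linarith [Real.add_one_le_exp (K : ℝ)]
    _ = Real.exp (K + 92) := by
        rw [← Real.exp_add, add_comm]
        norm_num

/-- The relations between `u = log X`, the number `K` of shifts and the number `m` of sieve levels
under which the sieve applies on the scale `X`. Here `exp (-l)` is a lower bound for `roughMean`. -/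
structure IsAdmissible (u l : ℝ) (K m : ℕ) : Prop where
  four_le : 4 ≤ K
  one_le : 1 ≤ m
  nonneg : 0 ≤ l
  le_two_pow : u ≤ 2 ^ m
  le : 10 ^ 11 * (1 + l) * (K ^ 2 * m) ≤ u

/-- The sieving limit `X ^ (1 / (50000 * K))`, where `u = log X`. -/
noncomputable def siftingLimit (u : ℝ) (K : ℕ) : ℝ := Real.exp (u / (50000 * K))

namespace IsAdmissible

variable {u l : ℝ} {K m T₁ T₂ : ℕ} (h : IsAdmissible u l K m)

include h

lemma four_le_cast : (4 : ℝ) ≤ K := by exact_mod_cast h.four_le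

lemma one_le_cast : (1 : ℝ) ≤ m := by exact_mod_cast h.one_le

lemma four_mul_mul_le : 4 * (K * m) ≤ (K ^ 2 * m : ℝ) := by
  nlinarith [h.four_le_cast, h.one_le_cast, mul_nonneg K.cast_nonneg (m.cast_nonneg (α := ℝ))]

lemma four_mul_le : 4 * K ≤ (K ^ 2 * m : ℝ) := by
  nlinarith [h.four_mul_mul_le, h.one_le_cast, h.four_le_cast]

lemma sq_le : (K ^ 2 : ℝ) ≤ K ^ 2 * m := le_mul_of_one_le_right (sq_nonneg _) h.one_le_cast

lemma cast_le : (m : ℝ) ≤ K ^ 2 * m := by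
  nlinarith [h.four_mul_mul_le, h.one_le_cast, h.four_le_cast]

lemma le_mul : l ≤ l * (K ^ 2 * m) :=
  le_mul_of_one_le_right h.nonneg (by linarith [h.four_mul_le, h.four_le_cast])

lemma add_le : 10 ^ 11 * (K ^ 2 * m) + 10 ^ 11 * l ≤ u := by linarith [h.le, h.le_mul]

lemma pos : 0 < u := by linarith [h.add_le, h.nonneg, h.four_mul_le, h.four_le_cast]

lemma siftingLimit_pow (n : ℕ) : siftingLimit u K ^ (n * K) = Real.exp (n * u / 50000) := by
  have hK := h.four_le_cast
  rw [siftingLimit, ← Real.exp_nat_mul]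
  congr 1
  push_cast
  field_simp

lemma log_sq_le : Real.log (K ^ 2) ≤ m := by
  rw [Real.log_le_iff_le_exp (pow_pos (by linarith [h.four_le_cast]) 2)]
  linarith [h.le_two_pow, two_pow_le_exp m, h.add_le, h.sq_le, h.nonneg, sq_nonneg (K : ℝ)]

lemma squareModulus_le : (squareModulus (K ^ 2) : ℝ) ≤ Real.exp (3 * (K ^ 2 * m)) := by
  have hK := h.four_le_cast
  have hfact : ((K ^ 2).factorial : ℝ) ≤ Real.exp (K ^ 2 * m) := by
    calc ((K ^ 2).factorial : ℝ) ≤ ((K ^ 2) ^ (K ^ 2) : ℕ) := by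
          exact_mod_cast Nat.factorial_le_pow _
      _ = Real.exp ((K ^ 2 : ℕ) * Real.log (K ^ 2)) := by
          rw [Real.exp_nat_mul, Real.exp_log (by positivity)]
          push_cast
          rfl
      _ ≤ Real.exp (K ^ 2 * m) := by
          push_cast
          gcongr
          exact h.log_sq_le
  calc (squareModulus (K ^ 2) : ℝ) ≤ Real.exp (K ^ 2 * m) ^ 3 := by
        rw [squareModulus]
        push_cast
        gcongr
    _ = Real.exp (3 * (K ^ 2 * m)) := by
        rw [← Real.exp_nat_mul]
        norm_num

lemma four_mul_squareModulus_le : 4 * squareModulus (K ^ 2) ≤ Real.exp u := by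
  calc 4 * (squareModulus (K ^ 2) : ℝ) ≤ Real.exp 3 * Real.exp (3 * (K ^ 2 * m)) := by
        gcongr
        · linarith [Real.add_one_le_exp 3]
        · exact h.squareModulus_le
    _ ≤ Real.exp u := by
        rw [← Real.exp_add, Real.exp_le_exp]
        linarith [h.add_le, h.nonneg, h.four_mul_le, h.four_le_cast]

lemma linearForm_le (hT₂ : squareModulus (K ^ 2) * T₂ ≤ 2 * Real.exp u) :
    ∀ i ∈ Ioc 0 K, (linearForm (squareCoeff (K ^ 2)) i T₂ : ℝ) ≤ Real.exp (6 / 5 * u) := by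
  intro i hi
  rw [mem_Ioc] at hi
  have hcoeff : (squareCoeff (K ^ 2) i : ℝ) ≤ squareModulus (K ^ 2) := by
    exact_mod_cast squareCoeff_le hi.1 (hi.2.trans (Nat.le_self_pow two_ne_zero K))
  have hmul : (squareCoeff (K ^ 2) i : ℝ) * T₂ ≤ squareModulus (K ^ 2) * T₂ := by gcongr
  have hu : 10 ≤ u := by linarith [h.add_le, h.nonneg, h.four_mul_le, h.four_le_cast]
  calc (linearForm (squareCoeff (K ^ 2)) i T₂ : ℝ) = 1 + squareCoeff (K ^ 2) i * T₂ := by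
        rw [linearForm]
        push_cast
        rfl
    _ ≤ (1 + 2) * Real.exp u := by linarith [Real.one_le_exp h.pos.le]
    _ ≤ Real.exp 2 * Real.exp u := by
        gcongr
        linarith [Real.add_one_le_exp 2]
    _ ≤ Real.exp (6 / 5 * u) := by
        rw [← Real.exp_add, Real.exp_le_exp]
        linarith

lemma isSieveSetup (hT : T₁ ≤ T₂) (hT₂ : squareModulus (K ^ 2) * T₂ ≤ 2 * Real.exp u) :
    IsSieveSetup (Ioc 0 K) (K ^ 2) (squareCoeff (K ^ 2)) (siftingLimit u K) m T₁ T₂ where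
  isSievable := isSievable_squareCoeff (by linarith [h.four_le])
  primeFactors_eq i hi := by
    rw [mem_Ioc] at hi
    exact primeFactors_squareCoeff hi.1 (hi.2.trans (Nat.le_self_pow two_ne_zero K))
  nonempty := nonempty_Ioc.2 (by linarith [h.four_le])
  eight_le := by nlinarith [h.four_le]
  four_mul_card_le := by
    rw [Nat.card_Ioc, Nat.sub_zero]
    nlinarith [h.four_le]
  natCast_le := by
    have hK := h.four_le_cast
    push_cast
    rw [siftingLimit, ← Real.log_le_iff_le_exp (by positivity), le_div_iff₀ (by positivity)]
    calc Real.log (K ^ 2) * (50000 * K) ≤ m * (50000 * K) := by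
          gcongr
          exact h.log_sq_le
      _ ≤ u := by linarith [h.add_le, h.four_mul_mul_le, h.four_mul_le, h.nonneg]
  sieveLevel_le := by
    have hK := h.four_le_cast
    have hexp : u / (50000 * K) * (1 / 2 : ℝ) ^ m ≤ 1 := by
      rw [div_pow, one_pow, mul_one_div, div_le_one (by positivity)]
      exact (div_le_self h.pos.le (by linarith)).trans h.le_two_pow
    rw [sieveLevel, siftingLimit, ← Real.exp_mul]
    push_cast
    nlinarith [Real.exp_le_exp.2 hexp, Real.exp_one_lt_d9]
  le := hT
  linearForm_le i hi := by
    rw [Nat.card_Ioc, Nat.sub_zero, h.siftingLimit_pow]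
    refine (h.linearForm_le hT₂ i hi).trans_eq ?_
    norm_num
    ring_nf

lemma le_length_mul_siftedDensity (hT : T₁ ≤ T₂)
    (hT₂ : squareModulus (K ^ 2) * T₂ ≤ 2 * Real.exp u)
    (hlength : Real.exp u / (2 * squareModulus (K ^ 2)) ≤ T₂ - T₁) :
    Real.exp (u - 11 * (K ^ 2 * m)) / 2 ≤
      (T₂ - T₁) * siftedDensity K (K ^ 2) (siftingLimit u K) := by
  have hdensity := (h.isSieveSetup hT hT₂).exp_neg_le_siftedDensity
  rw [Nat.card_Ioc, Nat.sub_zero] at hdensity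
  have hW : (0 : ℝ) < squareModulus (K ^ 2) := Nat.cast_pos.2 (squareModulus_pos _)
  have hlength0 := (h.isSieveSetup hT hT₂).length_nonneg
  calc Real.exp (u - 11 * (K ^ 2 * m)) / 2
      ≤ Real.exp (u - 3 * (K ^ 2 * m) + -(32 * K * m)) / 2 := by
        gcongr
        linarith [h.four_mul_mul_le]
    _ = Real.exp u / (2 * Real.exp (3 * (K ^ 2 * m))) * Real.exp (-(32 * K * m)) := by
        rw [Real.exp_add, Real.exp_sub]
        ring
    _ ≤ Real.exp u / (2 * squareModulus (K ^ 2)) * Real.exp (-(32 * K * m)) := by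
        gcongr
        exact h.squareModulus_le
    _ ≤ (T₂ - T₁) * siftedDensity K (K ^ 2) (siftingLimit u K) := by
        gcongr

lemma exp_le_length_mul_siftedDensity (hT : T₁ ≤ T₂)
    (hT₂ : squareModulus (K ^ 2) * T₂ ≤ 2 * Real.exp u)
    (hlength : Real.exp u / (2 * squareModulus (K ^ 2)) ≤ T₂ - T₁) :
    Real.exp (u - 11 * (K ^ 2 * m) - l - 7) ≤
      1 / 300 * Real.exp (-l) * ((T₂ - T₁) * siftedDensity K (K ^ 2) (siftingLimit u K)) := by
  calc Real.exp (u - 11 * (K ^ 2 * m) - l - 7)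
      = Real.exp (-7) * Real.exp (-l) * Real.exp (u - 11 * (K ^ 2 * m)) := by
        rw [← Real.exp_add, ← Real.exp_add]
        ring_nf
    _ ≤ 1 / 600 * Real.exp (-l) * Real.exp (u - 11 * (K ^ 2 * m)) := by
        gcongr
        exact exp_neg_seven_le
    _ = 1 / 300 * Real.exp (-l) * (Real.exp (u - 11 * (K ^ 2 * m)) / 2) := by ring
    _ ≤ _ := by
        gcongr
        exact h.le_length_mul_siftedDensity hT hT₂ hlength

lemma one_add_mul_sieveError_le :
    (1 + Real.exp (u / 50)) * sieveError K (K ^ 2) (siftingLimit u K) m ≤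
      Real.exp (u - 11 * (K ^ 2 * m) - l - 7) := by
  have hu := h.pos
  have hseven : (7 : ℝ) ≤ Real.exp 6 := by linarith [Real.add_one_le_exp 6]
  have htwo : (2 : ℝ) ^ K ^ 2 ≤ Real.exp (K ^ 2 * m) :=
    (two_pow_le_exp _).trans (Real.exp_le_exp.2 (by push_cast; exact h.sq_le))
  have hm : (m + 1 : ℝ) ≤ Real.exp (K ^ 2 * m) :=
    (Real.add_one_le_exp _).trans (Real.exp_le_exp.2 h.cast_le)
  have hone : 1 + Real.exp (u / 50) ≤ Real.exp 1 * Real.exp (u / 50) := by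
    nlinarith [Real.add_one_le_exp 1, Real.one_le_exp (by positivity : 0 ≤ u / 50)]
  rw [sieveError, h.siftingLimit_pow, h.siftingLimit_pow]
  calc _ ≤ Real.exp 1 * Real.exp (u / 50) * (Real.exp (K ^ 2 * m) *
          Real.exp ((1000 : ℕ) * u / 50000) * (Real.exp ((1000 : ℕ) * u / 50000) *
          (Real.exp 6 * Real.exp (K ^ 2 * m) * Real.exp ((30000 : ℕ) * u / 50000)))) := by
        gcongr
    _ ≤ Real.exp (u - 11 * (K ^ 2 * m) - l - 7) := by
        simp only [← Real.exp_add, Real.exp_le_exp]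
        push_cast
        linarith [h.add_le, h.nonneg, h.four_mul_le, h.four_le_cast]

lemma two_pow_mul_exp_le :
    2 ^ (60000 * K) * Real.exp (u / 50) ≤ Real.exp (u - 11 * (K ^ 2 * m) - l - 7) := by
  calc 2 ^ (60000 * K) * Real.exp (u / 50)
      ≤ Real.exp (60000 * K : ℕ) * Real.exp (u / 50) := by
        gcongr
        exact two_pow_le_exp _
    _ ≤ Real.exp (u - 11 * (K ^ 2 * m) - l - 7) := by
        rw [← Real.exp_add, Real.exp_le_exp]
        push_cast
        linarith [h.add_le, h.nonneg, h.four_mul_le, h.four_le_cast]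

lemma two_pow_mul_div_siftingLimit_le :
    2 ^ (60000 * K) * (2 / siftingLimit u K) ≤
      1 / 300 * Real.exp (-l) * Real.exp (-(32 * K * m)) := by
  have hK := h.four_le_cast
  have hu : 60000 * K + 8 + l + 32 * K * m ≤ u / (50000 * K) := by
    have hsq : (K : ℝ) ≤ K ^ 2 := by nlinarith
    have hl : l * K ≤ l * (K ^ 2 * m) :=
      mul_le_mul_of_nonneg_left (by linarith [h.four_mul_le]) h.nonneg
    rw [le_div_iff₀ (by positivity)]
    linarith [h.le, h.sq_le, h.le_mul, h.nonneg]
  calc 2 ^ (60000 * K) * (2 / siftingLimit u K)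
      ≤ Real.exp (60000 * K : ℕ) * (Real.exp 1 / Real.exp (u / (50000 * K))) := by
        rw [siftingLimit]
        gcongr
        · exact two_pow_le_exp _
        · linarith [Real.add_one_le_exp 1]
    _ ≤ Real.exp (-7 + -l + -(32 * K * m)) := by
        rw [← Real.exp_sub, ← Real.exp_add, Real.exp_le_exp]
        push_cast
        linarith
    _ = Real.exp (-7) * Real.exp (-l) * Real.exp (-(32 * K * m)) := by
        rw [Real.exp_add, Real.exp_add]
    _ ≤ 1 / 300 * Real.exp (-l) * Real.exp (-(32 * K * m)) := by
        gcongr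
        linarith [exp_neg_seven_le]

lemma typicalError_le (hT : T₁ ≤ T₂)
    (hT₂ : squareModulus (K ^ 2) * T₂ ≤ 2 * Real.exp u)
    (hlength : Real.exp u / (2 * squareModulus (K ^ 2)) ≤ T₂ - T₁) :
    typicalError K (K ^ 2) (siftingLimit u K) m (Real.exp (u / 50)) (T₂ - T₁) ≤
      1 / 100 * Real.exp (-l) *
        ((T₂ - T₁) * siftedDensity K (K ^ 2) (siftingLimit u K)) := by
  have hsetup := h.isSieveSetup hT hT₂
  have hdensity := hsetup.exp_neg_le_siftedDensity
  rw [Nat.card_Ioc, Nat.sub_zero] at hdensity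
  have hmass := h.exp_le_length_mul_siftedDensity hT hT₂ hlength
  have hsquares := mul_le_mul_of_nonneg_left (h.two_pow_mul_div_siftingLimit_le.trans
    (mul_le_mul_of_nonneg_left hdensity (by positivity))) hsetup.length_nonneg
  calc typicalError K (K ^ 2) (siftingLimit u K) m (Real.exp (u / 50)) (T₂ - T₁)
      = (1 + Real.exp (u / 50)) * sieveError K (K ^ 2) (siftingLimit u K) m +
          2 ^ (60000 * K) * Real.exp (u / 50) +
          (T₂ - T₁) * (2 ^ (60000 * K) * (2 / siftingLimit u K)) := by
        rw [typicalError]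
        ring
    _ ≤ _ := by linarith [h.one_add_mul_sieveError_le, h.two_pow_mul_exp_le]

lemma sum_mediumPrimes_chiDensity_le :
    ∑ p ∈ mediumPrimes (siftingLimit u K) (Real.exp (u / 50)), chiDensity p ≤
      Real.log (1000 * K) + 20 := by
  have hK := h.four_le_cast
  have hu := h.pos
  have height := (h.isSieveSetup le_rfl (T₂ := 0) (by simp [Real.exp_nonneg])).eight_le_z
  have hle : siftingLimit u K ≤ Real.exp (u / 50) := by
    rw [siftingLimit, Real.exp_le_exp]
    gcongr
    linarith
  have hsum := _root_.sum_mediumPrimes_chiDensity_le height hle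
  rw [siftingLimit, Real.log_exp, Real.log_exp] at hsum
  rwa [show u / 50 / (u / (50000 * K)) = 1000 * K by field_simp; norm_num] at hsum

theorem exists_exp_le_card_filter (hl : ∀ z, Real.exp (-l) ≤ roughMean z) :
    ∃ T₁ T₂ : ℕ,
      (∀ t ∈ Ioc T₁ T₂, Real.exp u ≤ squareModulus (K ^ 2) * t ∧
        squareModulus (K ^ 2) * t ≤ 2 * Real.exp u) ∧
      Real.exp (u - 10 ^ 11 * (1 + l) * (K ^ 2 * m)) ≤
        #{t ∈ Ioc T₁ T₂ | 5 / 100 * Real.exp (-l) * K / typicalWeightBound K ≤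
          representedCount (Ioc 0 K) (squareCoeff (K ^ 2)) t} := by
  obtain ⟨T₁, T₂, hT₁, hT₂, hlength⟩ :=
    exists_mul_mem_Icc (squareModulus_pos (K ^ 2)) h.four_mul_squareModulus_le
  have hT : T₁ ≤ T₂ := by
    rw [← Nat.cast_le (α := ℝ), ← sub_nonneg]
    exact hlength.trans' (by positivity)
  have hu := h.pos
  have hK := h.four_le_cast
  have hcount := (h.isSieveSetup hT hT₂).le_card_filter_le_representedCount (A := 60)
    (Real.one_lt_exp_iff.2 (by positivity))
    (by linarith [Real.log_nonneg (by linarith : (1 : ℝ) ≤ 1000 * K)])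
    h.sum_mediumPrimes_chiDensity_le
    (fun i hi ↦ (h.linearForm_le hT₂ i hi).trans_eq
      (by rw [← Real.exp_nat_mul]; push_cast; ring_nf))
    (Real.exp_pos _) (Real.exp_le_one_iff.2 (neg_nonpos.2 h.nonneg)) (hl _)
    (by rw [Nat.card_Ioc, Nat.sub_zero]; exact h.typicalError_le hT hT₂ hlength)
  rw [Nat.card_Ioc, Nat.sub_zero, Nat.cast_ofNat, ← typicalWeightBound] at hcount
  refine ⟨T₁, T₂, fun t ht ↦ ?_, hcount.trans' ?_⟩
  · rw [mem_Ioc] at ht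
    have hlower : (T₁ : ℝ) ≤ t := Nat.cast_le.2 ht.1.le
    have hupper : (t : ℝ) ≤ T₂ := Nat.cast_le.2 ht.2
    exact ⟨hT₁.trans (by gcongr), hT₂.trans' (by gcongr)⟩
  · rw [le_div_iff₀ (typicalWeightBound_pos K)]
    refine le_trans ?_ ((h.exp_le_length_mul_siftedDensity hT hT₂ hlength).trans ?_)
    · refine (mul_le_mul_of_nonneg_left (typicalWeightBound_le_exp (by linarith [h.four_le]))
        (Real.exp_nonneg _)).trans ?_
      rw [← Real.exp_add, Real.exp_le_exp]
      linarith [h.le_mul, h.nonneg, h.four_mul_le]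
    · have := (h.isSieveSetup hT hT₂).length_nonneg
      have := (h.isSieveSetup hT hT₂).siftedDensity_nonneg
      rw [Nat.card_Ioc, Nat.sub_zero] at this
      gcongr ?_ * _ * _
      norm_num

end IsAdmissible

end ChoiceOfParameters

section Counting

open Finset

lemma finite_setOf_natCast_le_and (x : ℝ) (p : ℕ → Prop) : {n : ℕ | (n : ℝ) ≤ x ∧ p n}.Finite :=
  (Set.finite_Iic ⌊x⌋₊).subset fun _ hn ↦ Nat.le_floor hn.1

lemma Scount_add_card_le {x y : ℝ} (hy : 0 ≤ y) (F : Finset ℕ)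
    (hF : ∀ n ∈ F, x < n ∧ n ≤ x + y ∧ IsSumTwoSquares n) :
    Scount x + #F ≤ Scount (x + y) := by
  have hdisj : Disjoint {n : ℕ | (n : ℝ) ≤ x ∧ IsSumTwoSquares n} (F : Set ℕ) :=
    Set.disjoint_left.2 fun n hn hnF ↦ (hF n hnF).1.not_ge hn.1
  rw [Scount, Scount, ← Set.ncard_coe_finset,
    ← Set.ncard_union_eq hdisj (finite_setOf_natCast_le_and _ _) F.finite_toSet]
  refine Set.ncard_le_ncard ?_ (finite_setOf_natCast_le_and _ _)
  rintro n (⟨hnx, hn⟩ | hnF)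
  · exact ⟨by linarith, hn⟩
  · exact (hF n hnF).2

lemma IsSumTwoSquares.sq_mul {n i : ℕ} (hi : 0 < i) (hn : IsSumTwoSquares n) :
    IsSumTwoSquares (i ^ 2 * n) := by
  obtain ⟨hpos, a, b, rfl⟩ := hn
  exact ⟨by positivity, i * a, i * b, by ring⟩

theorem representedCount_le_Scount_sub {K : ℕ} {y : ℝ} (hy : K ^ 2 ≤ y) (t : ℕ) :
    (representedCount (Ioc 0 K) (squareCoeff (K ^ 2)) t : ℝ) ≤
      Scount (squareModulus (K ^ 2) * t + y) - Scount (squareModulus (K ^ 2) * t) := by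
  set F := {i ∈ Ioc 0 K | chiDivisorSum (linearForm (squareCoeff (K ^ 2)) i t) ≠ 0} with hF
  have hcard : #(F.image fun i ↦ squareModulus (K ^ 2) * t + i ^ 2) = #F :=
    card_image_of_injective _ fun i j hij ↦
      Nat.pow_left_injective two_ne_zero (Nat.add_left_cancel hij)
  have hcount := Scount_add_card_le (x := squareModulus (K ^ 2) * t) (y := y)
    ((sq_nonneg _).trans hy) (F.image fun i ↦ squareModulus (K ^ 2) * t + i ^ 2) <| by
      refine forall_mem_image.2 fun i hi ↦ ?_
      rw [hF, mem_filter, mem_Ioc] at hi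
      obtain ⟨⟨hi0, hiK⟩, hr⟩ := hi
      have hiK' : (i : ℝ) ≤ K := Nat.cast_le.2 hiK
      have hi0' : (0 : ℝ) < i := Nat.cast_pos.2 hi0
      have hsq : (i ^ 2 : ℝ) ≤ K ^ 2 := by gcongr
      refine ⟨?_, ?_, ?_⟩
      · push_cast
        linarith [pow_pos hi0' 2]
      · push_cast
        linarith
      · rw [← sq_mul_linearForm_squareCoeff hi0 (hiK.trans (Nat.le_self_pow two_ne_zero K))]
        exact (isSumTwoSquares_of_chiDivisorSum_ne_zero hr).sq_mul hi0
  rw [hcard] at hcount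
  rw [representedCount, le_sub_iff_add_le']
  exact_mod_cast hcount

lemma eventually_mul_rpow_mul_log_le_div_log (C : ℝ) {θ : ℝ} (hθ : θ < 1) :
    ∀ᶠ u : ℝ in Filter.atTop, C * (u ^ θ * Real.log u) ≤ u / Real.log u := by
  have hlittle := (isLittleO_log_rpow_atTop (by linarith : 0 < (1 - θ) / 2)).bound
    (c := 1 / (|C| + 1)) (by positivity)
  filter_upwards [hlittle, Filter.eventually_gt_atTop 1] with u hu hu1
  have hlog : 0 < Real.log u := Real.log_pos hu1
  set w := u ^ ((1 - θ) / 2) with hw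
  have hw0 : 0 ≤ w := by positivity
  have hsplit : w * w * u ^ θ = u := by
    rw [hw, ← Real.rpow_add (by linarith), ← Real.rpow_add (by linarith)]
    ring_nf
    exact Real.rpow_one u
  rw [Real.norm_of_nonneg hlog.le, Real.norm_of_nonneg hw0, div_mul_eq_mul_div, one_mul,
    le_div_iff₀ (by positivity)] at hu
  have hle : Real.log u ≤ w := by nlinarith [mul_nonneg hlog.le (abs_nonneg C)]
  have hCle : C * Real.log u ≤ w := by nlinarith [mul_le_mul_of_nonneg_left (le_abs_self C) hlog.le]
  rw [le_div_iff₀ hlog]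
  calc C * (u ^ θ * Real.log u) * Real.log u = C * Real.log u * Real.log u * u ^ θ := by ring
    _ ≤ w * w * u ^ θ := by gcongr
    _ = u := hsplit

lemma mul_rpow_le_div_typicalWeightBound {c y : ℝ} {K : ℕ} (hc : 0 ≤ c) (hK : 1 ≤ K)
    (hy0 : 0 ≤ y) (hy : √y ≤ K + 1) :
    c / (40 * 2 ^ 92) * y ^ (1 / 10 : ℝ) ≤ 5 / 100 * c * K / typicalWeightBound K := by
  have hK1 : (1 : ℝ) ≤ K := by exact_mod_cast hK
  have hroot : y ^ (1 / 10 : ℝ) ≤ 2 * (K : ℝ) ^ (1 / 5 : ℝ) := by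
    calc y ^ (1 / 10 : ℝ) = √y ^ (1 / 5 : ℝ) := by
          rw [Real.sqrt_eq_rpow, ← Real.rpow_mul hy0]
          norm_num
      _ ≤ (2 * K) ^ (1 / 5 : ℝ) := by
          gcongr
          linarith
      _ = 2 ^ (1 / 5 : ℝ) * (K : ℝ) ^ (1 / 5 : ℝ) := Real.mul_rpow two_pos.le (by linarith)
      _ ≤ 2 ^ (1 : ℝ) * (K : ℝ) ^ (1 / 5 : ℝ) := by
          gcongr
          · exact one_le_two
          · norm_num
      _ = 2 * (K : ℝ) ^ (1 / 5 : ℝ) := by rw [Real.rpow_one]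
  have hsplit : (K : ℝ) ^ (1 / 5 : ℝ) * (K : ℝ) ^ (4 / 5 : ℝ) = K := by
    rw [← Real.rpow_add (by linarith)]
    norm_num
  rw [le_div_iff₀ (typicalWeightBound_pos K)]
  calc c / (40 * 2 ^ 92) * y ^ (1 / 10 : ℝ) * typicalWeightBound K
      ≤ c / (40 * 2 ^ 92) * (2 * (K : ℝ) ^ (1 / 5 : ℝ)) * (2 ^ 92 * (K : ℝ) ^ (4 / 5 : ℝ)) := by
        gcongr
        · exact (typicalWeightBound_pos K).le
        · exact typicalWeightBound_le hK
    _ = 5 / 100 * c * ((K : ℝ) ^ (1 / 5 : ℝ) * (K : ℝ) ^ (4 / 5 : ℝ)) := by ring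
    _ = 5 / 100 * c * K := by rw [hsplit]

lemma natCast_floor_sqrt_sq_le {y : ℝ} (hy : 0 ≤ y) : (⌊√y⌋₊ : ℝ) ^ 2 ≤ y :=
  (pow_le_pow_left₀ (Nat.cast_nonneg _) (Nat.floor_le (Real.sqrt_nonneg y)) 2).trans_eq
    (Real.sq_sqrt hy)

lemma isAdmissible_floor_sqrt {u l y b : ℝ} (hl : 0 ≤ l) (hlog : 1 ≤ Real.log u)
    (hu : 3 * (10 ^ 11 * (1 + l)) * (b * Real.log u) ≤ u / Real.log u) (hy : 16 ≤ y)
    (hyb : y ≤ b) :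
    IsAdmissible u l ⌊√y⌋₊ ⌈2 * Real.log u⌉₊ ∧
      10 ^ 11 * (1 + l) * ((⌊√y⌋₊ : ℝ) ^ 2 * ⌈2 * Real.log u⌉₊) ≤ u / Real.log u := by
  have hceil : (⌈2 * Real.log u⌉₊ : ℝ) ≤ 3 * Real.log u := by
    linarith [Nat.ceil_lt_add_one (by linarith : 0 ≤ 2 * Real.log u)]
  have hfloor : (⌊√y⌋₊ : ℝ) ^ 2 ≤ b := (natCast_floor_sqrt_sq_le (by linarith)).trans hyb
  have hmain : 10 ^ 11 * (1 + l) * ((⌊√y⌋₊ : ℝ) ^ 2 * ⌈2 * Real.log u⌉₊) ≤ u / Real.log u := by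
    calc _ ≤ 10 ^ 11 * (1 + l) * (b * (3 * Real.log u)) := by gcongr; linarith
      _ ≤ u / Real.log u := by linarith
  have hu0 : 0 < u := by
    have hdiv : 0 < u / Real.log u := hu.trans_lt' (by
      have : 0 < b := by linarith
      positivity)
    exact (div_pos_iff_of_pos_right (by linarith)).1 hdiv
  refine ⟨⟨?_, ?_, hl, ?_, hmain.trans (div_le_self hu0.le hlog)⟩, hmain⟩
  · exact Nat.le_floor (Real.le_sqrt_of_sq_le (by push_cast; linarith))
  · exact Nat.one_le_ceil_iff.2 (by linarith)
  · calc u = Real.exp (Real.log u) := (Real.exp_log hu0).symm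
      _ ≤ Real.exp (⌈2 * Real.log u⌉₊ * Real.log 2) := by
          rw [Real.exp_le_exp]
          nlinarith [Real.log_two_gt_d9, Nat.le_ceil (2 * Real.log u)]
      _ = 2 ^ ⌈2 * Real.log u⌉₊ := by rw [Real.exp_nat_mul, Real.exp_log two_pos]

theorem IsAdmissible.exp_le_ncard {u l y : ℝ} {m : ℕ} (h : IsAdmissible u l ⌊√y⌋₊ m)
    (hl : ∀ z, Real.exp (-l) ≤ roughMean z) (hy : 0 ≤ y) :
    Real.exp (u - 10 ^ 11 * (1 + l) * ((⌊√y⌋₊ : ℝ) ^ 2 * m)) ≤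
      ({x : ℕ | Real.exp u ≤ x ∧ x ≤ 2 * Real.exp u ∧
        Real.exp (-l) / (40 * 2 ^ 92) * y ^ (1 / 10 : ℝ) ≤
          (Scount (x + y) : ℝ) - Scount x}).ncard := by
  obtain ⟨T₁, T₂, hmem, hcard⟩ := h.exists_exp_le_card_filter hl
  refine hcard.trans (Nat.cast_le.2 ?_)
  rw [← card_image_of_injective _ (mul_right_injective₀ (squareModulus_pos (⌊√y⌋₊ ^ 2)).ne'),
    ← Set.ncard_coe_finset]
  refine Set.ncard_le_ncard ?_ ((finite_setOf_natCast_le_and (2 * Real.exp u) fun _ ↦ True).subset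
    fun _ hx ↦ ⟨hx.2.1, trivial⟩)
  rw [coe_image, Set.image_subset_iff]
  intro t ht
  obtain ⟨ht, hcount⟩ := mem_filter.1 ht
  have hbound := mul_rpow_le_div_typicalWeightBound (Real.exp_nonneg (-l))
    (by linarith [h.four_le]) hy (Nat.lt_floor_add_one √y).le
  have hScount := (hbound.trans hcount).trans
    (representedCount_le_Scount_sub (natCast_floor_sqrt_sq_le hy) t)
  simpa only [Set.mem_preimage, Set.mem_ofPred_eq, Nat.cast_mul] using
    ⟨(hmem t ht).1, (hmem t ht).2, hScount⟩

end Counting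

theorem sums_of_two_squares_in_short_intervals_general :
    ∃ c : ℝ, 0 < c ∧ ∃ c0 : ℝ, 0 < c0 ∧ ∀ θ : ℝ, θ < 1 → ∃ X0 : ℝ, ∀ X : ℝ, X0 ≤ X →
      ∀ y : ℝ, c0 ≤ y → y ≤ Real.log X ^ θ →
        X ^ (1 - 1 / Real.log (Real.log X)) ≤
          (({x : ℕ | X ≤ (x : ℝ) ∧ (x : ℝ) ≤ 2 * X ∧
            c * y ^ ((1 : ℝ) / 10) ≤ (Scount ((x : ℝ) + y) : ℝ) - (Scount (x : ℝ) : ℝ)}).ncard :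
              ℝ) := by
  obtain ⟨l, hl0, hl⟩ := exists_exp_neg_le_roughMean
  refine ⟨Real.exp (-l) / (40 * 2 ^ 92), by positivity, 16, by norm_num, fun θ hθ ↦ ?_⟩
  have hgrowth := Real.tendsto_log_atTop.eventually
    (eventually_mul_rpow_mul_log_le_div_log (3 * (10 ^ 11 * (1 + l))) hθ)
  have hloglog := (Real.tendsto_log_atTop.comp Real.tendsto_log_atTop).eventually_ge_atTop 1
  obtain ⟨X0, hX0⟩ := Filter.eventually_atTop.1
    ((hgrowth.and hloglog).and (Filter.eventually_gt_atTop 0))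
  refine ⟨X0, fun X hX y hy hyX ↦ ?_⟩
  obtain ⟨⟨hC, hlog⟩, hXpos⟩ := hX0 X hX
  obtain ⟨hadm, hloss⟩ := isAdmissible_floor_sqrt hl0 hlog hC hy hyX
  have hcount := hadm.exp_le_ncard hl (by linarith)
  rw [Real.exp_log hXpos] at hcount
  refine hcount.trans' ?_
  rw [Real.rpow_def_of_pos hXpos, Real.exp_le_exp, mul_sub, mul_one, mul_one_div]
  linarith

theorem sums_of_two_squares_in_short_intervals :
    ∃ c : ℝ, 0 < c ∧ ∃ c0 : ℝ, 0 < c0 ∧ ∃ X0 : ℝ, ∀ X : ℝ, X0 ≤ X →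
      ∀ y : ℝ, c0 ≤ y → y ≤ Real.log X ^ ((5 : ℝ) / 9) →
        X ^ (1 - 1 / Real.log (Real.log X)) ≤
          (({x : ℕ | X ≤ (x : ℝ) ∧ (x : ℝ) ≤ 2 * X ∧
            c * y ^ ((1 : ℝ) / 10) ≤ (Scount ((x : ℝ) + y) : ℝ) - (Scount (x : ℝ) : ℝ)}).ncard : ℝ) := by
  obtain ⟨c, hc, c0, hc0, h⟩ := sums_of_two_squares_in_short_intervals_general
  exact ⟨c, hc, c0, hc0, h (5 / 9) (by norm_num)⟩
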